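/- arXiv:1608.02009 — 2 statements merged into one kernel-verified Lean document; each statement's English description precedes it below -/
import Mathlib

section
/- Let n ≥ 2 and α₀ ∈ (0,1). There exist an unbounded set E ⊂ ℤⁿ with dim_LG E = n − 2α₀ but dim_L E = 0, and a homeomorphism f : ℝⁿ → ℝⁿ which is Lipschitz, η-quasisymmetric for some homeomorphism η : [0,∞) → [0,∞), differentiable almost everywhere with Jacobian J_f = |det Df| satisfying the change-of-variables formula ∫ g(f(x)) J_f(x) dx = ∫ g(y) dy for every nonnegative measurable g, and with J_f ∈ A_1(ℝⁿ; closure of E), such that for every α ∈ (α₀, 1) the composition operator u ↦ u∘f is unbounded on Q_α(ℝⁿ): for every constant C > 0 there exists u ∈ Q_α(ℝⁿ) with ‖u∘f‖_{Q_α} > C ‖u‖_{Q_α} and 0 < ‖u‖_{Q_α} < ∞. -/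
/-!
The set `E` is a discrete self-similar set of growth exponent `s = n - 2 α₀`: the points of `ℤⁿ`
whose coordinates have binary digits supported on a set of positions of density `s / n`
(`latticeSet`). It is covered by a constant times `(max R 1 / max r 1) ^ s` cubes of edge `r` inside
a ball of radius `R`, and this count is attained at `r ≈ 1`, `R → ∞` (`latticeSet_regular`). Hence
`dimGlob E = s`; at scales `R ≤ 1` only boundedly many points are seen, so `dimLoc E = 0`.

The map `f` is `stretch E`, which is `e + 4 |x - e| (x - e)` on each ball `B(e, 1/4)`, `e ∈ E`, and
the identity elsewhere. The distance `|f x - f y|` is comparable to `|x - y|` times the size of the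
local stretching factor (`stretch_bounds`), which gives the Lipschitz and quasisymmetry estimates.
The Jacobian is `2 (4 |x - e|)ⁿ` on `B(e, 1/4)` and `1` elsewhere; it is comparable to a constant on
balls staying away from `E`, which is the local `A₁` condition.

For unboundedness take `F ⊆ E ∩ B(0, R)` with about `R ^ s` points and let `u` be the sum of tents of
radius `ε` centred at `F`. On a ball `B(x₀, r)` the energy of `u` is at most a constant times
`ε ^ (-2α)` times the volume of the part of the support of `u` in the ball (`energy_le_of_support`),
and summing over the tents shows `‖u‖² ≲ max(1, R ^ (2(α - α₀)) ε ^ (n - 2α))` (`Qnorm_tent_le`).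
Choosing `ε` so that the second term equals `1` makes the norms of `u` bounded. The function
`u ∘ f` consists of bumps of radius `δ = √ε / 2`, and on `B(0, 2R)` it has normalised energy at least
a constant times `R ^ (2α - n) R ^ s δ ^ (n - 2α)`, a constant times `R ^ (α - α₀)`
(`le_Qnorm_of_osc`), which tends to infinity with `R`.
-/

open MeasureTheory Metric Filter Set ENNReal NNReal

noncomputable section

/-- Points of `ℝⁿ`. -/
abbrev Pt (n : ℕ) := EuclideanSpace ℝ (Fin n)

/-- The axis-parallel closed cube with lower corner `c` and edge length `r`. -/
def closedCube {n : ℕ} (c : Pt n) (r : ℝ) : Set (Pt n) :=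
  {x | ∀ i, c i ≤ x i ∧ x i ≤ c i + r}

/-- `Ncov r E`: the minimal number of axis-parallel closed cubes of edge length `r`
needed to cover `E` (junk value `0` if no finite cover exists). -/
def Ncov {n : ℕ} (r : ℝ) (E : Set (Pt n)) : ℕ :=
  sInf {m : ℕ | ∃ s : Finset (Pt n), s.card = m ∧ E ⊆ ⋃ c ∈ s, closedCube c r}

/-- Upper Minkowski dimension (intended for bounded sets). -/
def dimM {n : ℕ} (F : Set (Pt n)) : ℝ :=
  limsup (fun r : ℝ => Real.log (Ncov r F) / Real.log (1 / r)) (nhdsWithin 0 (Ioi 0))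

/-- The set of ratios `log N_cov(r, E ∩ B) / log (r_B / r)` over balls `B = B(x, r_B)`
with `N * r ≤ r_B ≤ R`. -/
def locRatios {n : ℕ} (E : Set (Pt n)) (N r R : ℝ) : Set ℝ :=
  {d | ∃ (x : Pt n) (rB : ℝ), 0 < rB ∧ N * r ≤ rB ∧ rB ≤ R ∧
        d = Real.log (Ncov r (E ∩ ball x rB)) / Real.log (rB / r)}

/-- The local self-similar Minkowski dimension. -/
def dimLoc {n : ℕ} (E : Set (Pt n)) : ℝ :=
  liminf (fun N : ℝ =>
    limsup (fun r : ℝ => sSup (locRatios E N r 1)) (nhdsWithin 0 (Ioi 0))) atTop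

/-- The global self-similar Minkowski dimension. -/
def dimGlob {n : ℕ} (E : Set (Pt n)) : ℝ :=
  liminf (fun N : ℝ =>
    sSup {d : ℝ | ∃ r : ℝ, 0 < r ∧ ∃ (x : Pt n) (rB : ℝ), 0 < rB ∧ N * r ≤ rB ∧
      d = Real.log (Ncov r (E ∩ ball x rB)) / Real.log (rB / r)}) atTop

/-- The `Q_α`-energy `Φ_α(u, B(x₀,r)) = |B|^{2α/n-1} ∬_{B×B} |u(x)-u(y)|²/|x-y|^{n+2α}`. -/
def Phi {n : ℕ} (α : ℝ) (u : Pt n → ℝ) (x₀ : Pt n) (r : ℝ) : ℝ≥0∞ :=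
  (volume (ball x₀ r)) ^ (2 * α / (n : ℝ) - 1) *
    ∫⁻ x in ball x₀ r, ∫⁻ y in ball x₀ r,
      ENNReal.ofReal (|u x - u y| ^ 2 / ‖x - y‖ ^ ((n : ℝ) + 2 * α))

/-- The `Q_α`-norm of `u`. -/
def Qnorm {n : ℕ} (α : ℝ) (u : Pt n → ℝ) : ℝ≥0∞ :=
  ⨆ (x₀ : Pt n) (r : ℝ) (_ : 0 < r),
    (ENNReal.ofReal (r ^ (2 * α - (n : ℝ))) *
      ∫⁻ x in ball x₀ r, ∫⁻ y in ball x₀ r,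
        ENNReal.ofReal (|u x - u y| ^ 2 / ‖x - y‖ ^ ((n : ℝ) + 2 * α))) ^ (1/2 : ℝ)

/-- Membership in `Q_α(ℝⁿ)`: `u ∈ L²_loc` and the `Q_α`-norm is finite. -/
def MemQ {n : ℕ} (α : ℝ) (u : Pt n → ℝ) : Prop :=
  LocallyIntegrable (fun x => |u x| ^ 2) volume ∧ Qnorm α u < ⊤

/-- `Ψ_{α,q}(u, B(x₀,r))`. -/
def Psi {n : ℕ} (α q : ℝ) (u : Pt n → ℝ) (x₀ : Pt n) (r : ℝ) : ℝ≥0∞ :=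
  ∑' k : ℕ, ENNReal.ofReal ((2:ℝ) ^ (2 * (k:ℝ) * α)) *
    ((volume (ball x₀ r))⁻¹ * ∫⁻ x in ball x₀ r,
      ⨅ c : ℝ, ((volume (ball x ((2:ℝ) ^ (-(k:ℝ)) * r)))⁻¹ *
        ∫⁻ z in ball x ((2:ℝ) ^ (-(k:ℝ)) * r), ENNReal.ofReal (|u z - c| ^ q)) ^ (2 / q))

/-- The quantity `inf_c ( ⨍_{B(x,ρ)} |u - c|^σ )^{1/σ}`. -/
def oscAvg {n : ℕ} (σ : ℝ) (u : Pt n → ℝ) (x : Pt n) (ρ : ℝ) : ℝ≥0∞ :=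
  ⨅ c : ℝ, ((volume (ball x ρ))⁻¹ *
    ∫⁻ w in ball x ρ, ENNReal.ofReal (|u w - c| ^ σ)) ^ (1/σ)

/-- `f` is `η`-quasisymmetric, where the homeomorphism `η` of `[0,∞)` is encoded as an
order isomorphism of `ℝ≥0`. -/
def IsQS {n : ℕ} (f : Pt n → Pt n) (η : ℝ≥0 ≃o ℝ≥0) : Prop :=
  ∀ x a b : Pt n, x ≠ b →
    nndist (f x) (f a) ≤ η (nndist x a / nndist x b) * nndist (f x) (f b)

/-- The local Muckenhoupt class `A₁(ℝⁿ; S)`: the `A₁` condition holds on every ball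
`B(x₀,r)` with `2r < dist(x₀, S)`. -/
def MemA1 {n : ℕ} (w : Pt n → ℝ) (S : Set (Pt n)) : Prop :=
  ∃ C > 0, ∀ (x₀ : Pt n) (r : ℝ), 0 < r →
    ENNReal.ofReal (2 * r) < EMetric.infEdist x₀ S →
    ⨍ x in ball x₀ r, w x ∂volume ≤ C * essInf w (volume.restrict (ball x₀ r))

/-- `J` is the a.e. Jacobian of `f` (`J = |det Df|` a.e.) and the change-of-variables
formula holds for all nonnegative measurable integrands. -/
def JacobianCOV {n : ℕ} (f : Pt n → Pt n) (J : Pt n → ℝ) : Prop :=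
  (∀ᵐ x ∂(volume : Measure (Pt n)), ∃ D : Pt n →L[ℝ] Pt n,
      HasFDerivAt f D x ∧ J x = |D.det|) ∧
  ∀ g : Pt n → ℝ≥0∞, Measurable g →
    ∫⁻ x, g (f x) * ENNReal.ofReal (J x) = ∫⁻ y, g y

/-- The hyperplane `ℝ^{n-1} × {0}` (the last coordinate vanishes). -/
def Hset (n : ℕ) : Set (Pt n) := {x | ∀ i : Fin n, (i : ℕ) = n - 1 → x i = 0}

/-- The open upper half-space (last coordinate positive). -/
def upperHalf (n : ℕ) : Set (Pt n) := {x | ∀ i : Fin n, (i : ℕ) = n - 1 → 0 < x i}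

/-- The open lower half-space (last coordinate negative). -/
def lowerHalf (n : ℕ) : Set (Pt n) := {x | ∀ i : Fin n, (i : ℕ) = n - 1 → x i < 0}

/-- The hyperbolic length `∫₀¹ |γ'(t)|/dist(γ(t),H) dt` of a curve `γ`. -/
def hypLen {n : ℕ} (H : Set (Pt n)) (γ : ℝ → Pt n) : ℝ :=
  ∫ t in (0:ℝ)..1, ‖deriv γ t‖ / Metric.infDist (γ t) H

/-- The hyperbolic-type distance associated with the set `H`: the infimum of hyperbolic
lengths of differentiable curves joining `z` and `w` in the complement of `H`. -/
def hypDist {n : ℕ} (H : Set (Pt n)) (z w : Pt n) : ℝ :=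
  sInf {L : ℝ | ∃ γ : ℝ → Pt n, γ 0 = z ∧ γ 1 = w ∧
    (∀ t ∈ Icc (0:ℝ) 1, DifferentiableAt ℝ γ t ∧ γ t ∉ H) ∧ L = hypLen H γ}

/-- `L_f(z,t) = sup { |f(z)-f(w)| : |z-w| ≤ t }`. -/
def Lf {n : ℕ} (f : Pt n → Pt n) (z : Pt n) (t : ℝ) : ℝ :=
  sSup ((fun w => dist (f z) (f w)) '' closedBall z t)

/-! ### Integers with binary digits in a set of prescribed density -/

/-- The positions `j` at which `⌊jσ⌋` jumps. For `σ ≤ 1` an interval of `m` positions contains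
`mσ` of them, up to an error of `1`. -/
def IsJump (σ : ℝ) (j : ℕ) : Prop := ⌊(j : ℝ) * σ⌋₊ < ⌊((j + 1 : ℕ) : ℝ) * σ⌋₊

/-- The integers whose binary digits are supported on the jump positions. -/
def digitSet (σ : ℝ) : Set ℕ := {m | ∀ j, m.testBit j = true → IsJump σ j}

open Classical in
/-- The numbers below `2 ^ k` whose `i`-th digit may be nonzero only if `a + i` is a jump. -/
def digitBlock (σ : ℝ) (a : ℕ) : ℕ → Finset ℕ
  | 0 => {0}
  | k + 1 => if IsJump σ (a + k) then
      digitBlock σ a k ∪ (digitBlock σ a k).image (fun t => 2 ^ k + t)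
    else digitBlock σ a k

section digits

variable {σ : ℝ}

lemma floor_succ_le (h1 : σ ≤ 1) (h0 : 0 ≤ σ) (j : ℕ) :
    ⌊((j + 1 : ℕ) : ℝ) * σ⌋₊ ≤ ⌊(j : ℝ) * σ⌋₊ + 1 := by
  have h : ((j + 1 : ℕ) : ℝ) * σ ≤ (j : ℝ) * σ + 1 := by push_cast; linarith
  calc ⌊((j + 1 : ℕ) : ℝ) * σ⌋₊ ≤ ⌊(j : ℝ) * σ + 1⌋₊ := Nat.floor_le_floor h
    _ = _ := Nat.floor_add_one (by positivity)

lemma digitBlock_lt (a k : ℕ) : ∀ t ∈ digitBlock σ a k, t < 2 ^ k := by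
  induction k with
  | zero => simp [digitBlock]
  | succ k ih =>
    intro t ht
    rw [pow_succ]
    rw [digitBlock] at ht
    split_ifs at ht
    · rcases Finset.mem_union.1 ht with ht | ht
      · have := ih t ht; omega
      · obtain ⟨t', ht', rfl⟩ := Finset.mem_image.1 ht
        have := ih t' ht'; omega
    · have := ih t ht; omega

lemma card_digitBlock (h1 : σ ≤ 1) (h0 : 0 ≤ σ) (a k : ℕ) :
    (digitBlock σ a k).card = 2 ^ (⌊((a + k : ℕ) : ℝ) * σ⌋₊ - ⌊(a : ℝ) * σ⌋₊) := by
  induction k with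
  | zero => simp [digitBlock]
  | succ k ih =>
    have hmono : ⌊(a : ℝ) * σ⌋₊ ≤ ⌊((a + k : ℕ) : ℝ) * σ⌋₊ := by
      refine Nat.floor_le_floor (mul_le_mul_of_nonneg_right ?_ h0)
      push_cast; linarith [Nat.cast_nonneg (α := ℝ) k]
    have hstep := floor_succ_le h1 h0 (a + k)
    have hstep' : ⌊((a + k : ℕ) : ℝ) * σ⌋₊ ≤ ⌊((a + k + 1 : ℕ) : ℝ) * σ⌋₊ := by
      refine Nat.floor_le_floor (mul_le_mul_of_nonneg_right ?_ h0)
      push_cast; linarith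
    rw [← add_assoc, digitBlock]
    split_ifs with hj
    · unfold IsJump at hj
      have hd : Disjoint (digitBlock σ a k) ((digitBlock σ a k).image (fun t => 2 ^ k + t)) := by
        rw [Finset.disjoint_left]
        intro t ht ht'
        obtain ⟨t', _, rfl⟩ := Finset.mem_image.1 ht'
        have := digitBlock_lt a k _ ht
        omega
      rw [Finset.card_union_of_disjoint hd,
        Finset.card_image_of_injective _ (add_right_injective _), ih]
      have : ⌊((a + k + 1 : ℕ) : ℝ) * σ⌋₊ - ⌊(a : ℝ) * σ⌋₊ =
          ⌊((a + k : ℕ) : ℝ) * σ⌋₊ - ⌊(a : ℝ) * σ⌋₊ + 1 := by omega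
      rw [this, pow_succ]; ring
    · unfold IsJump at hj
      rw [ih]; congr 1; omega

lemma mod_mem_digitBlock {m : ℕ} (hm : m ∈ digitSet σ) (a k : ℕ) :
    m / 2 ^ a % 2 ^ k ∈ digitBlock σ a k := by
  induction k with
  | zero => simp [digitBlock, Nat.mod_one]
  | succ k ih =>
    have hsplit : m / 2 ^ a % 2 ^ (k + 1) =
        2 ^ k * (m.testBit (k + a)).toNat + m / 2 ^ a % 2 ^ k := by
      rw [Nat.mod_pow_succ, add_comm, ← Nat.toNat_testBit, Nat.testBit_div_two_pow]
    rw [hsplit, digitBlock]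
    cases hb : m.testBit (k + a) with
    | false =>
      simp only [Bool.toNat_false, mul_zero, zero_add]
      split_ifs
      · exact Finset.mem_union_left _ ih
      · exact ih
    | true =>
      have hj : IsJump σ (a + k) := by rw [add_comm]; exact hm _ hb
      rw [if_pos hj]
      refine Finset.mem_union_right _ (Finset.mem_image.2 ⟨_, ih, ?_⟩)
      simp

lemma digitBlock_subset (k : ℕ) : ∀ t ∈ digitBlock σ 0 k, t ∈ digitSet σ := by
  induction k with
  | zero =>
    intro t ht j hj
    simp only [digitBlock, Finset.mem_singleton] at ht
    simp [ht] at hj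
  | succ k ih =>
    intro t ht
    rw [digitBlock] at ht
    split_ifs at ht with hJ
    · rcases Finset.mem_union.1 ht with ht | ht
      · exact ih t ht
      · obtain ⟨t', ht', rfl⟩ := Finset.mem_image.1 ht
        have hlt := digitBlock_lt 0 k t' ht'
        intro j hj
        rcases lt_trichotomy j k with h | h | h
        · rw [Nat.testBit_two_pow_add_gt h] at hj
          exact ih t' ht' j hj
        · subst h; simpa using hJ
        · have h2 : 2 ^ k + t' < 2 ^ j :=
            lt_of_lt_of_le (by rw [pow_succ]; omega) (Nat.pow_le_pow_right two_pos h)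
          rw [Nat.testBit_lt_two_pow h2] at hj
          exact absurd hj (by simp)
    · exact ih t ht

lemma card_digitBlock_le (h1 : σ ≤ 1) (h0 : 0 ≤ σ) (a k : ℕ) :
    ((digitBlock σ a k).card : ℝ) ≤ 2 * ((2 : ℝ) ^ k) ^ σ := by
  have h : ((⌊((a + k : ℕ) : ℝ) * σ⌋₊ - ⌊(a : ℝ) * σ⌋₊ : ℕ) : ℝ) ≤ k * σ + 1 := by
    have h2 : ⌊((a + k : ℕ) : ℝ) * σ⌋₊ ≤ ((a + k : ℕ) : ℝ) * σ := Nat.floor_le (by positivity)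
    have h3 : (a : ℝ) * σ < ⌊(a : ℝ) * σ⌋₊ + 1 := Nat.lt_floor_add_one _
    rcases le_total ⌊(a : ℝ) * σ⌋₊ ⌊((a + k : ℕ) : ℝ) * σ⌋₊ with h | h
    · rw [Nat.cast_sub h]; push_cast at h2 ⊢; linarith
    · rw [Nat.sub_eq_zero_of_le h]; push_cast; positivity
  rw [card_digitBlock h1 h0]
  push_cast
  calc (2 : ℝ) ^ (⌊((a : ℝ) + k) * σ⌋₊ - ⌊(a : ℝ) * σ⌋₊)
      = (2 : ℝ) ^ ((⌊((a + k : ℕ) : ℝ) * σ⌋₊ - ⌊(a : ℝ) * σ⌋₊ : ℕ) : ℝ) := by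
        rw [Real.rpow_natCast]; push_cast; rfl
    _ ≤ (2 : ℝ) ^ (k * σ + 1) := Real.rpow_le_rpow_of_exponent_le one_le_two h
    _ = 2 * ((2 : ℝ) ^ k) ^ σ := by
        rw [Real.rpow_add two_pos, Real.rpow_mul two_pos.le, Real.rpow_natCast, Real.rpow_one]
        ring

lemma le_card_digitBlock (h1 : σ ≤ 1) (h0 : 0 ≤ σ) (k : ℕ) :
    2⁻¹ * ((2 : ℝ) ^ k) ^ σ ≤ ((digitBlock σ 0 k).card : ℝ) := by
  have h3 : (k : ℝ) * σ - 1 ≤ ((⌊(k : ℝ) * σ⌋₊ : ℕ) : ℝ) := (Nat.sub_one_lt_floor _).le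
  rw [card_digitBlock h1 h0]
  simp only [zero_add, Nat.cast_zero, zero_mul, Nat.floor_zero, Nat.sub_zero]
  push_cast
  calc 2⁻¹ * ((2 : ℝ) ^ k) ^ σ = (2 : ℝ) ^ (k * σ - 1) := by
        rw [Real.rpow_sub two_pos, Real.rpow_mul two_pos.le, Real.rpow_natCast, Real.rpow_one]
        ring
    _ ≤ (2 : ℝ) ^ ((⌊(k : ℝ) * σ⌋₊ : ℕ) : ℝ) := Real.rpow_le_rpow_of_exponent_le one_le_two h3
    _ = _ := by rw [Real.rpow_natCast]

/-- One-dimensional covering estimate. With `2 ^ a ≈ max r 1` and `2 ^ b ≈ max R 1`, an interval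
of length `2R` meets few dyadic blocks of length `2 ^ b`, each of which contains at most
`2 ^ (σ (b - a) + 1)` blocks of length `2 ^ a` meeting the digit set. -/
lemma exists_cover_one (h1 : σ ≤ 1) (h0 : 0 ≤ σ) (x R r : ℝ) (hr : 0 < r) (hrR : r ≤ R) :
    ∃ S : Finset ℝ, (S.card : ℝ) ≤ 32 * (max R 1 / max r 1) ^ σ ∧
      ∀ m ∈ digitSet σ, x - R < m → (m : ℝ) < x + R → ∃ c ∈ S, c ≤ m ∧ (m : ℝ) ≤ c + r := by
  obtain ⟨a, ha1, ha2⟩ := exists_nat_pow_near (le_max_right r 1) (one_lt_two : (1 : ℝ) < 2)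
  obtain ⟨b, hb1, hb2⟩ := exists_nat_pow_near
    (le_max_right (2 * R) 1) (one_lt_two : (1 : ℝ) < 2)
  have hR : 0 < R := hr.trans_le hrR
  have hab : a < b + 1 := by
    have : (2 : ℝ) ^ a < 2 ^ (b + 1) :=
      (ha1.trans (max_le_max (by linarith) le_rfl)).trans_lt hb2
    exact (pow_lt_pow_iff_right₀ (one_lt_two : (1 : ℝ) < 2)).1 this
  obtain ⟨k, hk⟩ : ∃ k, b + 1 = a + k := ⟨b + 1 - a, by omega⟩
  set P : ℝ := 2 ^ (b + 1) with hP
  have hPpos : 0 < P := by positivity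
  have hLP : 2 * R < P := (le_max_left _ _).trans_lt hb2
  set q₀ : ℕ := ⌊(x - R) / P⌋₊ with hq₀
  refine ⟨(({q₀, q₀ + 1} : Finset ℕ) ×ˢ digitBlock σ a k).image
    (fun p => (((2 ^ k * p.1 + p.2) * 2 ^ a : ℕ) : ℝ)), ?_, ?_⟩
  · have hc1 : ((({q₀, q₀ + 1} : Finset ℕ) ×ˢ digitBlock σ a k).image
        (fun p => (((2 ^ k * p.1 + p.2) * 2 ^ a : ℕ) : ℝ))).card ≤
          2 * (digitBlock σ a k).card := by
      refine Finset.card_image_le.trans ?_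
      rw [Finset.card_product]
      gcongr
      exact Finset.card_le_two
    have hc2 := card_digitBlock_le h1 h0 a k
    have hk2 : (2 : ℝ) ^ k ≤ 8 * (max R 1 / max r 1) := by
      have hmr : 0 < max r 1 := lt_max_of_lt_right one_pos
      rw [← mul_div_assoc, le_div_iff₀ hmr]
      have e1 : (2 : ℝ) ^ k * 2 ^ a = 2 * 2 ^ b := by
        rw [← pow_add, add_comm k a, ← hk, pow_succ]; ring
      have e2 : max (2 * R) 1 ≤ 2 * max R 1 :=
        max_le (by linarith [le_max_left R 1]) (by linarith [le_max_right R 1])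
      have e3 : max r 1 ≤ 2 * 2 ^ a := by rw [pow_succ] at ha2; linarith
      have e4 : (2 : ℝ) ^ k * max r 1 ≤ 2 ^ k * (2 * 2 ^ a) := by gcongr
      linarith
    have hq : 0 ≤ max R 1 / max r 1 := by positivity
    have h8 : (8 : ℝ) ^ σ ≤ 8 := by
      calc (8 : ℝ) ^ σ ≤ 8 ^ (1 : ℝ) := Real.rpow_le_rpow_of_exponent_le (by norm_num) h1
        _ = 8 := Real.rpow_one 8
    calc _ ≤ ((2 * (digitBlock σ a k).card : ℕ) : ℝ) := by exact_mod_cast hc1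
      _ ≤ 2 * (2 * ((2 : ℝ) ^ k) ^ σ) := by push_cast; linarith
      _ ≤ 2 * (2 * (8 * (max R 1 / max r 1)) ^ σ) := by gcongr
      _ = 4 * 8 ^ σ * (max R 1 / max r 1) ^ σ := by
          rw [Real.mul_rpow (by norm_num) hq]; ring
      _ ≤ 4 * 8 * (max R 1 / max r 1) ^ σ := by gcongr
      _ = _ := by ring
  · intro m hm hm1 hm2
    refine ⟨((m / 2 ^ a * 2 ^ a : ℕ) : ℝ), ?_, ?_, ?_⟩
    · refine Finset.mem_image.2 ⟨(m / 2 ^ (a + k), m / 2 ^ a % 2 ^ k),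
        Finset.mem_product.2 ⟨?_, mod_mem_digitBlock hm a k⟩, ?_⟩
      · have hmP : ((m : ℝ) / P) = (m : ℝ) / ((2 ^ (a + k) : ℕ) : ℝ) := by
          rw [hP, hk]; push_cast; rfl
        have hfl : m / 2 ^ (a + k) = ⌊(m : ℝ) / P⌋₊ := by
          rw [hmP, Nat.floor_div_eq_div]
        have g1 : q₀ ≤ m / 2 ^ (a + k) := by
          rw [hfl]; exact Nat.floor_le_floor (by gcongr)
        have g2 : m / 2 ^ (a + k) ≤ q₀ + 1 := by
          rw [hfl]
          have : (m : ℝ) / P < (x - R) / P + 1 := by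
            rw [div_add_one hPpos.ne', div_lt_div_iff_of_pos_right hPpos]
            linarith
          have hlt : (x - R) / P < q₀ + 1 := Nat.lt_floor_add_one _
          have : (m : ℝ) / P < ((q₀ + 2 : ℕ) : ℝ) := by push_cast; linarith
          have := (Nat.floor_lt (by positivity)).2 this
          omega
        simp only [Finset.mem_insert, Finset.mem_singleton]
        omega
      · congr 2
        rw [pow_add, ← Nat.div_div_eq_div_mul]
        exact Nat.div_add_mod _ _
    · exact_mod_cast Nat.div_mul_le_self m (2 ^ a)
    · have h3 : m < m / 2 ^ a * 2 ^ a + 2 ^ a := by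
        have := Nat.div_add_mod m (2 ^ a)
        have h4 := Nat.mod_lt m (Nat.two_pow_pos a)
        rw [mul_comm] at this
        omega
      have h4 : m + 1 ≤ m / 2 ^ a * 2 ^ a + 2 ^ a := h3
      have h5 : ((m : ℝ) + 1) ≤ ((m / 2 ^ a * 2 ^ a : ℕ) : ℝ) + 2 ^ a := by exact_mod_cast h4
      have h6 : (2 : ℝ) ^ a ≤ r + 1 := ha1.trans (max_le (by linarith) (by linarith))
      linarith

end digits

/-! ### The lattice set and its covering numbers -/

/-- The product set: all points of `ℤⁿ` whose coordinates lie in the digit set. -/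
def latticeSet (n : ℕ) (σ : ℝ) : Set (Pt n) := {x | ∀ i, ∃ m ∈ digitSet σ, x i = (m : ℝ)}

/-- `E` is a set of integer points that is large-scale regular of dimension `s`: it has
the covering bound `K (max R 1 / max r 1) ^ s` and enough points in balls about the origin. -/
structure IsRegularLattice {n : ℕ} (E : Set (Pt n)) (s K k : ℝ) : Prop where
  int : ∀ x ∈ E, ∀ i, ∃ m : ℤ, x i = (m : ℝ)
  cover : ∀ (x : Pt n) (R r : ℝ), 0 < r → r ≤ R → ∃ S : Finset (Pt n),
    (S.card : ℝ) ≤ K * (max R 1 / max r 1) ^ s ∧ E ∩ ball x R ⊆ ⋃ c ∈ S, closedCube c r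
  many : ∀ b : ℕ, ∃ F : Finset (Pt n), (F : Set (Pt n)) ⊆ E ∩ ball 0 ((n + 1) * 2 ^ b) ∧
    k * ((2 : ℝ) ^ b) ^ s ≤ F.card

lemma latticeSet_regular (n : ℕ) {σ : ℝ} (h1 : σ ≤ 1) (h0 : 0 ≤ σ) :
    IsRegularLattice (latticeSet n σ) (n * σ) (32 ^ n) (2⁻¹ ^ n) where
  int x hx i := by
    obtain ⟨m, -, hm⟩ := hx i
    exact ⟨m, by simpa using hm⟩
  cover x R r hr hrR := by
    choose S hS1 hS2 using fun i : Fin n => exists_cover_one h1 h0 (x i) R r hr hrR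
    have hq : 0 ≤ max R 1 / max r 1 := by positivity
    refine ⟨(Fintype.piFinset S).image (fun v => WithLp.toLp 2 v), ?_, ?_⟩
    · calc ((((Fintype.piFinset S).image (fun v => WithLp.toLp 2 v)).card : ℕ) : ℝ)
          ≤ ((Fintype.piFinset S).card : ℝ) := by exact_mod_cast Finset.card_image_le
        _ = ∏ i, ((S i).card : ℝ) := by rw [Fintype.card_piFinset]; push_cast; rfl
        _ ≤ ∏ _i : Fin n, 32 * (max R 1 / max r 1) ^ σ :=
            Finset.prod_le_prod (fun _ _ => by positivity) fun i _ => hS1 i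
        _ = (32 * (max R 1 / max r 1) ^ σ) ^ n := by simp
        _ = _ := by
            rw [mul_pow, mul_comm (n : ℝ) σ, Real.rpow_mul hq, Real.rpow_natCast]
    · rintro y ⟨hy, hyx⟩
      choose m hm hym using hy
      have hd : ∀ i, |y i - x i| < R := fun i => by
        have h := PiLp.norm_apply_le (y - x) i
        rw [← dist_eq_norm] at h
        exact lt_of_le_of_lt (by simpa [Real.norm_eq_abs] using h) (mem_ball.1 hyx)
      have hex : ∀ i, ∃ c ∈ S i, c ≤ y i ∧ y i ≤ c + r := fun i => by
        have := abs_lt.1 (hd i)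
        obtain ⟨c, hc, h2, h3⟩ := hS2 i (m i) (hm i) (by rw [← hym]; linarith)
          (by rw [← hym]; linarith)
        exact ⟨c, hc, by rwa [hym], by rwa [hym]⟩
      choose c hc hc2 using hex
      simp only [mem_iUnion]
      exact ⟨WithLp.toLp 2 c, Finset.mem_image.2 ⟨c, Fintype.mem_piFinset.2 hc, rfl⟩, hc2⟩
  many b := by
    have hinj : Function.Injective
        (fun v : Fin n → ℕ => (WithLp.toLp 2 (fun i => (v i : ℝ)) : Pt n)) := by
      intro v w h
      funext i
      have h2 : ((v i : ℕ) : ℝ) = (w i : ℝ) := congrArg (fun z : Pt n => z i) h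
      exact_mod_cast h2
    refine ⟨(Fintype.piFinset fun _ : Fin n => digitBlock σ 0 b).image
      (fun v => WithLp.toLp 2 (fun i => (v i : ℝ))), ?_, ?_⟩
    · intro y hy
      obtain ⟨v, hv, rfl⟩ := Finset.mem_image.1 (Finset.mem_coe.1 hy)
      have hv := Fintype.mem_piFinset.1 hv
      refine ⟨fun i => ⟨v i, digitBlock_subset b _ (hv i), rfl⟩, ?_⟩
      rw [mem_ball_zero_iff, EuclideanSpace.norm_eq]
      refine (Real.sqrt_lt' (by positivity)).2 ?_
      have : ∑ i : Fin n, ‖(v i : ℝ)‖ ^ 2 ≤ ∑ _i : Fin n, ((2 : ℝ) ^ b) ^ 2 := by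
        refine Finset.sum_le_sum fun i _ => ?_
        rw [Real.norm_natCast]
        have : (v i : ℝ) ≤ 2 ^ b := by exact_mod_cast (digitBlock_lt 0 b _ (hv i)).le
        gcongr
      refine lt_of_le_of_lt this ?_
      simp only [Finset.sum_const, Finset.card_univ, Fintype.card_fin, nsmul_eq_mul, mul_pow]
      gcongr
      nlinarith [Nat.cast_nonneg (α := ℝ) n]
    · rw [Finset.card_image_of_injective _ hinj, Fintype.card_piFinset]
      simp only [Finset.prod_const, Finset.card_univ, Fintype.card_fin]
      push_cast
      rw [mul_comm (n : ℝ) σ, Real.rpow_mul (by positivity), Real.rpow_natCast, ← mul_pow]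
      gcongr
      exact le_card_digitBlock h1 h0 b

/-! ### Dimensions of a regular lattice set -/

section dims

variable {n : ℕ} {E : Set (Pt n)} {s K k : ℝ}

lemma int_sep (hint : ∀ x ∈ E, ∀ i, ∃ m : ℤ, x i = (m : ℝ)) :
    E.Pairwise fun x y => 1 ≤ dist x y := by
  intro x hx y hy hxy
  obtain ⟨i, hi⟩ : ∃ i, x i ≠ y i := by
    by_contra! h
    exact hxy (PiLp.ext h)
  obtain ⟨a, ha⟩ := hint x hx i
  obtain ⟨b, hb⟩ := hint y hy i
  have hab : a ≠ b := by rintro rfl; exact hi (ha.trans hb.symm)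
  have h1 : (1 : ℝ) ≤ |(a : ℝ) - b| := by
    have : (1 : ℤ) ≤ |a - b| := Int.one_le_abs (sub_ne_zero.2 hab)
    exact_mod_cast this
  have h2 := PiLp.norm_apply_le (x - y) i
  rw [dist_eq_norm]
  refine le_trans ?_ h2
  simpa [Real.norm_eq_abs, ha, hb] using h1

lemma int_countable (hint : ∀ x ∈ E, ∀ i, ∃ m : ℤ, x i = (m : ℝ)) : E.Countable := by
  refine (countable_range
    (fun v : Fin n → ℤ => (WithLp.toLp 2 (fun i => (v i : ℝ)) : Pt n))).mono ?_
  intro x hx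
  choose v hv using hint x hx
  exact ⟨v, PiLp.ext fun i => (hv i).symm⟩

/-- A cube of edge `1/2` holds at most one integer point. -/
lemma card_le_of_cover (hint : ∀ x ∈ E, ∀ i, ∃ m : ℤ, x i = (m : ℝ)) {F S : Finset (Pt n)}
    (hF : (F : Set (Pt n)) ⊆ E) (hS : (F : Set (Pt n)) ⊆ ⋃ c ∈ S, closedCube c (1 / 2)) :
    F.card ≤ S.card := by
  have hex : ∀ x ∈ F, ∃ c ∈ S, x ∈ closedCube c (1 / 2) := fun x hx => by
    simpa using hS (Finset.mem_coe.2 hx)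
  choose! c hc1 hc2 using hex
  refine Finset.card_le_card_of_injOn c hc1 fun x hx y hy hxy => ?_
  refine PiLp.ext fun i => ?_
  obtain ⟨a, ha⟩ := hint x (hF hx) i
  obtain ⟨b, hb⟩ := hint y (hF hy) i
  have h1 := hc2 x hx i
  have h2 := hc2 y hy i
  rw [hxy] at h1
  have h3 : (a : ℝ) < b + 1 := by linarith
  have h4 : (b : ℝ) < a + 1 := by linarith
  have h5 : a < b + 1 := by exact_mod_cast h3
  have h6 : b < a + 1 := by exact_mod_cast h4
  rw [ha, hb, show a = b by omega]

lemma card_le (hE : IsRegularLattice E s K k) {x : Pt n} {R : ℝ} (hR : 1 ≤ R)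
    {F : Finset (Pt n)} (hF : (F : Set (Pt n)) ⊆ E ∩ ball x R) : (F.card : ℝ) ≤ K * R ^ s := by
  obtain ⟨S, hS1, hS2⟩ := hE.cover x R (1 / 2) (by norm_num) (by linarith)
  rw [max_eq_left hR, max_eq_right (by norm_num), div_one] at hS1
  refine le_trans ?_ hS1
  exact_mod_cast card_le_of_cover hE.int (hF.trans inter_subset_left) (hF.trans hS2)

lemma Ncov_le (hE : IsRegularLattice E s K k) (x : Pt n) {R r : ℝ} (hr : 0 < r) (hrR : r ≤ R) :
    (Ncov r (E ∩ ball x R) : ℝ) ≤ K * (max R 1 / max r 1) ^ s := by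
  obtain ⟨S, hS1, hS2⟩ := hE.cover x R r hr hrR
  refine le_trans ?_ hS1
  have h : Ncov r (E ∩ ball x R) ≤ S.card := Nat.sInf_le ⟨S, rfl, hS2⟩
  exact_mod_cast h

lemma le_Ncov (hE : IsRegularLattice E s K k) (x : Pt n) {R : ℝ} (hR : 1 ≤ R)
    {F : Finset (Pt n)} (hF : (F : Set (Pt n)) ⊆ E ∩ ball x R) :
    F.card ≤ Ncov (1 / 2) (E ∩ ball x R) := by
  obtain ⟨S₀, -, hS₀⟩ := hE.cover x R (1 / 2) (by norm_num) (by linarith)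
  have hne : {m : ℕ | ∃ S : Finset (Pt n), S.card = m ∧
      E ∩ ball x R ⊆ ⋃ c ∈ S, closedCube c (1 / 2)}.Nonempty := ⟨_, S₀, rfl, hS₀⟩
  obtain ⟨S, hS, hS2⟩ := Nat.sInf_mem hne
  rw [Ncov, ← hS]
  exact card_le_of_cover hE.int (hF.trans inter_subset_left) (hF.trans hS2)

lemma log_Ncov_le (hE : IsRegularLattice E s K k) (hs : 0 ≤ s) (hK : 1 ≤ K) (x : Pt n)
    {R r : ℝ} (hr : 0 < r) (hrR : r ≤ R) :
    Real.log (Ncov r (E ∩ ball x R)) ≤ Real.log K + s * Real.log (max R 1 / max r 1) := by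
  have h1 : 1 ≤ max R 1 / max r 1 :=
    (one_le_div (lt_max_of_lt_right one_pos)).2 (max_le_max hrR le_rfl)
  have hp : 0 < max R 1 / max r 1 := one_pos.trans_le h1
  rw [← Real.log_rpow hp, ← Real.log_mul (by positivity) (by positivity)]
  rcases Nat.eq_zero_or_pos (Ncov r (E ∩ ball x R)) with h | h
  · rw [h]
    simp only [Nat.cast_zero, Real.log_zero]
    exact Real.log_nonneg (one_le_mul_of_one_le_of_one_le hK (Real.one_le_rpow h1 hs))
  · exact Real.log_le_log (by exact_mod_cast h) (Ncov_le hE x hr hrR)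

lemma dimGlob_eq (hE : IsRegularLattice E s K k) (hs : 0 ≤ s) (hK : 1 ≤ K) (hk : 0 < k) :
    dimGlob E = s := by
  set S : ℝ → Set ℝ := fun N => {d : ℝ | ∃ r : ℝ, 0 < r ∧ ∃ (x : Pt n) (rB : ℝ), 0 < rB ∧
    N * r ≤ rB ∧ d = Real.log (Ncov r (E ∩ ball x rB)) / Real.log (rB / r)} with hS
  have hup : ∀ N : ℝ, 1 < N → ∀ d ∈ S N, d ≤ s + Real.log K / Real.log N := by
    rintro N hN d ⟨r, hr, x, R, hR, hNR, rfl⟩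
    have hrR : r ≤ R := by nlinarith
    have hNq : N ≤ R / r := (le_div_iff₀ hr).2 hNR
    have hlN : 0 < Real.log N := Real.log_pos hN
    have hlq : Real.log N ≤ Real.log (R / r) := Real.log_le_log (by linarith) hNq
    have h1 := log_Ncov_le hE hs hK x hr hrR
    have h2 : max R 1 / max r 1 ≤ R / r := by
      rw [div_le_div_iff₀ (lt_max_of_lt_right one_pos) hr]
      rcases le_total R 1 with h | h
      · rw [max_eq_right h, max_eq_right (hrR.trans h)]; linarith
      · rw [max_eq_left h]; gcongr; exact le_max_left _ _
    have h3 : Real.log (max R 1 / max r 1) ≤ Real.log (R / r) :=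
      Real.log_le_log (by positivity) h2
    have hlK : 0 ≤ Real.log K := Real.log_nonneg hK
    have hlq0 : 0 < Real.log (R / r) := hlN.trans_le hlq
    calc Real.log (Ncov r (E ∩ ball x R)) / Real.log (R / r)
        ≤ (Real.log K + s * Real.log (R / r)) / Real.log (R / r) := by
          gcongr
          exact h1.trans (by gcongr)
      _ = Real.log K / Real.log (R / r) + s := by field_simp
      _ ≤ Real.log K / Real.log N + s := by gcongr
      _ = _ := add_comm _ _
  have hlow : ∀ N : ℝ, 1 < N → s ≤ sSup (S N) := by
    intro N hN
    have hl2 : 0 < Real.log 2 := Real.log_pos one_lt_two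
    -- the ratios for `r = 1/2` and the balls `B(0, (n + 1) 2 ^ b)` are at least `g b → s`
    set g : ℕ → ℝ := fun b => (Real.log k + s * (b * Real.log 2)) /
      (Real.log (2 * (n + 1)) + b * Real.log 2) with hg
    have hgs : Tendsto g atTop (nhds s) := by
      have e1 : Tendsto (fun b : ℕ => Real.log k / (b : ℝ)) atTop (nhds 0) :=
        tendsto_const_div_atTop_nhds_zero_nat _
      have e2 : Tendsto (fun b : ℕ => Real.log (2 * (n + 1)) / (b : ℝ)) atTop (nhds 0) :=
        tendsto_const_div_atTop_nhds_zero_nat _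
      have e3 := (e1.add_const (s * Real.log 2)).div (e2.add_const (Real.log 2))
        (by simpa using hl2.ne')
      have e4 : (0 + s * Real.log 2) / (0 + Real.log 2) = s := by field_simp; ring
      rw [e4] at e3
      refine e3.congr' ?_
      filter_upwards [eventually_gt_atTop 0] with b hb
      have hb' : (b : ℝ) ≠ 0 := by positivity
      have hp : 0 < Real.log (2 * (n + 1)) + b * Real.log 2 := by
        have : 0 ≤ Real.log (2 * ((n : ℝ) + 1)) :=
          Real.log_nonneg (by linarith [Nat.cast_nonneg (α := ℝ) n])
        positivity
      simp only [hg, Pi.div_apply]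
      rw [show Real.log k / (b : ℝ) + s * Real.log 2 =
          (Real.log k + s * (b * Real.log 2)) / b by field_simp,
        show Real.log (2 * (n + 1)) / (b : ℝ) + Real.log 2 =
          (Real.log (2 * (n + 1)) + b * Real.log 2) / b by field_simp,
        div_div_div_cancel_right₀ hb']
    refine le_of_tendsto hgs ?_
    have hbig : Tendsto (fun b : ℕ => (2 : ℝ) ^ b) atTop atTop :=
      tendsto_pow_atTop_atTop_of_one_lt one_lt_two
    filter_upwards [hbig.eventually_ge_atTop N] with b hb
    obtain ⟨F, hF1, hF2⟩ := hE.many b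
    have h2b : (1 : ℝ) ≤ 2 ^ b := one_le_pow₀ one_le_two
    have hn0 := Nat.cast_nonneg (α := ℝ) n
    have hR : (1 : ℝ) ≤ (n + 1) * 2 ^ b := by nlinarith
    have hcard := le_Ncov hE 0 hR hF1
    have hd : Real.log (Ncov (1 / 2) (E ∩ ball 0 (((n : ℝ) + 1) * 2 ^ b))) /
        Real.log (((n : ℝ) + 1) * 2 ^ b / (1 / 2)) ∈ S N :=
      ⟨1 / 2, by norm_num, 0, _, by linarith, by nlinarith, rfl⟩
    refine le_trans ?_ (le_csSup ⟨_, hup N hN⟩ hd)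
    have hden : Real.log (((n : ℝ) + 1) * 2 ^ b / (1 / 2)) =
        Real.log (2 * (n + 1)) + b * Real.log 2 := by
      rw [← Real.log_pow, ← Real.log_mul (by positivity) (by positivity)]
      congr 1; ring
    have hp : 0 ≤ Real.log (2 * (n + 1)) + b * Real.log 2 := by
      have : 0 ≤ Real.log (2 * ((n : ℝ) + 1)) := Real.log_nonneg (by linarith)
      positivity
    rw [hden]
    simp only [hg]
    gcongr
    have h5 : k * ((2 : ℝ) ^ b) ^ s ≤ Ncov (1 / 2) (E ∩ ball 0 (((n : ℝ) + 1) * 2 ^ b)) :=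
      hF2.trans (by exact_mod_cast hcard)
    calc Real.log k + s * (b * Real.log 2) = Real.log (k * ((2 : ℝ) ^ b) ^ s) := by
          rw [Real.log_mul hk.ne' (by positivity), Real.log_rpow (by positivity), Real.log_pow]
      _ ≤ _ := Real.log_le_log (by positivity) h5
  have hlim : Tendsto (fun N : ℝ => s + Real.log K / Real.log N) atTop (nhds s) := by
    simpa using (Real.tendsto_log_atTop.const_div_atTop (Real.log K)).const_add s
  have : Tendsto (fun N => sSup (S N)) atTop (nhds s) := by
    refine tendsto_of_tendsto_of_tendsto_of_le_of_le' tendsto_const_nhds hlim ?_ ?_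
    · filter_upwards [eventually_gt_atTop 1] with N hN using hlow N hN
    · filter_upwards [eventually_gt_atTop 1] with N hN
      refine csSup_le ?_ (hup N hN)
      exact ⟨_, 1, one_pos, 0, N, by linarith, by linarith, rfl⟩
  exact this.liminf_eq

/-- A ball of radius at most `1` contains boundedly many points of `E`, so all ratios are at
most `log K / log N`. -/
lemma dimLoc_eq (hE : IsRegularLattice E s K k) (hs : 0 ≤ s) (hK : 1 ≤ K) : dimLoc E = 0 := by
  have hlK : 0 ≤ Real.log K := Real.log_nonneg hK
  have hb : ∀ N : ℝ, 1 < N → ∀ r : ℝ, 0 < r → 0 ≤ sSup (locRatios E N r 1) ∧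
      sSup (locRatios E N r 1) ≤ Real.log K / Real.log N := by
    intro N hN r hr
    have hlN : 0 < Real.log N := Real.log_pos hN
    have key : ∀ d ∈ locRatios E N r 1, 0 ≤ d ∧ d ≤ Real.log K / Real.log N := by
      rintro d ⟨x, R, hR, hNR, hR1, rfl⟩
      have hrR : r ≤ R := by nlinarith
      have hNq : N ≤ R / r := (le_div_iff₀ hr).2 hNR
      have hlq : Real.log N ≤ Real.log (R / r) := Real.log_le_log (by linarith) hNq
      have h1 := log_Ncov_le hE hs hK x hr hrR
      rw [max_eq_right hR1, max_eq_right (hrR.trans hR1), div_one, Real.log_one, mul_zero,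
        add_zero] at h1
      refine ⟨div_nonneg (Real.log_natCast_nonneg _) (hlN.le.trans hlq), ?_⟩
      exact div_le_div₀ hlK h1 hlN hlq
    exact ⟨Real.sSup_nonneg fun d hd => (key d hd).1,
      Real.sSup_le (fun d hd => (key d hd).2) (by positivity)⟩
  have hlim : Tendsto (fun N : ℝ => Real.log K / Real.log N) atTop (nhds 0) :=
    Real.tendsto_log_atTop.const_div_atTop (Real.log K)
  have : Tendsto (fun N : ℝ => limsup (fun r : ℝ => sSup (locRatios E N r 1))
      (nhdsWithin 0 (Ioi 0))) atTop (nhds 0) := by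
    refine tendsto_of_tendsto_of_tendsto_of_le_of_le' tendsto_const_nhds hlim ?_ ?_
    all_goals
      filter_upwards [eventually_gt_atTop 1] with N hN
      have e1 : ∀ᶠ r in nhdsWithin (0 : ℝ) (Ioi 0), 0 ≤ sSup (locRatios E N r 1) := by
        filter_upwards [self_mem_nhdsWithin] with r hr using (hb N hN r hr).1
      have e2 : ∀ᶠ r in nhdsWithin (0 : ℝ) (Ioi 0),
          sSup (locRatios E N r 1) ≤ Real.log K / Real.log N := by
        filter_upwards [self_mem_nhdsWithin] with r hr using (hb N hN r hr).2
    · exact le_limsup_of_frequently_le e1.frequently ⟨_, eventually_map.2 e2⟩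
    · exact limsup_le_of_le (IsBoundedUnder.isCoboundedUnder_le ⟨0, eventually_map.2 e1⟩) e2
  exact this.liminf_eq

lemma regular_unbounded (hE : IsRegularLattice E s K k) (hs : 0 < s) (hk : 0 < k) :
    ¬ Bornology.IsBounded E := by
  intro hb
  obtain ⟨R, hR⟩ := hb.subset_ball 0
  have hlim : Tendsto (fun b : ℕ => k * ((2 : ℝ) ^ b) ^ s) atTop atTop :=
    ((_root_.tendsto_rpow_atTop hs).comp
      (tendsto_pow_atTop_atTop_of_one_lt one_lt_two)).const_mul_atTop hk
  obtain ⟨b, hb⟩ := (hlim.eventually_gt_atTop (K * (max R 1) ^ s)).exists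
  obtain ⟨F, hF1, hF2⟩ := hE.many b
  have := card_le hE (x := 0) (le_max_right R 1) (F := F) fun y hy =>
    ⟨(hF1 hy).1, ball_subset_ball (le_max_left _ _) (hR (hF1 hy).1)⟩
  linarith

end dims

/-! ### The radial stretch around a separated set -/

/-- The weight `min(1, 4 dist(x, E))`, which measures the local contraction of `stretch E`. -/
def wt {n : ℕ} (E : Set (Pt n)) (x : Pt n) : ℝ := min 1 (4 * infDist x E)

/-- The radial map `z ↦ min(1, 4|z|) z`; it is the identity outside `B(0, 1/4)`. -/
def radial {n : ℕ} (z : Pt n) : Pt n := (min 1 (4 * ‖z‖)) • z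

open Classical in
/-- The map `x ↦ e + 4|x - e|(x - e)` on each ball `B(e, 1/4)`, `e ∈ E`, and the identity
elsewhere. For a `1`-separated `E` these balls are disjoint, so the choice of `e` is forced. -/
def stretch {n : ℕ} (E : Set (Pt n)) (x : Pt n) : Pt n :=
  if h : ∃ e ∈ E, dist x e < 1 / 4 then h.choose + radial (x - h.choose) else x

/-- The only point of `E` that may lie within `1/4` of `x` is `e`. -/
def Sees {n : ℕ} (E : Set (Pt n)) (e x : Pt n) : Prop :=
  e ∈ E ∧ ∀ e' ∈ E, e' ≠ e → 1 / 4 ≤ dist x e'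

/-- The gauge `t (w(x) + min(1, t))`, comparable to `|f(x) - f(y)|` when `|x - y| = t`. -/
def strGauge {n : ℕ} (E : Set (Pt n)) (x : Pt n) (t : ℝ) : ℝ := t * (wt E x + min 1 t)

section stretch

variable {n : ℕ} {E : Set (Pt n)}

lemma wt_nonneg (x : Pt n) : 0 ≤ wt E x :=
  le_min zero_le_one (mul_nonneg (by norm_num) infDist_nonneg)

lemma wt_le_one (x : Pt n) : wt E x ≤ 1 := min_le_left _ _

lemma wt_le_add (x y : Pt n) : wt E y ≤ wt E x + 4 * min 1 (dist x y) := by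
  have h : infDist y E ≤ infDist x E + dist y x := infDist_le_infDist_add_dist
  rw [dist_comm] at h
  unfold wt
  have h0 : 0 ≤ infDist x E := infDist_nonneg
  rcases le_total 1 (dist x y) with h1 | h1 <;> rcases le_total 1 (4 * infDist x E) with h2 | h2
  · rw [min_eq_left h1, min_eq_left h2]; linarith [min_le_left 1 (4 * infDist y E)]
  · rw [min_eq_left h1, min_eq_right h2]; linarith [min_le_left 1 (4 * infDist y E)]
  · rw [min_eq_right h1, min_eq_left h2]
    linarith [min_le_left 1 (4 * infDist y E), dist_nonneg (x := x) (y := y)]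
  · rw [min_eq_right h1, min_eq_right h2]
    linarith [min_le_right 1 (4 * infDist y E)]

lemma wt_of_sees {e x : Pt n} (h : Sees E e x) : wt E x = min 1 (4 * dist x e) := by
  have h1 : infDist x E ≤ dist x e := infDist_le_dist_of_mem h.1
  have h2 : min (1 / 4) (dist x e) ≤ infDist x E := by
    refine (le_infDist ⟨e, h.1⟩).2 fun e' he' => ?_
    by_cases hee : e' = e
    · subst hee; exact min_le_right _ _
    · exact (min_le_left _ _).trans (h.2 e' he' hee)
  unfold wt
  rcases le_total (1 / 4) (dist x e) with h3 | h3
  · rw [min_eq_left h3] at h2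
    rw [min_eq_left (by linarith), min_eq_left (by linarith)]
  · rw [min_eq_right h3] at h2
    rw [le_antisymm h1 h2]

lemma stretch_of_sees {e x : Pt n} (h : Sees E e x) : stretch E x = e + radial (x - e) := by
  unfold stretch
  split_ifs with hx
  · have hc := hx.choose_spec
    have : hx.choose = e := by
      by_contra hne
      exact absurd hc.2 (not_lt.2 (h.2 _ hc.1 hne))
    rw [this]
  · push Not at hx
    have := hx e h.1
    rw [dist_eq_norm] at this
    rw [radial, min_eq_left (by linarith)]
    simp

lemma sees_of_near (hsep : E.Pairwise fun x y => 1 ≤ dist x y) {e x : Pt n} (he : e ∈ E)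
    (hx : dist x e < 3 / 4) : Sees E e x := by
  refine ⟨he, fun e' he' hne => ?_⟩
  have := hsep he' he hne
  linarith [dist_triangle_left e' e x]

lemma sees_or (hsep : E.Pairwise fun x y => 1 ≤ dist x y) (hne : E.Nonempty) (x y : Pt n) :
    (∃ e, Sees E e x ∧ Sees E e y) ∨
      ∃ e ∈ E, ∃ e' ∈ E, e ≠ e' ∧ dist x e < 1 / 4 ∧ dist y e' < 1 / 4 := by
  by_cases hx : ∃ e ∈ E, dist x e < 1 / 4
  · obtain ⟨e, he, hxe⟩ := hx
    by_cases hy : ∃ e' ∈ E, e' ≠ e ∧ dist y e' < 1 / 4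
    · obtain ⟨e', he', h1, h2⟩ := hy
      exact Or.inr ⟨e, he, e', he', h1.symm, hxe, h2⟩
    · push Not at hy
      exact Or.inl ⟨e, sees_of_near hsep he (by linarith), he, hy⟩
  · push Not at hx
    by_cases hy : ∃ e' ∈ E, dist y e' < 1 / 4
    · obtain ⟨e', he', h2⟩ := hy
      exact Or.inl ⟨e', ⟨he', fun e he _ => hx e he⟩, sees_of_near hsep he' (by linarith)⟩
    · push Not at hy
      obtain ⟨e, he⟩ := hne
      exact Or.inl ⟨e, ⟨he, fun e' h _ => hx e' h⟩, he, fun e' h _ => hy e' h⟩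

/-- The radial map is monotone, quantitatively: the inner product
`⟨g x - g y, x - y⟩` equals `(w x + w y)/2 |x - y|² + (w x - w y)(|x|² - |y|²)/2`. -/
lemma radial_lower (x y : Pt n) :
    (min 1 (4 * ‖x‖) + min 1 (4 * ‖y‖)) / 2 * ‖x - y‖ ≤ ‖radial x - radial y‖ := by
  rcases eq_or_ne x y with rfl | hxy
  · simp
  have hpos : 0 < ‖x - y‖ := norm_pos_iff.2 (sub_ne_zero.2 hxy)
  unfold radial
  set a := min 1 (4 * ‖x‖) with ha
  set b := min 1 (4 * ‖y‖) with hb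
  have h1 : inner ℝ (a • x - b • y) (x - y) ≤ ‖a • x - b • y‖ * ‖x - y‖ :=
    real_inner_le_norm _ _
  have h2 : inner ℝ (a • x - b • y) (x - y)
      = (a + b) / 2 * ‖x - y‖ ^ 2 + (a - b) * (‖x‖ ^ 2 - ‖y‖ ^ 2) / 2 := by
    have h3 := norm_sub_sq_real x y
    rw [h3]
    simp only [inner_sub_left, inner_sub_right, real_inner_smul_left,
      real_inner_self_eq_norm_sq, real_inner_comm x y]
    ring
  have h4 : 0 ≤ (a - b) * (‖x‖ ^ 2 - ‖y‖ ^ 2) := by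
    rcases le_total ‖x‖ ‖y‖ with h | h
    · have : a ≤ b := min_le_min le_rfl (by linarith)
      have h5 : ‖x‖ ^ 2 ≤ ‖y‖ ^ 2 := by gcongr
      nlinarith
    · have : b ≤ a := min_le_min le_rfl (by linarith)
      have h5 : ‖y‖ ^ 2 ≤ ‖x‖ ^ 2 := by gcongr
      nlinarith
  have h6 : ((a + b) / 2 * ‖x - y‖) * ‖x - y‖ ≤ ‖a • x - b • y‖ * ‖x - y‖ := by
    nlinarith
  exact le_of_mul_le_mul_right h6 hpos

lemma radial_upper (x y : Pt n) :
    ‖radial x - radial y‖ ≤ (min 1 (4 * ‖x‖) + min 1 (4 * ‖y‖)) * ‖x - y‖ := by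
  wlog h : ‖y‖ ≤ ‖x‖ generalizing x y
  · have := this y x (not_le.1 h).le
    rwa [norm_sub_rev, norm_sub_rev y x, add_comm] at this
  unfold radial
  set a := min 1 (4 * ‖x‖) with ha
  set b := min 1 (4 * ‖y‖) with hb
  have ha0 : 0 ≤ a := le_min zero_le_one (by positivity)
  have hab : b ≤ a := min_le_min le_rfl (by linarith)
  have h1 : a • x - b • y = a • (x - y) + (a - b) • y := by module
  have h2 : (a - b) * ‖y‖ ≤ b * ‖x - y‖ := by
    have h3 : ‖x‖ - ‖y‖ ≤ ‖x - y‖ := norm_sub_norm_le x y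
    rcases le_total 1 (4 * ‖y‖) with h4 | h4
    · have hb1 : b = 1 := min_eq_left h4
      have ha1 : a = 1 := min_eq_left (by linarith)
      rw [ha1, hb1]; simp
    · have hb1 : b = 4 * ‖y‖ := min_eq_right h4
      have ha1 : a ≤ 4 * ‖x‖ := min_le_right _ _
      rw [hb1]
      nlinarith [norm_nonneg y]
  calc ‖a • x - b • y‖ ≤ ‖a • (x - y)‖ + ‖(a - b) • y‖ := by rw [h1]; exact norm_add_le _ _
    _ = a * ‖x - y‖ + (a - b) * ‖y‖ := by
        rw [norm_smul, norm_smul, Real.norm_of_nonneg ha0, Real.norm_of_nonneg (by linarith)]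
    _ ≤ (a + b) * ‖x - y‖ := by linarith

lemma dist_stretch_self (hsep : E.Pairwise fun x y => 1 ≤ dist x y) {e x : Pt n} (he : e ∈ E)
    (hx : dist x e < 1 / 4) : dist (stretch E x) x ≤ 1 / 16 := by
  rw [stretch_of_sees (sees_of_near hsep he (by linarith)), dist_eq_norm]
  rw [dist_eq_norm] at hx
  rw [radial, min_eq_right (by linarith)]
  have : e + (4 * ‖x - e‖) • (x - e) - x = (4 * ‖x - e‖ - 1) • (x - e) := by module
  rw [this, norm_smul, Real.norm_of_nonpos (by linarith)]
  nlinarith [sq_nonneg (‖x - e‖ - 1 / 8)]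

/-- Two-sided control of `|f(x) - f(y)|` by the gauge. Points in two different balls
`B(e, 1/4)` are far apart and hardly moved; all other pairs are governed by one `radial`. -/
lemma stretch_bounds (hsep : E.Pairwise fun x y => 1 ≤ dist x y) (hne : E.Nonempty) (x y : Pt n) :
    strGauge E x (dist x y) / 4 ≤ dist (stretch E x) (stretch E y) ∧
      dist (stretch E x) (stretch E y) ≤ 4 * strGauge E x (dist x y) := by
  have hw0 := wt_nonneg (E := E) x
  have hw1 := wt_le_one (E := E) x
  have ht : 0 ≤ dist x y := dist_nonneg
  unfold strGauge
  rcases sees_or hsep hne x y with ⟨e, hx, hy⟩ | ⟨e, he, e', he', hee, hx, hy⟩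
  · have hsub : (x - e) - (y - e) = x - y := by abel
    have hl := radial_lower (x - e) (y - e)
    have hu := radial_upper (x - e) (y - e)
    rw [hsub, ← dist_eq_norm x y, ← dist_eq_norm x e, ← dist_eq_norm y e, ← wt_of_sees hx,
      ← wt_of_sees hy] at hl hu
    have hd : dist (stretch E x) (stretch E y) = ‖radial (x - e) - radial (y - e)‖ := by
      rw [stretch_of_sees hx, stretch_of_sees hy, dist_eq_norm]
      congr 1; abel
    rw [hd]
    have hm : min 1 (dist x y) ≤ wt E x + wt E y := by
      rw [wt_of_sees hx, wt_of_sees hy]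
      have h3 := dist_triangle_right x y e
      have h4 := dist_nonneg (x := x) (y := e)
      have h5 := dist_nonneg (x := y) (y := e)
      rcases le_total 1 (4 * dist x e) with h | h
      · rw [min_eq_left h]
        linarith [min_le_left 1 (dist x y), le_min zero_le_one (by linarith : 0 ≤ 4 * dist y e)]
      · rcases le_total 1 (4 * dist y e) with h' | h'
        · rw [min_eq_left h']
          linarith [min_le_left 1 (dist x y), le_min zero_le_one (by linarith : 0 ≤ 4 * dist x e)]
        · rw [min_eq_right h, min_eq_right h']
          linarith [min_le_right 1 (dist x y)]
    have hwy := wt_nonneg (E := E) y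
    have hwxy := wt_le_add (E := E) x y
    constructor
    · refine le_trans ?_ hl
      nlinarith [mul_nonneg ht (sub_nonneg.2 hm), mul_nonneg ht hwy]
    · refine hu.trans ?_
      nlinarith [mul_nonneg ht (sub_nonneg.2 hwxy), mul_nonneg ht hw0]
  · have h1 := hsep he he' hee
    have hx' := dist_stretch_self hsep he hx
    have hy' := dist_stretch_self hsep he' hy
    have h2 : 1 / 2 ≤ dist x y := by
      have := dist_triangle4 e x y e'
      rw [dist_comm e x] at this
      linarith
    have h3 := dist_triangle4 x (stretch E x) (stretch E y) y
    have h4 := dist_triangle4 (stretch E x) x y (stretch E y)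
    rw [dist_comm x (stretch E x)] at h3
    rw [dist_comm y (stretch E y)] at h4
    have h5 : 1 / 2 ≤ min 1 (dist x y) := le_min (by norm_num) h2
    have h6 : min 1 (dist x y) ≤ 1 := min_le_left _ _
    constructor <;> nlinarith

lemma strGauge_ratio (x : Pt n) {s t : ℝ} (hs : 0 < s) (ht : 0 ≤ t) :
    strGauge E x t ≤ (t / s + (t / s) ^ 2) * strGauge E x s := by
  obtain ⟨τ, rfl⟩ : ∃ τ, t = τ * s := ⟨t / s, by field_simp⟩
  have hτ : 0 ≤ τ := by
    by_contra h; push Not at h; nlinarith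
  have hw0 := wt_nonneg (E := E) x
  rw [mul_div_cancel_right₀ _ hs.ne']
  unfold strGauge
  have hm : 0 ≤ min 1 s := le_min zero_le_one hs.le
  rcases le_total τ 1 with h | h
  · have h1 : min 1 (τ * s) ≤ min 1 s := min_le_min le_rfl (by nlinarith)
    have h2 : τ * s * (wt E x + min 1 (τ * s)) ≤ τ * s * (wt E x + min 1 s) := by gcongr
    nlinarith [mul_nonneg (mul_nonneg (sq_nonneg τ) hs.le) (add_nonneg hw0 hm)]
  · have h1 : min 1 (τ * s) ≤ τ * min 1 s := by
      rw [mul_min_of_nonneg _ _ hτ]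
      exact min_le_min (by linarith) le_rfl
    have h2 : wt E x + min 1 (τ * s) ≤ τ * (wt E x + min 1 s) := by nlinarith
    have h3 : τ * s * (wt E x + min 1 (τ * s)) ≤ τ * s * (τ * (wt E x + min 1 s)) := by gcongr
    nlinarith [mul_nonneg (mul_nonneg hτ hs.le) (add_nonneg hw0 hm)]

lemma stretch_lipschitz (hsep : E.Pairwise fun x y => 1 ≤ dist x y) (hne : E.Nonempty) :
    LipschitzWith 8 (stretch E) := by
  refine LipschitzWith.of_dist_le_mul fun x y => ?_
  have h := (stretch_bounds hsep hne x y).2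
  have hw1 := wt_le_one (E := E) x
  have h6 : min 1 (dist x y) ≤ 1 := min_le_left _ _
  have ht : 0 ≤ dist x y := dist_nonneg
  unfold strGauge at h
  push_cast
  nlinarith

lemma stretch_lower (hsep : E.Pairwise fun x y => 1 ≤ dist x y) (hne : E.Nonempty) (x y : Pt n) :
    dist x y * min 1 (dist x y) / 4 ≤ dist (stretch E x) (stretch E y) := by
  have h := (stretch_bounds hsep hne x y).1
  have hw0 := wt_nonneg (E := E) x
  have ht : 0 ≤ dist x y := dist_nonneg
  unfold strGauge at h
  nlinarith

/-- The distortion function `16 (τ + τ²)` as an order isomorphism of `[0, ∞)`. -/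
def etaIso : ℝ≥0 ≃o ℝ≥0 :=
  StrictMono.orderIsoOfSurjective (fun τ : ℝ≥0 => 16 * (τ + τ ^ 2))
    (fun a b h => by dsimp only; gcongr)
    (by
      have hc : Continuous fun τ : ℝ≥0 => 16 * (τ + τ ^ 2) := by fun_prop
      intro y
      have hy : y ∈ Icc ((fun τ : ℝ≥0 => 16 * (τ + τ ^ 2)) 0)
          ((fun τ : ℝ≥0 => 16 * (τ + τ ^ 2)) y) := by
        refine ⟨by simp, ?_⟩
        have h0 : (0 : ℝ≥0) ≤ 15 * y + 16 * y ^ 2 := zero_le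
        calc y ≤ y + (15 * y + 16 * y ^ 2) := le_add_of_nonneg_right h0
          _ = 16 * (y + y ^ 2) := by ring
      obtain ⟨x, -, hx⟩ := intermediate_value_Icc (zero_le (a := y)) hc.continuousOn hy
      exact ⟨x, hx⟩)

lemma etaIso_apply (τ : ℝ≥0) : etaIso τ = 16 * (τ + τ ^ 2) := rfl

lemma stretch_isQS (hsep : E.Pairwise fun x y => 1 ≤ dist x y) (hne : E.Nonempty) :
    IsQS (stretch E) etaIso := by
  intro x a b hxb
  have hs : 0 < dist x b := dist_pos.2 hxb
  have h1 := (stretch_bounds hsep hne x a).2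
  have h2 := (stretch_bounds hsep hne x b).1
  have h3 := strGauge_ratio (E := E) x hs (dist_nonneg (x := x) (y := a))
  rw [etaIso_apply, ← NNReal.coe_le_coe]
  push_cast
  have h4 : 0 ≤ dist x a / dist x b := by positivity
  have h5 : 0 ≤ dist x a / dist x b + (dist x a / dist x b) ^ 2 := by positivity
  nlinarith [mul_le_mul_of_nonneg_left h2 h5]

lemma stretch_injective (hsep : E.Pairwise fun x y => 1 ≤ dist x y) (hne : E.Nonempty) :
    Function.Injective (stretch E) := by
  intro x y h
  by_contra hxy
  have hpos : 0 < dist x y := dist_pos.2 hxy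
  have := stretch_lower hsep hne x y
  rw [h, dist_self] at this
  have h2 : 0 < min 1 (dist x y) := lt_min one_pos hpos
  nlinarith [mul_pos hpos h2]

lemma stretch_eq_self {x : Pt n} (hx : ∀ e ∈ E, 1 / 4 ≤ dist x e) : stretch E x = x := by
  unfold stretch
  rw [dif_neg]
  push Not
  exact hx

lemma stretch_near (hsep : E.Pairwise fun x y => 1 ≤ dist x y) {e x : Pt n} (he : e ∈ E)
    (hx : dist x e ≤ 1 / 4) : stretch E x = e + (4 * dist x e) • (x - e) := by
  rw [stretch_of_sees (sees_of_near hsep he (by linarith)), radial, ← dist_eq_norm,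
    min_eq_right (by linarith)]

lemma stretch_surjective (hsep : E.Pairwise fun x y => 1 ≤ dist x y) :
    Function.Surjective (stretch E) := by
  intro y
  by_cases hy : ∃ e ∈ E, dist y e < 1 / 4
  · obtain ⟨e, he, hye⟩ := hy
    rcases eq_or_ne y e with rfl | hne
    · exact ⟨y, by rw [stretch_near hsep he (by simp)]; simp⟩
    have hd : 0 < ‖y - e‖ := norm_pos_iff.2 (sub_ne_zero.2 hne)
    rw [dist_eq_norm] at hye
    set q := √‖y - e‖ with hq
    have hq0 : 0 < q := Real.sqrt_pos.2 hd
    have hqq : q * q = ‖y - e‖ := Real.mul_self_sqrt hd.le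
    have hq1 : q ≤ 1 / 2 := by nlinarith
    have hdx : dist (e + (1 / (2 * q)) • (y - e)) e = q / 2 := by
      rw [dist_eq_norm, add_sub_cancel_left, norm_smul, Real.norm_of_nonneg (by positivity), ← hqq]
      field_simp
    refine ⟨e + (1 / (2 * q)) • (y - e), ?_⟩
    rw [stretch_near hsep he (by rw [hdx]; linarith), hdx, add_sub_cancel_left, smul_smul]
    have : 4 * (q / 2) * (1 / (2 * q)) = 1 := by field_simp; norm_num
    rw [this, one_smul, add_sub_cancel]
  · push Not at hy
    exact ⟨y, stretch_eq_self hy⟩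

/-- `stretch E` as a homeomorphism; continuity of the inverse comes from `stretch_lower`. -/
def stretchHomeo (E : Set (Pt n)) (hsep : E.Pairwise fun x y => 1 ≤ dist x y)
    (hne : E.Nonempty) : Pt n ≃ₜ Pt n where
  toEquiv := Equiv.ofBijective (stretch E) ⟨stretch_injective hsep hne, stretch_surjective hsep⟩
  continuous_toFun := (stretch_lipschitz hsep hne).continuous
  continuous_invFun := by
    set φ := Equiv.ofBijective (stretch E) ⟨stretch_injective hsep hne, stretch_surjective hsep⟩
    change Continuous φ.symm
    rw [Metric.continuous_iff]
    intro b ε hε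
    have hm : 0 < min 1 ε := lt_min one_pos hε
    refine ⟨ε * min 1 ε / 4, by positivity, fun a hab => ?_⟩
    by_contra! hcon
    have h := stretch_lower hsep hne (φ.symm a) (φ.symm b)
    have h1 : ∀ z, stretch E (φ.symm z) = z := φ.apply_symm_apply
    rw [h1, h1] at h
    have h2 : min 1 ε ≤ min 1 (dist (φ.symm a) (φ.symm b)) := min_le_min le_rfl hcon
    have h3 : ε * min 1 ε ≤ dist (φ.symm a) (φ.symm b) * min 1 (dist (φ.symm a) (φ.symm b)) := by
      gcongr
    linarith

lemma coe_stretchHomeo (hsep : E.Pairwise fun x y => 1 ≤ dist x y) (hne : E.Nonempty) :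
    ⇑(stretchHomeo E hsep hne) = stretch E := rfl

end stretch

/-! ### The Jacobian of the stretch -/

/-- The Jacobian `|det Df|` of `stretch E`: it is `2 (4|x - e|)ⁿ` on `B(e, 1/4)`, and `1` off
these balls. -/
def jac {n : ℕ} (E : Set (Pt n)) (x : Pt n) : ℝ := if wt E x < 1 then 2 * wt E x ^ n else 1

section jac

variable {n : ℕ} {E : Set (Pt n)}

/-- The derivative `h ↦ 4|z| (h + ⟨z, h⟩ z / |z|²)` of `z ↦ 4|z| z`, away from the origin. -/
def radialD (z : Pt n) : Pt n →L[ℝ] Pt n :=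
  (4 * ‖z‖) • (ContinuousLinearMap.id ℝ (Pt n) +
    ((‖z‖ ^ 2)⁻¹ • innerSL ℝ z).smulRight z)

lemma hasFDerivAt_quad {z : Pt n} (hz : z ≠ 0) :
    HasFDerivAt (fun z : Pt n => (4 * ‖z‖) • z) (radialD z) z := by
  have hz' : ‖z‖ ≠ 0 := norm_ne_zero_iff.2 hz
  have h1 : HasFDerivAt (fun z : Pt n => ‖z‖ ^ 2) (2 • innerSL ℝ z) z :=
    (hasStrictFDerivAt_norm_sq z).hasFDerivAt
  have h2 := h1.sqrt (by positivity)
  have h3 : (fun z : Pt n => √(‖z‖ ^ 2)) = fun z => ‖z‖ := by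
    funext z; exact Real.sqrt_sq (norm_nonneg z)
  rw [h3, Real.sqrt_sq (norm_nonneg z)] at h2
  have h4 := (h2.const_mul 4).smul (hasFDerivAt_id z)
  refine h4.congr_fderiv ?_
  ext1 h
  simp only [radialD, add_apply, smul_apply,
    ContinuousLinearMap.smulRight_apply, ContinuousLinearMap.id_apply, id_eq,
    innerSL_apply_apply, smul_eq_mul, nsmul_eq_mul, smul_add, smul_smul]
  congr 2
  field_simp
  push_cast
  ring

lemma det_radialD {z : Pt n} (hz : z ≠ 0) : (radialD z).det = 2 * (4 * ‖z‖) ^ n := by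
  have hz' : ‖z‖ ≠ 0 := norm_ne_zero_iff.2 hz
  have h1 : ((radialD z : Pt n →L[ℝ] Pt n) : Pt n →ₗ[ℝ] Pt n) =
      (4 * ‖z‖) • LinearMap.transvection
        (((‖z‖ ^ 2)⁻¹ • innerSL ℝ z : Pt n →L[ℝ] ℝ) : Pt n →ₗ[ℝ] ℝ) z := by
    ext1 h
    simp [radialD, LinearMap.transvection]
  rw [ContinuousLinearMap.det, h1, LinearMap.det_smul, LinearMap.transvection.det]
  simp only [ContinuousLinearMap.coe_coe, smul_apply, innerSL_apply_apply,
    real_inner_self_eq_norm_sq, smul_eq_mul, finrank_euclideanSpace, Fintype.card_fin]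
  rw [inv_mul_cancel₀ (by positivity)]
  ring

lemma isClosed_of_sep (hsep : E.Pairwise fun x y => 1 ≤ dist x y) : IsClosed E :=
  isClosed_of_pairwise_le_dist one_pos hsep

/-- The exceptional null set: the points of `E` and the spheres of radius `1/4` about them. -/
def badSet (E : Set (Pt n)) : Set (Pt n) := ⋃ e ∈ E, ({e} ∪ sphere e (1 / 4))

lemma volume_badSet (hn : 2 ≤ n) (hc : E.Countable) : volume (badSet E) = 0 := by
  have : NeZero n := ⟨by omega⟩
  refine (measure_biUnion_null_iff hc).2 fun e _ => ?_
  refine measure_union_null (by simp) ?_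
  exact Measure.addHaar_sphere_of_ne_zero _ _ (by norm_num)

lemma measurableSet_badSet (hc : E.Countable) : MeasurableSet (badSet E) :=
  MeasurableSet.biUnion hc fun _ _ =>
    (measurableSet_singleton _).union isClosed_sphere.measurableSet

lemma image_badSet_subset (hsep : E.Pairwise fun x y => 1 ≤ dist x y) :
    ∀ x ∈ badSet E, stretch E x = x := by
  intro x hx
  simp only [badSet, mem_iUnion, mem_union, mem_singleton_iff, mem_sphere] at hx
  obtain ⟨e, he, rfl | h⟩ := hx
  · rw [stretch_near hsep he (by simp)]; simp
  · rw [stretch_near hsep he h.le, h]; norm_num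

lemma stretch_hasFDerivAt (hsep : E.Pairwise fun x y => 1 ≤ dist x y) (hne : E.Nonempty)
    {x : Pt n} (hx : x ∉ badSet E) :
    ∃ D : Pt n →L[ℝ] Pt n, HasFDerivAt (stretch E) D x ∧ jac E x = |D.det| := by
  simp only [badSet, mem_iUnion, mem_union, mem_singleton_iff, mem_sphere, not_exists,
    not_or] at hx
  by_cases h : ∃ e ∈ E, dist x e < 1 / 4
  · obtain ⟨e, he, hxe⟩ := h
    have hz : x - e ≠ 0 := sub_ne_zero.2 (hx e he).1
    have hD : HasFDerivAt (fun y : Pt n => e + (4 * ‖y - e‖) • (y - e)) (radialD (x - e)) x := by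
      have h1 := (hasFDerivAt_quad hz).comp x ((hasFDerivAt_id x).sub_const e)
      exact (h1.const_add e).congr_fderiv (by ext1; simp)
    refine ⟨radialD (x - e), hD.congr_of_eventuallyEq ?_, ?_⟩
    · filter_upwards [isOpen_ball.mem_nhds (mem_ball.2 hxe)] with y hy
      rw [stretch_near hsep he (mem_ball.1 hy).le, dist_eq_norm]
    · rw [det_radialD hz, ← dist_eq_norm, abs_of_nonneg (by positivity), jac,
        wt_of_sees (sees_of_near hsep he (by linarith)), min_eq_right (by linarith),
        if_pos (by linarith)]
  · push Not at h
    obtain ⟨e, he, hd⟩ := (isClosed_of_sep hsep).exists_infDist_eq_dist hne x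
    have h1 : 1 / 4 < infDist x E := by
      rw [hd]; exact lt_of_le_of_ne (h e he) (Ne.symm (hx e he).2)
    refine ⟨ContinuousLinearMap.id ℝ (Pt n), (hasFDerivAt_id x).congr_of_eventuallyEq ?_, ?_⟩
    · have ho : IsOpen {y : Pt n | 1 / 4 < infDist y E} :=
        isOpen_lt continuous_const (continuous_infDist_pt E)
      filter_upwards [ho.mem_nhds h1] with y hy
      exact stretch_eq_self fun e' he' => (le_of_lt hy).trans (infDist_le_dist_of_mem he')
    · rw [jac, if_neg]
      · simp [ContinuousLinearMap.det]
      · rw [wt, min_eq_left (by linarith)]; simp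

lemma stretch_jacobianCOV (hn : 2 ≤ n) (hsep : E.Pairwise fun x y => 1 ≤ dist x y)
    (hne : E.Nonempty) (hc : E.Countable) : JacobianCOV (stretch E) (jac E) := by
  have hv := volume_badSet hn hc
  have hae : ∀ᵐ x ∂(volume : Measure (Pt n)), x ∉ badSet E := measure_eq_zero_iff_ae_notMem.1 hv
  refine ⟨hae.mono fun x hx => stretch_hasFDerivAt hsep hne hx, fun g _ => ?_⟩
  choose! D hD using fun x (hx : x ∈ (badSet E)ᶜ) => stretch_hasFDerivAt hsep hne hx
  have key := lintegral_image_eq_lintegral_abs_det_fderiv_mul volume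
    (measurableSet_badSet hc).compl (fun x hx => (hD x hx).1.hasFDerivWithinAt)
    (stretch_injective hsep hne).injOn g
  have himg : stretch E '' (badSet E)ᶜ = (badSet E)ᶜ := by
    have h1 : stretch E '' badSet E = badSet E := by
      ext y
      constructor
      · rintro ⟨x, hx, rfl⟩; rwa [image_badSet_subset hsep x hx]
      · intro hy; exact ⟨y, hy, image_badSet_subset hsep y hy⟩
    rw [image_compl_eq ⟨stretch_injective hsep hne, stretch_surjective hsep⟩, h1]
  have hr : volume.restrict (badSet E)ᶜ = (volume : Measure (Pt n)) :=
    Measure.restrict_eq_self_of_ae_mem hae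
  have hc2 : ∫⁻ x in (badSet E)ᶜ, ENNReal.ofReal |(D x).det| * g (stretch E x) =
      ∫⁻ x in (badSet E)ᶜ, g (stretch E x) * ENNReal.ofReal (jac E x) := by
    refine setLIntegral_congr_fun (measurableSet_badSet hc).compl fun x hx => ?_
    rw [(hD x hx).2, mul_comm]
  rw [himg, hc2, hr] at key
  exact key.symm

lemma jac_bounds (x : Pt n) : wt E x ^ n ≤ jac E x ∧ jac E x ≤ 2 * wt E x ^ n := by
  have h0 := wt_nonneg (E := E) x
  have h1 := wt_le_one (E := E) x
  have h2 : 0 ≤ wt E x ^ n := by positivity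
  unfold jac
  split_ifs with h
  · constructor <;> linarith
  · have : wt E x = 1 := le_antisymm h1 (not_lt.1 h)
    simp [this]

/-- On a ball `B(x₀, r)` with `2r < dist(x₀, E)` the weight is comparable to its value at the
centre, hence so is the Jacobian. -/
lemma jac_memA1 (hne : E.Nonempty) : MemA1 (jac E) (closure E) := by
  refine ⟨2 * 3 ^ n, by positivity, fun x₀ r hr hd => ?_⟩
  have hd : 2 * r < infDist x₀ E := by
    change ENNReal.ofReal (2 * r) < infEDist x₀ (closure E) at hd
    rw [infEDist_closure] at hd
    rwa [infDist, ← ENNReal.ofReal_lt_iff_lt_toReal (by positivity) (infEDist_ne_top hne)]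
  set w := wt E x₀ with hw
  have hw0 : 0 ≤ w := wt_nonneg _
  have hcomp : ∀ x ∈ ball x₀ r, w / 2 ≤ wt E x ∧ wt E x ≤ 3 / 2 * w := by
    intro x hx
    have hx := mem_ball.1 hx
    have h1 : infDist x E ≤ infDist x₀ E + dist x x₀ := infDist_le_infDist_add_dist
    have h2 : infDist x₀ E ≤ infDist x E + dist x₀ x := infDist_le_infDist_add_dist
    rw [dist_comm x₀ x] at h2
    rw [hw]
    unfold wt
    rcases le_total 1 (4 * infDist x₀ E) with h | h
    · rw [min_eq_left h]
      exact ⟨le_min (by norm_num) (by linarith), (min_le_left _ _).trans (by norm_num)⟩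
    · rw [min_eq_right h]
      exact ⟨le_min (by linarith) (by linarith), (min_le_right _ _).trans (by linarith)⟩
  have hinf : (w / 2) ^ n ≤ essInf (jac E) (volume.restrict (ball x₀ r)) := by
    have hne0 : (ae (volume.restrict (ball x₀ r))).NeBot := by
      rw [ae_neBot, Ne, Measure.restrict_eq_zero]
      exact (measure_ball_pos _ _ hr).ne'
    refine le_essInf_of_ae_le _ ?_ ?_
    · filter_upwards [ae_restrict_mem measurableSet_ball] with x hx
      exact le_trans (by gcongr; exact (hcomp x hx).1) (jac_bounds x).1
    · refine IsBoundedUnder.isCoboundedUnder_ge ⟨2, eventually_map.2 (Eventually.of_forall fun x => ?_)⟩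
      have := pow_le_one₀ (n := n) (wt_nonneg (E := E) x) (wt_le_one x)
      linarith [(jac_bounds (E := E) x).2]
  have havg : ⨍ x in ball x₀ r, jac E x ∂volume ≤ 2 * (3 / 2 * w) ^ n := by
    have hfin : volume (ball x₀ r) ≠ ⊤ := measure_ball_lt_top.ne
    have hpos : 0 < volume.real (ball x₀ r) :=
      ENNReal.toReal_pos (measure_ball_pos _ _ hr).ne' hfin
    rw [setAverage_eq, smul_eq_mul, inv_mul_le_iff₀ hpos]
    have h1 : ∫ x in ball x₀ r, jac E x ≤ ∫ x in ball x₀ r, 2 * (3 / 2 * w) ^ n := by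
      refine integral_mono_of_nonneg ?_ ?_ ?_
      · refine Eventually.of_forall fun x => ?_
        exact le_trans (pow_nonneg (wt_nonneg x) n) (jac_bounds x).1
      · exact integrableOn_const hfin
      · filter_upwards [ae_restrict_mem measurableSet_ball] with x hx
        refine (jac_bounds x).2.trans ?_
        have := wt_nonneg (E := E) x
        gcongr
        exact (hcomp x hx).2
    refine h1.trans_eq ?_
    rw [setIntegral_const, smul_eq_mul]
  calc _ ≤ 2 * (3 / 2 * w) ^ n := havg
    _ = 2 * 3 ^ n * (w / 2) ^ n := by rw [mul_assoc, ← mul_pow]; congr 2; ring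
    _ ≤ _ := by gcongr

end jac

/-! ### Energy estimates -/

/-- The double integral over `B(x₀, r) × B(x₀, r)` in the definition of the `Q_α`-norm. -/
def energy {n : ℕ} (α : ℝ) (u : Pt n → ℝ) (x₀ : Pt n) (r : ℝ) : ℝ≥0∞ :=
  ∫⁻ x in ball x₀ r, ∫⁻ y in ball x₀ r,
    ENNReal.ofReal (|u x - u y| ^ 2 / ‖x - y‖ ^ ((n : ℝ) + 2 * α))

/-- The kernel `min(1, (|h|/t)²) / |h|^{n+2α}`, which dominates the integrand of the energy of a
`1/t`-Lipschitz function with values in `[0, 1]`. -/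
def bumpKer (n : ℕ) (α t : ℝ) (h : Pt n) : ℝ :=
  min 1 ((‖h‖ / t) ^ 2) / ‖h‖ ^ ((n : ℝ) + 2 * α)

/-- The total mass of the kernel at scale `1`. -/
def kerMass (n : ℕ) (α : ℝ) : ℝ≥0∞ := ∫⁻ h : Pt n, ENNReal.ofReal (bumpKer n α 1 h)

lemma measurable_bumpKer (n : ℕ) (α t : ℝ) : Measurable (bumpKer n α t) := by
  unfold bumpKer
  fun_prop

lemma kerMass_lt_top {n : ℕ} (hn : 2 ≤ n) {α : ℝ} (h0 : 0 < α) (h1 : α < 1) :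
    kerMass n α < ⊤ := by
  have : Nonempty (Fin n) := ⟨⟨0, by omega⟩⟩
  have hint : Integrable (bumpKer n α 1) := by
    have key := (integrable_fun_norm_addHaar (volume : Measure (Pt n))
      (f := fun y : ℝ => min 1 (y ^ 2) / y ^ ((n : ℝ) + 2 * α))).2 ?_
    · refine key.congr (Eventually.of_forall fun h => ?_)
      simp [bumpKer]
    · rw [← Ioo_union_Ici_eq_Ioi (zero_lt_one' ℝ), integrableOn_union,
        integrableOn_Ici_iff_integrableOn_Ioi]
      have hd : Module.finrank ℝ (Pt n) - 1 = n - 1 := by simp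
      have hc : ((n - 1 : ℕ) : ℝ) = (n : ℝ) - 1 := by
        rw [Nat.cast_sub (by omega)]; simp
      constructor
      · have h := (intervalIntegral.integrableOn_Ioo_rpow_iff (s := 1 - 2 * α)
          (t := 1) one_pos).2 (by linarith)
        refine h.congr_fun (fun y hy => ?_) measurableSet_Ioo
        have hy0 : 0 < y := hy.1
        beta_reduce
        rw [hd, smul_eq_mul, min_eq_right (by nlinarith [hy.1, hy.2]), ← Real.rpow_natCast y 2,
          ← Real.rpow_natCast, ← Real.rpow_sub hy0, ← Real.rpow_add hy0, hc]
        congr 1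
        push_cast
        ring
      · have h := integrableOn_Ioi_rpow_of_lt (a := -1 - 2 * α) (by linarith) one_pos
        refine h.congr_fun (fun y hy => ?_) measurableSet_Ioi
        have hy1 : 1 < y := hy
        have hy0 : 0 < y := by linarith
        beta_reduce
        rw [hd, smul_eq_mul, min_eq_left (by nlinarith), one_div, ← Real.rpow_neg hy0.le,
          ← Real.rpow_natCast, ← Real.rpow_add hy0, hc]
        congr 1
        ring
  exact (hasFiniteIntegral_iff_ofReal (Eventually.of_forall fun h => by
    simp only [bumpKer, Pi.zero_apply]; positivity)).1 hint.2

lemma lintegral_bumpKer {n : ℕ} {α t : ℝ} (ht : 0 < t) :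
    ∫⁻ h : Pt n, ENNReal.ofReal (bumpKer n α t h) = ENNReal.ofReal (t ^ (-(2 * α))) * kerMass n α := by
  have hk : ∀ h : Pt n, ENNReal.ofReal (bumpKer n α t h) =
      ENNReal.ofReal (t ^ (-((n : ℝ) + 2 * α))) * ENNReal.ofReal (bumpKer n α 1 (t⁻¹ • h)) := by
    intro h
    rw [← ENNReal.ofReal_mul (by positivity)]
    congr 1
    simp only [bumpKer, norm_smul, norm_inv, Real.norm_of_nonneg ht.le, div_one]
    rw [Real.mul_rpow (by positivity) (norm_nonneg _), Real.inv_rpow ht.le, Real.rpow_neg ht.le,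
      show t⁻¹ * ‖h‖ = ‖h‖ / t by ring]
    have := (Real.rpow_pos_of_pos ht ((n : ℝ) + 2 * α)).ne'
    rw [← div_div, div_inv_eq_mul, mul_div_assoc', mul_comm (min _ _) (t ^ _),
      inv_mul_cancel_left₀ this]
  simp_rw [hk]
  have hm : Measurable fun h : Pt n => ENNReal.ofReal (bumpKer n α 1 h) :=
    (measurable_bumpKer n α 1).ennreal_ofReal
  rw [lintegral_const_mul _ (by exact hm.comp (measurable_const_smul _)),
    ← lintegral_map (f := fun h => ENNReal.ofReal (bumpKer n α 1 h)) hm (measurable_const_smul t⁻¹),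
    Measure.map_addHaar_smul _ (by positivity), lintegral_smul_measure, smul_eq_mul, ← mul_assoc,
    ← ENNReal.ofReal_mul (by positivity), kerMass]
  congr 2
  have : |(((t : ℝ)⁻¹ ^ Module.finrank ℝ (Pt n)))⁻¹| = t ^ (n : ℝ) := by
    rw [abs_of_nonneg (by positivity)]
    simp
  rw [this, ← Real.rpow_add ht]
  congr 1
  ring

lemma lintegral_bumpKer_sub {n : ℕ} {α t : ℝ} (ht : 0 < t) (x : Pt n) :
    ∫⁻ y : Pt n, ENNReal.ofReal (bumpKer n α t (x - y)) =
      ENNReal.ofReal (t ^ (-(2 * α))) * kerMass n α := by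
  rw [← lintegral_bumpKer ht,
    lintegral_sub_left_eq_self (fun h => ENNReal.ofReal (bumpKer n α t h)) x]

lemma bumpKer_neg {n : ℕ} (α t : ℝ) (x y : Pt n) : bumpKer n α t (x - y) = bumpKer n α t (y - x) := by
  simp only [bumpKer, norm_sub_rev]

lemma volume_ball_eq {n : ℕ} (hn : 2 ≤ n) (x : Pt n) {r : ℝ} (hr : 0 ≤ r) :
    volume (ball x r) = ENNReal.ofReal (r ^ n) * volume (ball (0 : Pt n) 1) := by
  have : Nonempty (Fin n) := ⟨⟨0, by omega⟩⟩
  have := Measure.addHaar_ball (volume : Measure (Pt n)) x hr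
  simpa using this

lemma lintegral_indicator_fst_le {n : ℕ} {S B : Set (Pt n)} (hS : MeasurableSet S)
    {g : Pt n → Pt n → ℝ≥0∞} {M : ℝ≥0∞} (hg : ∀ x, ∫⁻ y, g x y ≤ M) :
    ∫⁻ x in B, ∫⁻ y in B, S.indicator (fun z => g z y) x ≤ volume (S ∩ B) * M := by
  calc ∫⁻ x in B, ∫⁻ y in B, S.indicator (fun z => g z y) x
      ≤ ∫⁻ x in B, S.indicator (fun _ => M) x := by
        refine lintegral_mono fun x => ?_
        by_cases hx : x ∈ S
        · simp only [indicator_of_mem hx]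
          exact (setLIntegral_le_lintegral _ _).trans (hg x)
        · simp [indicator_of_notMem hx]
    _ = volume (S ∩ B) * M := by
        rw [lintegral_indicator hS, Measure.restrict_restrict hS]
        simp [mul_comm]

/-- Splitting a kernel over pairs one of whose points lies in `S`. -/
lemma lintegral_kernel_le {n : ℕ} {S B : Set (Pt n)} (hS : MeasurableSet S)
    {g : Pt n → Pt n → ℝ≥0∞} {M : ℝ≥0∞} (hm : Measurable (Function.uncurry g))
    (hg : ∀ x, ∫⁻ y, g x y ≤ M) (hg' : ∀ y, ∫⁻ x, g x y ≤ M) :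
    ∫⁻ x in B, ∫⁻ y in B, (S.indicator (fun z => g z y) x + S.indicator (g x) y) ≤
      2 * (volume (S ∩ B) * M) := by
  have hm1 : Measurable (Function.uncurry fun x y => S.indicator (fun z => g z y) x) := by
    have : (Function.uncurry fun x y => S.indicator (fun z => g z y) x) =
        (S ×ˢ univ).indicator (Function.uncurry g) := by
      ext ⟨x, y⟩
      by_cases hx : x ∈ S <;> simp [hx]
    rw [this]
    exact hm.indicator (hS.prod MeasurableSet.univ)
  have hm2 : Measurable (Function.uncurry fun x y => S.indicator (g x) y) := by
    have : (Function.uncurry fun x y => S.indicator (g x) y) =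
        (univ ×ˢ S).indicator (Function.uncurry g) := by
      ext ⟨x, y⟩
      by_cases hy : y ∈ S <;> simp [hy]
    rw [this]
    exact hm.indicator (MeasurableSet.univ.prod hS)
  have h1 : ∫⁻ x in B, ∫⁻ y in B, (S.indicator (fun z => g z y) x + S.indicator (g x) y) =
      (∫⁻ x in B, ∫⁻ y in B, S.indicator (fun z => g z y) x) +
        ∫⁻ x in B, ∫⁻ y in B, S.indicator (g x) y := by
    rw [← lintegral_add_left (Measurable.lintegral_prod_right hm1)]
    refine lintegral_congr fun x => ?_
    exact lintegral_add_left (hm1.comp measurable_prodMk_left) _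
  rw [h1, two_mul]
  refine add_le_add (lintegral_indicator_fst_le hS hg) ?_
  rw [lintegral_lintegral_swap hm2.aemeasurable]
  exact lintegral_indicator_fst_le (g := fun y x => g x y) hS hg'

/-- The energy of a bump function is controlled by the volume of its support in the ball. -/
lemma energy_le_of_support {n : ℕ} {α ε : ℝ} (hε : 0 < ε) {u : Pt n → ℝ} {S : Set (Pt n)}
    (hS : MeasurableSet S) (hu0 : ∀ x, 0 ≤ u x) (hu1 : ∀ x, u x ≤ 1)
    (hl : ∀ x y, |u x - u y| ≤ ‖x - y‖ / ε) (hS0 : ∀ x ∉ S, u x = 0) (x₀ : Pt n) (r : ℝ) :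
    energy α u x₀ r ≤
      2 * (volume (S ∩ ball x₀ r) * (ENNReal.ofReal (ε ^ (-(2 * α))) * kerMass n α)) := by
  have hpt : ∀ x y, ENNReal.ofReal (|u x - u y| ^ 2 / ‖x - y‖ ^ ((n : ℝ) + 2 * α)) ≤
      S.indicator (fun z => ENNReal.ofReal (bumpKer n α ε (z - y))) x +
        S.indicator (fun z => ENNReal.ofReal (bumpKer n α ε (x - z))) y := by
    intro x y
    have hle : ENNReal.ofReal (|u x - u y| ^ 2 / ‖x - y‖ ^ ((n : ℝ) + 2 * α)) ≤
        ENNReal.ofReal (bumpKer n α ε (x - y)) := by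
      refine ENNReal.ofReal_le_ofReal ?_
      unfold bumpKer
      have h1 : |u x - u y| ≤ 1 := by
        rw [abs_le]; constructor <;> linarith [hu0 x, hu0 y, hu1 x, hu1 y]
      have h2 : |u x - u y| ^ 2 ≤ min 1 ((‖x - y‖ / ε) ^ 2) :=
        le_min (pow_le_one₀ (abs_nonneg _) h1) (pow_le_pow_left₀ (abs_nonneg _) (hl x y) 2)
      exact div_le_div_of_nonneg_right h2 (by positivity)
    by_cases hx : x ∈ S
    · rw [indicator_of_mem hx]
      exact hle.trans le_self_add
    · by_cases hy : y ∈ S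
      · rw [indicator_of_mem hy]
        exact hle.trans le_add_self
      · simp [hS0 x hx, hS0 y hy]
  refine (lintegral_mono fun x => lintegral_mono fun y => hpt x y).trans ?_
  refine lintegral_kernel_le (g := fun x y => ENNReal.ofReal (bumpKer n α ε (x - y))) hS
    ((measurable_bumpKer n α ε).comp (measurable_fst.sub measurable_snd)).ennreal_ofReal
    (fun x => (lintegral_bumpKer_sub hε x).le) fun y => ?_
  simp only [bumpKer_neg α ε _ y]
  exact (lintegral_bumpKer_sub hε y).le

/-- Bound for the energy of a `1/ε`-Lipschitz function, effective on balls of radius at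
most `ε`. -/
lemma energy_le_of_lipschitz {n : ℕ} {α ε : ℝ} (hε : 0 < ε) {u : Pt n → ℝ}
    (hl : ∀ x y, |u x - u y| ≤ ‖x - y‖ / ε) (x₀ : Pt n) {r : ℝ} (hr : 0 < r) :
    energy α u x₀ r ≤ volume (ball x₀ r) * (ENNReal.ofReal ((2 * r / ε) ^ 2) *
      (ENNReal.ofReal ((2 * r) ^ (-(2 * α))) * kerMass n α)) := by
  have hin : ∀ x ∈ ball x₀ r, ∫⁻ y in ball x₀ r,
      ENNReal.ofReal (|u x - u y| ^ 2 / ‖x - y‖ ^ ((n : ℝ) + 2 * α)) ≤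
      ENNReal.ofReal ((2 * r / ε) ^ 2) *
      (ENNReal.ofReal ((2 * r) ^ (-(2 * α))) * kerMass n α) := by
    intro x hx
    rw [← lintegral_bumpKer_sub (by positivity : 0 < 2 * r) x, ← lintegral_const_mul']
    · refine le_trans (setLIntegral_mono_ae' measurableSet_ball ?_)
        (setLIntegral_le_lintegral (ball x₀ r) _)
      refine Eventually.of_forall fun y hy => ?_
      rw [← ENNReal.ofReal_mul (by positivity)]
      refine ENNReal.ofReal_le_ofReal ?_
      have hxy : ‖x - y‖ ≤ 2 * r := by
        rw [← dist_eq_norm]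
        have := dist_triangle_right x y x₀
        rw [mem_ball] at hx hy
        linarith
      have h1 : ‖x - y‖ / (2 * r) ≤ 1 := by rwa [div_le_one (by positivity)]
      unfold bumpKer
      rw [min_eq_right (pow_le_one₀ (by positivity) h1), mul_div_assoc', ← mul_pow]
      gcongr
      refine (hl x y).trans (le_of_eq ?_)
      field_simp
    · exact ENNReal.ofReal_ne_top
  calc energy α u x₀ r ≤ ∫⁻ x in ball x₀ r, ENNReal.ofReal ((2 * r / ε) ^ 2) *
      (ENNReal.ofReal ((2 * r) ^ (-(2 * α))) * kerMass n α) :=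
        setLIntegral_mono_ae' measurableSet_ball (Eventually.of_forall hin)
    _ = _ := by simp [mul_comm]

/-- A function which oscillates by `1/2` at scale `δ` near each of the separated points of `F`
has energy at least a constant times `#F · δ^{n-2α}`. -/
lemma le_energy {n : ℕ} (hn : 2 ≤ n) {α δ r : ℝ} (hα : 0 < α) (hδ : 0 < δ) (hδ1 : δ ≤ 1 / 3) {v : Pt n → ℝ}
    {F : Finset (Pt n)} (hF : (F : Set (Pt n)).Pairwise fun x y => 1 ≤ dist x y)
    (hFr : ∀ e ∈ F, ∀ x, dist x e < 1 → x ∈ ball (0 : Pt n) r)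
    (hv1 : ∀ e ∈ F, ∀ x, dist x e ≤ δ / 2 → 1 / 2 ≤ v x)
    (hv0 : ∀ e ∈ F, ∀ x, δ ≤ dist x e → dist x e ≤ 3 * δ → v x = 0) :
    ENNReal.ofReal (F.card * (δ / 2) ^ n * (4⁻¹ / (4 * δ) ^ ((n : ℝ) + 2 * α) * δ ^ n)) *
      volume (ball (0 : Pt n) 1) ^ 2 ≤ energy α v 0 r := by
  set ω := volume (ball (0 : Pt n) 1) with hω
  have hξ : ∃ ξ : Pt n, ‖ξ‖ = 1 := ⟨EuclideanSpace.single ⟨0, by omega⟩ 1, by simp⟩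
  obtain ⟨ξ, hξ⟩ := hξ
  set c := 4⁻¹ / (4 * δ) ^ ((n : ℝ) + 2 * α) with hc
  have hc0 : 0 ≤ c := by positivity
  have hin : ∀ e ∈ F, ∀ x ∈ ball e (δ / 2), ENNReal.ofReal (c * δ ^ n) * ω ≤
      ∫⁻ y in ball 0 r, ENNReal.ofReal (|v x - v y| ^ 2 / ‖x - y‖ ^ ((n : ℝ) + 2 * α)) := by
    intro e he x hx
    set z := e + (2 * δ) • ξ with hz
    have hze : dist z e = 2 * δ := by
      rw [dist_eq_norm, hz, add_sub_cancel_left, norm_smul, hξ, Real.norm_of_nonneg (by positivity),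
        mul_one]
    have hy1 : ∀ y ∈ ball z δ, δ ≤ dist y e ∧ dist y e < 3 * δ := by
      intro y hy
      rw [mem_ball] at hy
      have h1 := dist_triangle y z e
      have h2 := dist_triangle_left z e y
      constructor <;> linarith
    have hsub : ball z δ ⊆ ball 0 r := fun y hy => hFr e he y (by linarith [(hy1 y hy).2])
    refine le_trans ?_ (lintegral_mono_set hsub)
    calc ENNReal.ofReal (c * δ ^ n) * ω = ∫⁻ y in ball z δ, ENNReal.ofReal c := by
          rw [setLIntegral_const, volume_ball_eq hn z hδ.le, ENNReal.ofReal_mul hc0, mul_assoc]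
      _ ≤ _ := by
          refine setLIntegral_mono_ae' measurableSet_ball (Eventually.of_forall fun y hy => ?_)
          refine ENNReal.ofReal_le_ofReal ?_
          obtain ⟨h1, h2⟩ := hy1 y hy
          rw [mem_ball] at hx
          have hvx := hv1 e he x hx.le
          rw [hv0 e he y h1 h2.le, sub_zero, hc, sq_abs]
          have hxy : ‖x - y‖ ≤ 4 * δ := by
            rw [← dist_eq_norm]
            have := dist_triangle_right x y e
            linarith
          have hxy0 : 0 < ‖x - y‖ := by
            rw [← dist_eq_norm]
            have := dist_triangle_left y e x
            rw [dist_comm]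
            have := dist_triangle y x e
            linarith
          have : (4⁻¹ : ℝ) ≤ v x ^ 2 := by nlinarith
          have hp : 0 < ‖x - y‖ ^ ((n : ℝ) + 2 * α) := Real.rpow_pos_of_pos hxy0 _
          gcongr
  have hdis : (F : Set (Pt n)).PairwiseDisjoint fun e => ball e (δ / 2) := by
    intro e he e' he' hne
    refine ball_disjoint_ball ?_
    have := hF he he' hne
    linarith
  calc ENNReal.ofReal (F.card * (δ / 2) ^ n * (c * δ ^ n)) * ω ^ 2
      = ∑ e ∈ F, ∫⁻ x in ball e (δ / 2), ENNReal.ofReal (c * δ ^ n) * ω := by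
        simp only [setLIntegral_const, volume_ball_eq hn _ (by positivity : 0 ≤ δ / 2)]
        rw [Finset.sum_const, nsmul_eq_mul, ENNReal.ofReal_mul (by positivity),
          ENNReal.ofReal_mul (by positivity), ENNReal.ofReal_natCast]
        ring
    _ = ∫⁻ x in ⋃ e ∈ F, ball e (δ / 2), ENNReal.ofReal (c * δ ^ n) * ω :=
        (lintegral_biUnion_finset hdis (fun _ _ => measurableSet_ball) _).symm
    _ ≤ ∫⁻ x in ⋃ e ∈ F, ball e (δ / 2), ∫⁻ y in ball 0 r,
          ENNReal.ofReal (|v x - v y| ^ 2 / ‖x - y‖ ^ ((n : ℝ) + 2 * α)) := by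
        refine setLIntegral_mono_ae'
          (Finset.measurableSet_biUnion _ fun _ _ => measurableSet_ball) ?_
        refine Eventually.of_forall fun x hx => ?_
        simp only [mem_iUnion] at hx
        obtain ⟨e, he, hx⟩ := hx
        exact hin e he x hx
    _ ≤ energy α v 0 r := by
        refine lintegral_mono_set ?_
        simp only [iUnion_subset_iff]
        intro e he x hx
        rw [mem_ball] at hx
        exact hFr e he x (by linarith)

/-! ### The test functions -/

/-- The sum of tent functions of height `1` and radius `ε` centred at the points of `F` (when
these are `2ε`-separated). -/
def tent {n : ℕ} (F : Finset (Pt n)) (ε : ℝ) (x : Pt n) : ℝ :=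
  max 0 (1 - infDist x (F : Set (Pt n)) / ε)

section tent

variable {n : ℕ} {F : Finset (Pt n)} {ε : ℝ}

lemma tent_nonneg (x : Pt n) : 0 ≤ tent F ε x := le_max_left _ _

lemma tent_le_one (hε : 0 < ε) (x : Pt n) : tent F ε x ≤ 1 :=
  max_le zero_le_one (sub_le_self _ (div_nonneg infDist_nonneg hε.le))

lemma tent_lipschitz (hε : 0 < ε) (x y : Pt n) : |tent F ε x - tent F ε y| ≤ ‖x - y‖ / ε := by
  unfold tent
  rw [max_comm 0, max_comm 0]
  refine (abs_max_sub_max_le_abs _ _ 0).trans ?_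
  rw [_root_.sub_sub_sub_cancel_left, ← _root_.sub_div, abs_div, abs_of_pos hε, ← dist_eq_norm, dist_comm,
    ← Real.dist_eq]
  gcongr
  exact (lipschitz_infDist_pt (F : Set (Pt n))).dist_le_mul y x |>.trans (by simp)

lemma continuous_tent : Continuous (tent F ε) := by
  unfold tent
  have := continuous_infDist_pt (F : Set (Pt n))
  fun_prop

lemma tent_eq_zero (hF : F.Nonempty) (hε : 0 < ε) {x : Pt n} (h : ∀ e ∈ F, ε ≤ dist x e) :
    tent F ε x = 0 := by
  refine max_eq_left ?_
  have : ε ≤ infDist x (F : Set (Pt n)) := (le_infDist (by exact_mod_cast hF)).2 fun {y} hy => h y hy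
  rw [sub_nonpos, one_le_div hε]
  exact this

lemma half_le_tent (hε : 0 < ε) {x e : Pt n} (he : e ∈ F) (h : dist x e ≤ ε / 2) :
    1 / 2 ≤ tent F ε x := by
  refine le_max_of_le_right ?_
  have : infDist x (F : Set (Pt n)) ≤ ε / 2 :=
    (infDist_le_dist_of_mem (Finset.mem_coe.2 he)).trans h
  have : infDist x (F : Set (Pt n)) / ε ≤ 1 / 2 := by
    rw [div_le_iff₀ hε]; linarith
  linarith

end tent

lemma Qnorm_le {n : ℕ} {α : ℝ} {u : Pt n → ℝ} {A : ℝ≥0∞}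
    (h : ∀ x₀ : Pt n, ∀ r : ℝ, 0 < r →
      ENNReal.ofReal (r ^ (2 * α - (n : ℝ))) * energy α u x₀ r ≤ A) :
    Qnorm α u ≤ A ^ (1 / 2 : ℝ) := by
  refine iSup_le fun x₀ => iSup_le fun r => iSup_le fun hr => ?_
  exact ENNReal.rpow_le_rpow (h x₀ r hr) (by norm_num)

lemma le_Qnorm {n : ℕ} {α : ℝ} {u : Pt n → ℝ} (x₀ : Pt n) {r : ℝ} (hr : 0 < r) :
    (ENNReal.ofReal (r ^ (2 * α - (n : ℝ))) * energy α u x₀ r) ^ (1 / 2 : ℝ) ≤ Qnorm α u :=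
  le_iSup_of_le x₀ (le_iSup_of_le r (le_iSup_of_le hr le_rfl))

/-- Bound for the normalised energy of `c` bumps of radius `ε` inside a ball of radius `r`, when
the number `c` of bumps obeys the growth bounds of a regular lattice set. -/
lemma scaled_count_le {n : ℕ} {α α₀ K ε r R c : ℝ} (hα : α₀ < α) (hα' : 2 * α < n)
    (hε : 0 < ε) (hεr : ε ≤ r) (hR : 1 ≤ R) (hK : 0 ≤ K)
    (hεR : R ^ (2 * (α - α₀)) * ε ^ ((n : ℝ) - 2 * α) ≤ 1)
    (hc1 : c ≤ K * (2 * max r 1) ^ ((n : ℝ) - 2 * α₀)) (hc2 : c ≤ K * R ^ ((n : ℝ) - 2 * α₀)) :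
    r ^ (2 * α - (n : ℝ)) * c * ε ^ ((n : ℝ) - 2 * α) ≤ K * 2 ^ ((n : ℝ) - 2 * α₀) := by
  have hr : 0 < r := by linarith
  have h2 : (1 : ℝ) ≤ 2 ^ ((n : ℝ) - 2 * α₀) := Real.one_le_rpow (by norm_num) (by linarith)
  have hεp : 0 < ε ^ ((n : ℝ) - 2 * α) := by positivity
  have hrp : 0 < r ^ (2 * α - (n : ℝ)) := by positivity
  rcases le_total r 1 with h | h
  · rw [max_eq_right h, mul_one] at hc1
    have h3 : r ^ (2 * α - (n : ℝ)) * ε ^ ((n : ℝ) - 2 * α) ≤ 1 := by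
      rw [show 2 * α - (n : ℝ) = -((n : ℝ) - 2 * α) by ring, Real.rpow_neg hr.le, inv_mul_le_one₀
        (by positivity)]
      exact Real.rpow_le_rpow hε.le hεr (by linarith)
    calc _ = c * (r ^ (2 * α - (n : ℝ)) * ε ^ ((n : ℝ) - 2 * α)) := by ring
      _ ≤ (K * 2 ^ ((n : ℝ) - 2 * α₀)) * (r ^ (2 * α - (n : ℝ)) * ε ^ ((n : ℝ) - 2 * α)) := by
        gcongr
      _ ≤ _ := mul_le_of_le_one_right (by positivity) h3
  · rw [max_eq_left h, Real.mul_rpow (by norm_num) hr.le] at hc1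
    have key : r ^ (2 * α - (n : ℝ)) * c ≤ K * 2 ^ ((n : ℝ) - 2 * α₀) * R ^ (2 * (α - α₀)) := by
      rcases le_total r R with h' | h'
      · calc _ ≤ r ^ (2 * α - (n : ℝ)) *
              (K * (2 ^ ((n : ℝ) - 2 * α₀) * r ^ ((n : ℝ) - 2 * α₀))) := by gcongr
          _ = K * 2 ^ ((n : ℝ) - 2 * α₀) * (r ^ (2 * α - (n : ℝ)) * r ^ ((n : ℝ) - 2 * α₀)) := by
            ring
          _ = K * 2 ^ ((n : ℝ) - 2 * α₀) * r ^ (2 * (α - α₀)) := by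
            rw [← Real.rpow_add hr]; ring_nf
          _ ≤ _ := by gcongr
      · have hRp : 0 < R := by linarith
        calc _ ≤ R ^ (2 * α - (n : ℝ)) * (K * R ^ ((n : ℝ) - 2 * α₀)) := by
              refine mul_le_mul_of_nonneg ?_ hc2 hrp.le (by positivity)
              exact Real.rpow_le_rpow_of_nonpos hRp h' (by linarith)
          _ = K * 1 * (R ^ (2 * α - (n : ℝ)) * R ^ ((n : ℝ) - 2 * α₀)) := by
            ring
          _ = K * 1 * R ^ (2 * (α - α₀)) := by
            rw [← Real.rpow_add hRp]; ring_nf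
          _ ≤ _ := by gcongr
    calc _ ≤ K * 2 ^ ((n : ℝ) - 2 * α₀) * R ^ (2 * (α - α₀)) * ε ^ ((n : ℝ) - 2 * α) := by
          gcongr
      _ = K * 2 ^ ((n : ℝ) - 2 * α₀) * (R ^ (2 * (α - α₀)) * ε ^ ((n : ℝ) - 2 * α)) := by ring
      _ ≤ _ := mul_le_of_le_one_right (by positivity) hεR

section norms

variable {n : ℕ} {E : Set (Pt n)} {α₀ α K k R ε : ℝ} {F : Finset (Pt n)}

/-- The tent functions over finite parts of a regular lattice set are bounded in `Q_α`, provided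
their radius `ε` is small enough in terms of the size `R` of the finite part. -/
lemma Qnorm_tent_le (hn : 2 ≤ n) (hα₀ : 0 < α₀) (hα : α₀ < α) (hα1 : α < 1)
    (hE : IsRegularLattice E ((n : ℝ) - 2 * α₀) K k) (hFne : F.Nonempty) (hR : 1 ≤ R)
    (hF : (F : Set (Pt n)) ⊆ E ∩ ball 0 R) (hε : 0 < ε) (hε1 : ε ≤ 1)
    (hεR : R ^ (2 * (α - α₀)) * ε ^ ((n : ℝ) - 2 * α) ≤ 1) :
    Qnorm α (tent F ε) ≤ (ENNReal.ofReal (2 * (K * 2 ^ ((n : ℝ) - 2 * α₀)) + 4) *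
      (volume (ball (0 : Pt n) 1) * kerMass n α)) ^ (1 / 2 : ℝ) := by
  classical
  have hn' : (2 : ℝ) ≤ n := by exact_mod_cast hn
  have hcF := card_le hE hR hF
  have hK : 0 ≤ K := by
    have h1 : (0 : ℝ) ≤ K * R ^ ((n : ℝ) - 2 * α₀) := le_trans (by positivity) hcF
    exact nonneg_of_mul_nonneg_left h1 (by positivity)
  refine Qnorm_le fun x₀ r hr => ?_
  set ω := volume (ball (0 : Pt n) 1) with hω
  set κ := kerMass n α with hκ
  rcases le_total r ε with hrε | hrε
  · refine (mul_le_mul_right (energy_le_of_lipschitz hε (tent_lipschitz hε) x₀ hr) _).trans ?_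
    rw [volume_ball_eq hn x₀ hr.le]
    calc _ = ENNReal.ofReal (r ^ (2 * α - (n : ℝ)) * r ^ n * (2 * r / ε) ^ 2 *
            (2 * r) ^ (-(2 * α))) * (ω * κ) := by
          rw [ENNReal.ofReal_mul (by positivity), ENNReal.ofReal_mul (by positivity),
            ENNReal.ofReal_mul (by positivity)]
          ring
      _ ≤ _ := by
          refine mul_le_mul_left (ENNReal.ofReal_le_ofReal ?_) _
          have h1 : r ^ (2 * α - (n : ℝ)) * r ^ n * (2 * r) ^ (-(2 * α)) ≤ 1 := by
            rw [← Real.rpow_natCast r n, ← Real.rpow_add hr, Real.mul_rpow (by norm_num) hr.le,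
              show 2 * α - (n : ℝ) + n = 2 * α by ring, mul_left_comm, ← Real.rpow_add hr]
            rw [show 2 * α + -(2 * α) = 0 by ring, Real.rpow_zero, mul_one]
            exact Real.rpow_le_one_of_one_le_of_nonpos (by norm_num) (by linarith)
          have h2 : (2 * r / ε) ^ 2 ≤ 4 := by
            have : r / ε ≤ 1 := by rwa [div_le_one hε]
            have h0 : 0 ≤ r / ε := by positivity
            calc (2 * r / ε) ^ 2 = 4 * (r / ε) ^ 2 := by ring
              _ ≤ 4 * 1 := by gcongr; exact pow_le_one₀ h0 this
              _ = 4 := by norm_num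
          calc _ = (2 * r / ε) ^ 2 * (r ^ (2 * α - (n : ℝ)) * r ^ n * (2 * r) ^ (-(2 * α))) := by
                ring
            _ ≤ 4 * 1 := by gcongr
            _ ≤ _ := by
              have : 0 ≤ K * 2 ^ ((n : ℝ) - 2 * α₀) := by positivity
              linarith
  · set S : Set (Pt n) := ⋃ e ∈ F, ball e ε with hS
    have hSm : MeasurableSet S := Finset.measurableSet_biUnion _ fun _ _ => measurableSet_ball
    have hS0 : ∀ x ∉ S, tent F ε x = 0 := fun x hx => tent_eq_zero hFne hε fun e he => by
      by_contra hlt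
      exact hx (mem_biUnion he (mem_ball.2 (not_le.1 hlt)))
    have hen := energy_le_of_support (α := α) hε hSm tent_nonneg (tent_le_one hε)
      (tent_lipschitz hε) hS0 x₀ r
    set F' := F.filter fun e => e ∈ ball x₀ (2 * max r 1) with hF'
    have hvol : volume (S ∩ ball x₀ r) ≤ F'.card * (ENNReal.ofReal (ε ^ n) * ω) := by
      have hsub : S ∩ ball x₀ r ⊆ ⋃ e ∈ F', ball e ε := by
        rintro x ⟨hx, hxr⟩
        simp only [hS, mem_iUnion] at hx
        obtain ⟨e, he, hxe⟩ := hx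
        refine mem_biUnion (x := e) (Finset.mem_coe.2 (Finset.mem_filter.2 ⟨he, ?_⟩)) hxe
        rw [mem_ball] at hxe hxr ⊢
        have := dist_triangle_left e x₀ x
        have := le_max_left r 1
        have := le_max_right r 1
        linarith
      refine (measure_mono hsub).trans ((measure_biUnion_finset_le _ _).trans ?_)
      simp only [volume_ball_eq hn _ hε.le, Finset.sum_const, nsmul_eq_mul]
      exact le_rfl
    have hc1 : (F'.card : ℝ) ≤ K * (2 * max r 1) ^ ((n : ℝ) - 2 * α₀) := by
      refine card_le (x := x₀) hE (by linarith [le_max_right r 1]) fun e he => ?_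
      have := Finset.mem_filter.1 (Finset.mem_coe.1 he)
      exact ⟨(hF this.1).1, this.2⟩
    have hc2 : (F'.card : ℝ) ≤ K * R ^ ((n : ℝ) - 2 * α₀) :=
      le_trans (by exact_mod_cast Finset.card_filter_le _ _) hcF
    have hreal := scaled_count_le hα (by linarith) hε hrε hR hK hεR hc1 hc2
    calc _ ≤ ENNReal.ofReal (r ^ (2 * α - (n : ℝ))) * (2 * (F'.card * (ENNReal.ofReal (ε ^ n) * ω) *
            (ENNReal.ofReal (ε ^ (-(2 * α))) * κ))) := by
          refine mul_le_mul_right (hen.trans ?_) _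
          gcongr
      _ = ENNReal.ofReal (2 * (r ^ (2 * α - (n : ℝ)) * F'.card * ε ^ ((n : ℝ) - 2 * α))) *
            (ω * κ) := by
          have : ε ^ ((n : ℝ) - 2 * α) = ε ^ n * ε ^ (-(2 * α)) := by
            rw [← Real.rpow_natCast, ← Real.rpow_add hε]; ring_nf
          rw [this, ENNReal.ofReal_mul (by positivity), ENNReal.ofReal_mul (by positivity),
            ENNReal.ofReal_mul (by positivity), ENNReal.ofReal_mul (by positivity),
            ENNReal.ofReal_natCast, ENNReal.ofReal_ofNat]
          ring
      _ ≤ _ := by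
          refine mul_le_mul_left (ENNReal.ofReal_le_ofReal ?_) _
          linarith

/-- Lower bound for the `Q_α`-norm of a function oscillating at scale `δ` near every point of
`F`. -/
lemma le_Qnorm_of_osc (hn : 2 ≤ n) (hα : 0 < α) {δ : ℝ} (hδ : 0 < δ) (hδ1 : δ ≤ 1 / 3)
    {v : Pt n → ℝ} (hF : (F : Set (Pt n)).Pairwise fun x y => 1 ≤ dist x y)
    (hR : 1 ≤ R) (hFR : (F : Set (Pt n)) ⊆ ball 0 R)
    (hv1 : ∀ e ∈ F, ∀ x, dist x e ≤ δ / 2 → 1 / 2 ≤ v x)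
    (hv0 : ∀ e ∈ F, ∀ x, δ ≤ dist x e → dist x e ≤ 3 * δ → v x = 0) :
    (ENNReal.ofReal ((2⁻¹ ^ n * (4⁻¹ / 4 ^ ((n : ℝ) + 2 * α)) * 2 ^ (2 * α - (n : ℝ))) *
      (R ^ (2 * α - (n : ℝ)) * F.card * δ ^ ((n : ℝ) - 2 * α))) *
      volume (ball (0 : Pt n) 1) ^ 2) ^ (1 / 2 : ℝ) ≤ Qnorm α v := by
  have hR0 : 0 < R := by linarith
  refine le_trans ?_ (le_Qnorm 0 (by positivity : 0 < 2 * R))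
  have hen := le_energy (r := 2 * R) hn hα hδ hδ1 hF (fun e he x hx => by
    have h1 := hFR he
    rw [mem_ball] at h1 ⊢
    linarith [dist_triangle x e 0]) hv1 hv0
  refine ENNReal.rpow_le_rpow (le_trans (le_of_eq ?_) (mul_le_mul_right hen _)) (by norm_num)
  rw [← mul_assoc (ENNReal.ofReal ((2 * R) ^ _)), ← ENNReal.ofReal_mul
    (p := (2 * R) ^ (2 * α - (n : ℝ))) (by positivity)]
  congr 2
  rw [Real.mul_rpow (by norm_num) hR0.le, Real.mul_rpow (by norm_num) hδ.le]
  have : δ ^ ((n : ℝ) - 2 * α) = δ ^ n * δ ^ n / δ ^ ((n : ℝ) + 2 * α) := by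
    rw [← Real.rpow_natCast, ← Real.rpow_add hδ, ← Real.rpow_sub hδ]; ring_nf
  rw [this, div_pow, inv_pow]
  have := (Real.rpow_pos_of_pos hδ ((n : ℝ) + 2 * α)).ne'
  have := (Real.rpow_pos_of_pos four_pos ((n : ℝ) + 2 * α)).ne'
  field_simp

lemma tent_osc (hF : (F : Set (Pt n)).Pairwise fun x y => 1 ≤ dist x y) (hε : 0 < ε)
    (hε1 : ε ≤ 1 / 4) {e x : Pt n} (he : e ∈ F) (h1 : ε ≤ dist x e) (h2 : dist x e ≤ 3 / 4) :
    tent F ε x = 0 := by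
  refine tent_eq_zero ⟨e, he⟩ hε fun e' he' => ?_
  rcases eq_or_ne e' e with rfl | hne
  · exact h1
  · have := hF he' he hne
    have := dist_triangle_left e' e x
    linarith

lemma dist_stretch_near (hsep : E.Pairwise fun x y => 1 ≤ dist x y) {e x : Pt n} (he : e ∈ E)
    (hx : dist x e ≤ 1 / 4) : dist (stretch E x) e = 4 * dist x e ^ 2 := by
  rw [stretch_near hsep he hx, dist_eq_norm, add_sub_cancel_left, norm_smul, ← dist_eq_norm,
    Real.norm_of_nonneg (by positivity)]
  ring

/-- Composition with the stretch along a regular lattice set is unbounded on `Q_α`. -/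
lemma exists_tent (hn : 2 ≤ n) (hα₀ : 0 < α₀) (hα : α₀ < α) (hα1 : α < 1)
    (hE : IsRegularLattice E ((n : ℝ) - 2 * α₀) K k) (hk : 0 < k) {C : ℝ} (hC : 0 < C) :
    ∃ u : Pt n → ℝ, MemQ α u ∧ 0 < Qnorm α u ∧
      ENNReal.ofReal C * Qnorm α u < Qnorm α (u ∘ stretch E) := by
  have hn' : (2 : ℝ) ≤ n := by exact_mod_cast hn
  have hsep := int_sep hE.int
  set d := α - α₀ with hd
  set q := (n : ℝ) - 2 * α with hq
  have hd0 : 0 < d := by linarith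
  have hq0 : 0 < q := by linarith
  set A : ℝ≥0∞ := ENNReal.ofReal (2 * (K * 2 ^ ((n : ℝ) - 2 * α₀)) + 4) *
      (volume (ball (0 : Pt n) 1) * kerMass n α) with hA
  have hAtop : A ≠ ⊤ := ENNReal.mul_ne_top ENNReal.ofReal_ne_top
    (ENNReal.mul_ne_top measure_ball_lt_top.ne (kerMass_lt_top hn (by linarith) hα1).ne)
  set w := (volume (ball (0 : Pt n) 1)).toReal with hw
  have hw0 : 0 < w := ENNReal.toReal_pos (measure_ball_pos _ _ one_pos).ne' measure_ball_lt_top.ne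
  have hwω : volume (ball (0 : Pt n) 1) = ENNReal.ofReal w :=
    (ENNReal.ofReal_toReal measure_ball_lt_top.ne).symm
  set c₁ : ℝ := 2⁻¹ ^ n * (4⁻¹ / 4 ^ ((n : ℝ) + 2 * α)) * 2 ^ (2 * α - (n : ℝ)) with hc₁
  have hc₁0 : 0 < c₁ := by positivity
  set c₂ : ℝ := c₁ * (k / ((n : ℝ) + 1) ^ ((n : ℝ) - 2 * α₀) * 2⁻¹ ^ q) * w ^ 2 with hc₂
  have hc₂0 : 0 < c₂ := by positivity
  have hRlim : Tendsto (fun b : ℕ => ((n : ℝ) + 1) * 2 ^ b) atTop atTop :=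
    (tendsto_pow_atTop_atTop_of_one_lt (one_lt_two (α := ℝ))).const_mul_atTop (by positivity)
  have hlim1 := ((_root_.tendsto_rpow_atTop hd0).comp hRlim).const_mul_atTop hc₂0
  have hlim2 := (tendsto_rpow_neg_atTop (y := 2 * d / q) (by positivity)).comp hRlim
  obtain ⟨b, hb1, hb2⟩ := ((hlim1.eventually_gt_atTop (C ^ 2 * A.toReal)).and
    (hlim2.eventually_lt_const (by norm_num : (0 : ℝ) < 1 / 36))).exists
  simp only [Function.comp_apply] at hb1 hb2
  set R : ℝ := ((n : ℝ) + 1) * 2 ^ b with hR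
  have hR1 : 1 ≤ R := by
    have : (1 : ℝ) ≤ 2 ^ b := one_le_pow₀ (by norm_num)
    nlinarith
  have hR0 : 0 < R := by linarith
  set ε : ℝ := R ^ (-(2 * d / q)) with hε
  have hε0 : 0 < ε := by positivity
  obtain ⟨F, hF1, hF2⟩ := hE.many b
  have hFsep : (F : Set (Pt n)).Pairwise fun x y => 1 ≤ dist x y :=
    hsep.mono (hF1.trans inter_subset_left)
  have hFcard : (0 : ℝ) < F.card := lt_of_lt_of_le (by positivity) hF2
  have hFne : F.Nonempty := Finset.card_pos.1 (by exact_mod_cast hFcard)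
  have hεq : ε ^ q = R ^ (-(2 * d)) := by
    rw [hε, ← Real.rpow_mul hR0.le]
    congr 1
    field_simp
  have hup : Qnorm α (tent F ε) ≤ A ^ (1 / 2 : ℝ) := by
    refine Qnorm_tent_le hn hα₀ hα hα1 hE hFne hR1 hF1 hε0 (by linarith) ?_
    rw [← hq, hεq, ← Real.rpow_add hR0, ← hd, add_neg_cancel, Real.rpow_zero]
  have hFR : (F : Set (Pt n)) ⊆ ball 0 R := hF1.trans inter_subset_right
  refine ⟨tent F ε, ⟨?_, hup.trans_lt ?_⟩, ?_, ?_⟩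
  · have : Continuous (tent F ε) := continuous_tent
    exact Continuous.locallyIntegrable (by fun_prop)
  · exact ENNReal.rpow_lt_top_of_nonneg (by norm_num) hAtop
  · refine lt_of_lt_of_le ?_ (le_Qnorm_of_osc hn (by linarith) hε0 (by linarith) hFsep hR1 hFR
      (fun e he x hx => half_le_tent hε0 he hx)
      (fun e he x h1 h2 => tent_osc hFsep hε0 (by linarith) he h1 (by linarith)))
    refine ENNReal.rpow_pos_of_nonneg (ENNReal.mul_pos ?_ ?_) (by norm_num)
    · rw [Ne, ENNReal.ofReal_eq_zero, not_le]
      exact mul_pos hc₁0 (mul_pos (mul_pos (Real.rpow_pos_of_pos hR0 _) hFcard)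
        (Real.rpow_pos_of_pos hε0 _))
    · exact pow_ne_zero _ (measure_ball_pos _ _ one_pos).ne'
  · -- Near `e` the stretch is `|f(x) - e| = 4|x - e|²`, so the bumps of `u ∘ f` have radius `√ε/2`.
    set δ : ℝ := Real.sqrt ε / 2 with hδ
    have hδ0 : 0 < δ := by positivity
    have hδ2 : 4 * δ ^ 2 = ε := by
      rw [hδ, div_pow, Real.sq_sqrt hε0.le]; ring
    have hδ1 : δ ≤ 1 / 12 := by nlinarith
    have hlow := le_Qnorm_of_osc (α := α) (v := tent F ε ∘ stretch E) hn (by linarith) hδ0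
      (by linarith) hFsep hR1 hFR
      (fun e he x hx => by
        refine half_le_tent hε0 he ?_
        rw [dist_stretch_near hsep (hF1 he).1 (by linarith)]
        have := pow_le_pow_left₀ dist_nonneg hx 2
        nlinarith)
      (fun e he x h1 h2 => by
        have hx : dist x e ≤ 1 / 4 := by linarith
        have h3 := dist_stretch_near hsep (hF1 he).1 hx
        refine tent_osc hFsep hε0 (by linarith) he ?_ ?_
        · rw [h3]
          have := pow_le_pow_left₀ hδ0.le h1 2
          linarith
        · rw [h3]
          have := pow_le_pow_left₀ dist_nonneg hx 2
          linarith)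
    refine lt_of_lt_of_le ?_ hlow
    have hCA : ENNReal.ofReal C * A ^ (1 / 2 : ℝ) =
        (ENNReal.ofReal (C ^ 2 * A.toReal)) ^ (1 / 2 : ℝ) := by
      rw [ENNReal.ofReal_mul (by positivity), ENNReal.ofReal_toReal hAtop,
        ENNReal.mul_rpow_of_nonneg (ENNReal.ofReal (C ^ 2)) A (by norm_num),
        ENNReal.ofReal_pow hC.le, ← ENNReal.rpow_natCast, ← ENNReal.rpow_mul]
      norm_num
    refine (mul_le_mul_right hup _).trans_lt ?_
    have hpos : 0 < c₁ * (R ^ (2 * α - (n : ℝ)) * F.card * δ ^ q) :=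
      mul_pos hc₁0 (mul_pos (mul_pos (Real.rpow_pos_of_pos hR0 _) hFcard)
        (Real.rpow_pos_of_pos hδ0 _))
    rw [hCA, hwω, ← ENNReal.ofReal_pow hw0.le, ← ENNReal.ofReal_mul hpos.le]
    refine ENNReal.rpow_lt_rpow ?_ (by norm_num)
    rw [ENNReal.ofReal_lt_ofReal_iff (mul_pos hpos (pow_pos hw0 2))]
    refine hb1.trans_le ?_
    have hδq : δ ^ q = 2⁻¹ ^ q * R ^ (-d) := by
      rw [hδ, div_eq_mul_inv, mul_comm, Real.mul_rpow (by norm_num) (Real.sqrt_nonneg _),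
        Real.sqrt_eq_rpow, ← Real.rpow_mul hε0.le, mul_comm (1 / 2 : ℝ), Real.rpow_mul hε0.le, hεq,
        ← Real.rpow_mul hR0.le]
      congr 2
      ring
    have h2b : ((2 : ℝ) ^ b) ^ ((n : ℝ) - 2 * α₀) =
        R ^ ((n : ℝ) - 2 * α₀) / ((n : ℝ) + 1) ^ ((n : ℝ) - 2 * α₀) := by
      rw [← Real.div_rpow hR0.le (by positivity), hR, mul_div_cancel_left₀ _ (by positivity)]
    rw [h2b] at hF2
    have hRR : R ^ d = R ^ (2 * α - (n : ℝ)) * R ^ ((n : ℝ) - 2 * α₀) * R ^ (-d) := by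
      rw [← Real.rpow_add hR0, ← Real.rpow_add hR0, hd]
      congr 1
      ring
    calc c₂ * R ^ d = c₁ * (R ^ (2 * α - (n : ℝ)) *
          (k * (R ^ ((n : ℝ) - 2 * α₀) / ((n : ℝ) + 1) ^ ((n : ℝ) - 2 * α₀))) *
          (2⁻¹ ^ q * R ^ (-d))) * w ^ 2 := by
          rw [hc₂, hRR]; ring
      _ ≤ _ := by
          rw [hδq]
          gcongr

end norms

/-- Theorem 1.6: for `n ≥ 2` and `α₀ ∈ (0,1)` there exist an unbounded set
`E ⊂ ℤⁿ` with `dim_LG E = n - 2α₀` but `dim_L E = 0`, and a Lipschitz quasisymmetric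
homeomorphism `f` of `ℝⁿ` with `J_f ∈ A₁(ℝⁿ; closure E)`, such that `u ↦ u ∘ f` is
unbounded on `Q_α(ℝⁿ)` for every `α ∈ (α₀, 1)`. -/
theorem exists_unbounded_counterexample (n : ℕ) (hn : 2 ≤ n) (α₀ : ℝ)
    (hα₀ : α₀ ∈ Ioo (0:ℝ) 1) :
    ∃ E : Set (Pt n), (∀ x ∈ E, ∀ i, ∃ m : ℤ, x i = (m : ℝ)) ∧
      ¬ Bornology.IsBounded E ∧
      dimGlob E = (n : ℝ) - 2 * α₀ ∧ dimLoc E = 0 ∧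
      ∃ f : Pt n ≃ₜ Pt n,
        (∃ K : ℝ≥0, LipschitzWith K (⇑f)) ∧
        (∃ η : ℝ≥0 ≃o ℝ≥0, IsQS (⇑f) η) ∧
        ∃ Jf : Pt n → ℝ, JacobianCOV (⇑f) Jf ∧ MemA1 Jf (closure E) ∧
          ∀ α ∈ Ioo α₀ (1:ℝ), ∀ C > (0:ℝ), ∃ u : Pt n → ℝ, MemQ α u ∧
            0 < Qnorm α u ∧
            ENNReal.ofReal C * Qnorm α u < Qnorm α (u ∘ ⇑f) := by
  have hn' : (2 : ℝ) ≤ n := by exact_mod_cast hn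
  obtain ⟨h0, h1⟩ := hα₀
  have hreg := latticeSet_regular n (σ := ((n : ℝ) - 2 * α₀) / n)
    (by rw [div_le_one (by positivity)]; linarith) (div_nonneg (by linarith) (by positivity))
  rw [mul_div_cancel₀ _ (by positivity : (n : ℝ) ≠ 0)] at hreg
  have hs : 0 < (n : ℝ) - 2 * α₀ := by linarith
  have hub := regular_unbounded hreg hs (by positivity)
  have hsep := int_sep hreg.int
  have hne : (latticeSet n (((n : ℝ) - 2 * α₀) / n)).Nonempty :=
    nonempty_iff_ne_empty.2 fun h => hub (h ▸ Bornology.isBounded_empty)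
  refine ⟨_, hreg.int, hub, dimGlob_eq hreg hs.le (one_le_pow₀ (by norm_num)) (by positivity),
    dimLoc_eq hreg hs.le (one_le_pow₀ (by norm_num)), stretchHomeo _ hsep hne, ⟨8, ?_⟩, ⟨etaIso, ?_⟩, jac _,
    ?_, jac_memA1 hne, fun α hα C hC => ?_⟩
  · exact stretch_lipschitz hsep hne
  · exact stretch_isQS hsep hne
  · exact stretch_jacobianCOV hn hsep hne (int_countable hreg.int)
  · exact exists_tent hn h0 hα.1 hα.2 hreg (by positivity) hC

end
end

section
/- Let n ≥ 2, α ∈ (0,1), and let f : ℝⁿ → ℝⁿ be a homeomorphism that is η-quasisymmetric for some homeomorphism η : [0,∞) → [0,∞); assume f and f⁻¹ are differentiable almost everywhere with Jacobians J_f = |det Df| and J_{f⁻¹} = |det D(f⁻¹)| satisfying the change-of-variables formula ∫ g(f(x)) J_f(x) dx = ∫ g(y) dy and ∫ g(f⁻¹(x)) J_{f⁻¹}(x) dx = ∫ g(y) dy for every nonnegative measurable g, and J_f ∈ A_1(ℝⁿ; E) for some closed set E ⊆ ℝⁿ. Then there exists a constant C > 0 such that for every ball B(x₀,r) with dist(x₀,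 E) ≥ 4r and every u ∈ Q_α(ℝⁿ), one has Ψ_{α,2}(u∘f, B(x₀,r)) ≤ C ‖u‖²_{Q_α}. -/
/-!
Write `U = u ∘ f`. In `Ψ_{α,2}(U, B(x₀,r))` each infimum over constants `c` is at most the average
over the choices `c = U w`, with `w` in the same ball. Integrating out the centres and summing over
the scales bounds `Ψ_{α,2}(U, B(x₀,r))` by the double integral over `B(x₀,2r)` of `|U a - U b|²`
against a kernel of size `r^{2α-n} |a-b|^{-n-2α}`, supported in `|a-b| < 2r`
(`Psi_le_lintegral`, `scaleKernel_le`).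

All balls involved are admissible for the local `A₁` condition because `dist(x₀,E) ≥ 4r`. At
Lebesgue points of the Jacobian this condition, together with quasisymmetry, gives (up to constants)
`|f a - f b|ⁿ ≤ |a-b|ⁿ J(a)`, the same with `J(b)`, and `Rⁿ ≤ rⁿ J(b)`, where `B(f x₀, R)` is a
ball containing `f (B(x₀,2r))` (`exists_jacobian_lower_bound`). Since `2α < n`, the two bounds for
`J(b)` can be interpolated (`jacobian_interpolation`), so that
`r^{2α-n} |a-b|^{-n-2α} ≤ C R^{2α-n} |f a - f b|^{-n-2α} J(a) J(b)`.
The change of variables turns the right-hand side into the `Q_α`-energy of `u` on `B(f x₀, R)`.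

Membership in `Q_α`, as encoded by `MemQ`, makes only `|u|²` measurable, up to null sets, and `∫⁻`
of a non-measurable function is its lower integral, for which Tonelli's theorem fails. The lemma
`exists_measurable_surrogate` therefore replaces `|U w - U z|²` by a measurable function. The change
of variables, on the other hand, holds for lower integrals as well (`JacobianCOV.lintegral_eq`).
-/

open MeasureTheory Metric Filter Set ENNReal NNReal

noncomputable section

/-! ### Non-measurable integrands -/

/-- A measurable minorant `g` of `φ`, where `φ` agrees on `A` with a measurable `G`, satisfies
`g ≤ G` almost everywhere on the measurable hull of `A`, and not only on `A`. -/
lemma ae_le_on_toMeasurable {X : Type*} [MeasurableSpace X] (μ : Measure X) [SFinite μ]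
    (A : Set X) (g G φ : X → ℝ≥0∞) (hg : Measurable g) (hG : Measurable G) (hgφ : g ≤ φ)
    (hA : ∀ z ∈ A, φ z = G z) :
    ∀ᵐ z ∂μ, z ∈ toMeasurable μ A → g z ≤ G z := by
  have hS : MeasurableSet {z | G z < g z} := measurableSet_lt hG hg
  have h0 : μ (toMeasurable μ A ∩ {z | G z < g z}) = 0 := by
    rw [Measure.measure_toMeasurable_inter_of_sFinite hS]
    have : A ∩ {z | G z < g z} = ∅ := by
      ext z
      simp only [mem_inter_iff, mem_ofPred_eq, mem_empty_iff_false, iff_false, not_and, not_lt]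
      intro hz
      exact (hgφ z).trans (hA z hz).le
    rw [this, measure_empty]
  have := measure_eq_zero_iff_ae_notMem.1 h0
  filter_upwards [this] with z hz hzA
  by_contra hlt
  exact hz ⟨hzA, not_le.1 hlt⟩

/-- A measurable replacement `T w z` for `|U w - U z|²` when only `|U|` is known to be measurable.
It is large enough to dominate the mean oscillations of `U` on all measurable sets `B`, and its
energy against the kernel `K` does not exceed that of `U`. As `U` is determined up to sign by a
measurable function `v`, one takes `T w z = d (V w) z`, with `d c z` the smallest value of
`|±v z - c|²` over the signs that `U` attains near `z` in the measure sense, and with the sign of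
`V = ±v` chosen measurably so as to minimise the energy. -/
lemma exists_measurable_surrogate {X : Type*} [MeasurableSpace X] (μ : Measure X) [SFinite μ]
    (U : X → ℝ) (hU : AEMeasurable (fun x => |U x|) μ) (K : X → X → ℝ≥0∞)
    (hK : Measurable (Function.uncurry K)) :
    ∃ T : X → X → ℝ≥0∞, Measurable (Function.uncurry T) ∧
      (∀ B, MeasurableSet B → (⨅ c : ℝ, ∫⁻ z in B, ENNReal.ofReal (|U z - c| ^ 2) ∂μ) * μ B ≤
        ∫⁻ w in B, ∫⁻ z in B, T w z ∂μ ∂μ) ∧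
      ∫⁻ w, ∫⁻ z, T w z * K w z ∂μ ∂μ ≤
        ∫⁻ w, ∫⁻ z, ENNReal.ofReal (|U w - U z| ^ 2) * K w z ∂μ ∂μ := by
  classical
  obtain ⟨v, hv, hUv⟩ := hU
  set A : Set X := {z | U z = v z} with hA
  set A' : Set X := {z | U z = - v z} with hA'
  have hAA : ∀ᵐ z ∂μ, z ∈ A ∨ z ∈ A' := by
    filter_upwards [hUv] with z hz
    rcases abs_choice (U z) with h | h
    · left; exact (h.symm.trans hz)
    · right
      have : -U z = v z := h.symm.trans hz
      simp only [hA', mem_ofPred_eq]; linarith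
  set TA := toMeasurable μ A with hTA
  set TB := toMeasurable μ A' with hTB
  have mTA : MeasurableSet TA := measurableSet_toMeasurable _ _
  have mTB : MeasurableSet TB := measurableSet_toMeasurable _ _
  have sTA : A ⊆ TA := subset_toMeasurable _ _
  have sTB : A' ⊆ TB := subset_toMeasurable _ _
  -- Up to null sets, `d c` is the largest measurable minorant of `|U - c|²`.
  obtain ⟨d, hd_def⟩ : ∃ d : ℝ → X → ℝ≥0∞, d = fun c z =>
    min (if z ∈ TA then ENNReal.ofReal (|v z - c| ^ 2) else ⊤)
      (if z ∈ TB then ENNReal.ofReal (|-v z - c| ^ 2) else ⊤) := ⟨_, rfl⟩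
  have hd : Measurable (fun p : ℝ × X => d p.1 p.2) := by
    rw [hd_def]
    refine Measurable.min ?_ ?_
    · exact Measurable.ite (measurable_snd mTA) (by fun_prop) measurable_const
    · exact Measurable.ite (measurable_snd mTB) (by fun_prop) measurable_const
  have hd_le : ∀ c : ℝ, ∀ᵐ z ∂μ, d c z ≤ ENNReal.ofReal (|U z - c| ^ 2) := by
    intro c
    rw [hd_def]
    filter_upwards [hAA] with z hz
    rcases hz with hz | hz
    · refine (min_le_left _ _).trans ?_
      rw [if_pos (sTA hz), show U z = v z from hz]
    · refine (min_le_right _ _).trans ?_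
      rw [if_pos (sTB hz), show U z = - v z from hz]
  obtain ⟨F, hF_def⟩ : ∃ F : ℝ → X → ℝ≥0∞, ∀ c a, F c a = ∫⁻ z, d c z * K a z ∂μ :=
    ⟨_, fun _ _ => rfl⟩
  have hF : Measurable (fun p : ℝ × X => F p.1 p.2) := by
    have : Measurable (fun q : (ℝ × X) × X => d q.1.1 q.2 * K q.1.2 q.2) := by
      refine Measurable.mul ?_ ?_
      · exact hd.comp (by fun_prop : Measurable (fun q : (ℝ × X) × X => (q.1.1, q.2)))
      · exact hK.comp (by fun_prop : Measurable (fun q : (ℝ × X) × X => (q.1.2, q.2)))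
    simp only [hF_def]
    exact this.lintegral_prod_right'
  -- `S` is the set where the sign `+` is chosen: it must be allowed at `a`, and either the sign `-`
  -- is not allowed there or it gives the larger energy.
  let S : Set X := TA ∩ (TBᶜ ∪ {a | F (v a) a ≤ F (-v a) a})
  have hS : MeasurableSet S := by
    have h1 : Measurable (fun a => F (v a) a) :=
      hF.comp (by fun_prop : Measurable (fun a => (v a, a)))
    have h2 : Measurable (fun a => F (-v a) a) :=
      hF.comp (by fun_prop : Measurable (fun a => (-v a, a)))
    exact mTA.inter (mTB.compl.union (measurableSet_le h1 h2))
  let V : X → ℝ := fun a => if a ∈ S then v a else - v a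
  have hV : Measurable V := Measurable.ite hS hv hv.neg
  refine ⟨fun w z => d (V w) z, ?_, ?_, ?_⟩
  · exact hd.comp (by fun_prop : Measurable (fun q : X × X => (V q.1, q.2)))
  · intro B hB
    have key : ∀ c : ℝ, ∫⁻ z in B, ENNReal.ofReal (|U z - c| ^ 2) ∂μ ≤ ∫⁻ z in B, d c z ∂μ := by
      intro c
      obtain ⟨g, hg, hgle, hgeq⟩ := exists_measurable_le_lintegral_eq (μ.restrict B)
        (fun z => ENNReal.ofReal (|U z - c| ^ 2))
      rw [hgeq]
      refine lintegral_mono_ae (ae_restrict_of_ae ?_)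
      filter_upwards [ae_le_on_toMeasurable μ A g
          (fun z => ENNReal.ofReal (|v z - c| ^ 2)) _ hg (by fun_prop) hgle
          (fun z hz => by rw [show U z = v z from hz]),
        ae_le_on_toMeasurable μ A' g
          (fun z => ENNReal.ofReal (|-v z - c| ^ 2)) _ hg (by fun_prop) hgle
          (fun z hz => by rw [show U z = -v z from hz])] with z h1 h2
      rw [hd_def]
      refine le_min ?_ ?_
      · split_ifs with h
        · exact h1 h
        · exact le_top
      · split_ifs with h
        · exact h2 h
        · exact le_top
    rw [← setLIntegral_const]
    exact lintegral_mono fun w => (iInf_le _ (V w)).trans (key (V w))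
  · refine lintegral_mono_ae ?_
    filter_upwards [hAA] with w hw
    have h1 : F (V w) w ≤ F (U w) w := by
      rcases hw with hw | hw
      · rw [show U w = v w from hw]
        by_cases hwS : w ∈ S
        · simp only [V, if_pos hwS]; exact le_rfl
        · simp only [V, if_neg hwS]
          have : ¬ (F (v w) w ≤ F (-v w) w) := fun h => hwS ⟨sTA hw, Or.inr h⟩
          exact (not_le.1 this).le
      · rw [show U w = - v w from hw]
        by_cases hwS : w ∈ S
        · simp only [V, if_pos hwS]
          rcases hwS.2 with h | h
          · exact absurd (sTB hw) h
          · exact h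
        · simp only [V, if_neg hwS]; exact le_rfl
    rw [hF_def, hF_def] at h1
    refine h1.trans (lintegral_mono_ae ?_)
    filter_upwards [hd_le (U w)] with z hz
    rw [abs_sub_comm (U w)]
    gcongr

/-! ### The energy functional and its kernel -/

/-- The kernel `Σ_k 2^{2kα} |B_r|⁻¹ |B_{2⁻ᵏr}|⁻¹ 1[|a-b| < 2·2⁻ᵏr]`, obtained when the sum over
scales and the integral over centres in `Ψ_{α,2}` are carried out for a fixed pair `(a, b)`.
It is comparable to `r^{2α-n} |a-b|^{-n-2α}` for `|a-b| < 2r` and vanishes for `|a-b| ≥ 2r`. -/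
def scaleKernel {n : ℕ} (α r : ℝ) (a b : Pt n) : ℝ≥0∞ :=
  ∑' k : ℕ, if dist a b < 2 * ((2:ℝ) ^ (-(k:ℝ)) * r) then
    ENNReal.ofReal ((2:ℝ) ^ (2 * (k:ℝ) * α)) * ((volume (ball (0 : Pt n) r))⁻¹ *
      (volume (ball (0 : Pt n) ((2:ℝ) ^ (-(k:ℝ)) * r)))⁻¹) else 0

lemma measurable_scaleKernel {n : ℕ} (α r : ℝ) :
    Measurable (Function.uncurry (scaleKernel (n := n) α r)) := by
  unfold scaleKernel Function.uncurry
  refine Measurable.tsum fun k => ?_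
  refine Measurable.ite ?_ measurable_const measurable_const
  exact measurableSet_lt (by fun_prop) measurable_const

/-- Tonelli in the centre `x`: two points `w, z` lie in a common ball `B(x, ρ)` only if
`|w - z| < 2ρ`, and then for a set of centres of measure at most `|B(0, ρ)|`. -/
lemma lintegral_centres_le {n : ℕ} (x₀ : Pt n) (r ρ : ℝ) (hρ : ρ ≤ r)
    (T : Pt n → Pt n → ℝ≥0∞) (hT : Measurable (Function.uncurry T)) :
    ∫⁻ x in ball x₀ r, ∫⁻ w in ball x ρ, ∫⁻ z in ball x ρ, T w z ≤
      ∫⁻ w in ball x₀ (2 * r), ∫⁻ z in ball x₀ (2 * r),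
        T w z * (if dist w z < 2 * ρ then volume (ball (0 : Pt n) ρ) else 0) := by
  classical
  set D := ball x₀ (2 * r) with hD
  obtain ⟨G, hG_def⟩ : ∃ G : Pt n → Pt n → Pt n → ℝ≥0∞, ∀ x w z, G x w z =
    if dist w x < ρ ∧ dist z x < ρ then T w z else 0 := ⟨_, fun _ _ _ => rfl⟩
  have hG : Measurable (fun q : Pt n × Pt n × Pt n => G q.1 q.2.1 q.2.2) := by
    simp only [hG_def]
    refine Measurable.ite ?_ ?_ measurable_const
    · have h1 : MeasurableSet {q : Pt n × Pt n × Pt n | dist q.2.1 q.1 < ρ} :=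
        measurableSet_lt (by fun_prop) measurable_const
      have h2 : MeasurableSet {q : Pt n × Pt n × Pt n | dist q.2.2 q.1 < ρ} :=
        measurableSet_lt (by fun_prop) measurable_const
      exact h1.inter h2
    · exact hT.comp (by fun_prop : Measurable (fun q : Pt n × Pt n × Pt n => (q.2.1, q.2.2)))
  have h1 : ∀ x ∈ ball x₀ r, ∫⁻ w in ball x ρ, ∫⁻ z in ball x ρ, T w z ≤
      ∫⁻ w in D, ∫⁻ z in D, G x w z := by
    intro x hx
    have hsub : ball x ρ ⊆ D := by
      refine ball_subset_ball' ?_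
      have := mem_ball.1 hx
      linarith
    refine le_trans ?_ (lintegral_mono_set hsub)
    refine setLIntegral_mono' measurableSet_ball fun w hw => ?_
    refine le_trans ?_ (lintegral_mono_set hsub)
    refine setLIntegral_mono' measurableSet_ball fun z hz => ?_
    simp only [hG_def, if_pos (And.intro (mem_ball.1 hw) (mem_ball.1 hz)), le_refl]
  calc ∫⁻ x in ball x₀ r, ∫⁻ w in ball x ρ, ∫⁻ z in ball x ρ, T w z
      ≤ ∫⁻ x in ball x₀ r, ∫⁻ w in D, ∫⁻ z in D, G x w z :=
        setLIntegral_mono' measurableSet_ball h1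
    _ = ∫⁻ w in D, ∫⁻ x in ball x₀ r, ∫⁻ z in D, G x w z := by
        refine lintegral_lintegral_swap ?_
        have : Measurable (fun q : (Pt n × Pt n) × Pt n => G q.1.1 q.1.2 q.2) :=
          hG.comp (by fun_prop : Measurable
            (fun q : (Pt n × Pt n) × Pt n => (q.1.1, q.1.2, q.2)))
        have h2 : Measurable (fun q : Pt n × Pt n => ∫⁻ z in D, G q.1 q.2 z) :=
          this.lintegral_prod_right'
        exact h2.aemeasurable
    _ = ∫⁻ w in D, ∫⁻ z in D, ∫⁻ x in ball x₀ r, G x w z := by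
        refine lintegral_congr fun w => lintegral_lintegral_swap ?_
        exact (hG.comp (by fun_prop : Measurable
            (fun q : Pt n × Pt n => (q.1, w, q.2)))).aemeasurable
    _ ≤ _ := by
        refine lintegral_mono fun w => lintegral_mono fun z => ?_
        split_ifs with hwz
        · calc ∫⁻ x in ball x₀ r, G x w z ≤ ∫⁻ x, G x w z := setLIntegral_le_lintegral _ _
            _ ≤ ∫⁻ x, (ball w ρ).indicator (fun _ => T w z) x := by
              refine lintegral_mono fun x => ?_
              by_cases h : dist w x < ρ ∧ dist z x < ρ
              · simp only [hG_def, if_pos h]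
                rw [indicator_of_mem]
                rw [mem_ball, dist_comm]; exact h.1
              · simp only [hG_def, if_neg h]; exact zero_le
            _ = T w z * volume (ball (0 : Pt n) ρ) := by
              rw [lintegral_indicator_const measurableSet_ball, Measure.addHaar_ball_center]
        · rw [mul_zero]
          refine le_of_eq ?_
          rw [← lintegral_zero (μ := volume.restrict (ball x₀ r))]
          refine lintegral_congr fun x => ?_
          simp only [hG_def]
          rw [if_neg]
          rintro ⟨h1, h2⟩
          have := dist_triangle_right w z x
          linarith

/-- `Ψ_{α,2}` is dominated by a double integral over `B(x₀, 2r)`: each infimum over `c` is at most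
the average over `c = U w`, and the centres and scales are then integrated out. -/
lemma Psi_le_lintegral {n : ℕ} (α : ℝ) (x₀ : Pt n) (r : ℝ) (hr : 0 < r) (U : Pt n → ℝ)
    (hU : AEMeasurable (fun x => |U x|) volume) :
    Psi α 2 U x₀ r ≤ ∫⁻ w in ball x₀ (2 * r), ∫⁻ z in ball x₀ (2 * r),
      ENNReal.ofReal (|U w - U z| ^ 2) * scaleKernel α r w z := by
  set D := ball x₀ (2 * r) with hD
  obtain ⟨T, hT, hTa, hTb⟩ := exists_measurable_surrogate (volume.restrict D) U hU.restrict
    (scaleKernel α r) (measurable_scaleKernel α r)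
  refine le_trans ?_ hTb
  let V : ℕ → ℝ≥0∞ := fun k => volume (ball (0 : Pt n) ((2:ℝ) ^ (-(k:ℝ)) * r))
  have hρpos : ∀ k : ℕ, 0 < (2:ℝ) ^ (-(k:ℝ)) * r := fun k => by positivity
  have hρle : ∀ k : ℕ, (2:ℝ) ^ (-(k:ℝ)) * r ≤ r := fun k => by
    have : (2:ℝ) ^ (-(k:ℝ)) ≤ 1 := Real.rpow_le_one_of_one_le_of_nonpos (by norm_num) (by simp)
    nlinarith
  have hV0 : ∀ k, V k ≠ 0 := fun k => (measure_ball_pos _ _ (hρpos k)).ne'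
  have hVt : ∀ k, V k ≠ ⊤ := fun k => measure_ball_lt_top.ne
  have hinner : ∀ k : ℕ, ∀ x ∈ ball x₀ r,
      (⨅ c : ℝ, ((volume (ball x ((2:ℝ) ^ (-(k:ℝ)) * r)))⁻¹ *
        ∫⁻ z in ball x ((2:ℝ) ^ (-(k:ℝ)) * r), ENNReal.ofReal (|U z - c| ^ (2:ℝ))) ^ (2 / 2 : ℝ))
      ≤ (V k)⁻¹ * (V k)⁻¹ * ∫⁻ w in ball x ((2:ℝ) ^ (-(k:ℝ)) * r),
          ∫⁻ z in ball x ((2:ℝ) ^ (-(k:ℝ)) * r), T w z := by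
    intro k x hx
    set ρ := (2:ℝ) ^ (-(k:ℝ)) * r with hρ
    have hsub : ball x ρ ⊆ D := by
      refine ball_subset_ball' ?_
      have := mem_ball.1 hx
      have := hρle k
      linarith
    have hvol : volume (ball x ρ) = V k := Measure.addHaar_ball_center _ _ _
    have h := hTa (ball x ρ) measurableSet_ball
    rw [Measure.restrict_restrict_of_subset hsub, Measure.restrict_apply measurableSet_ball,
      inter_eq_self_of_subset_left hsub, hvol] at h
    have e : ∀ c : ℝ, ((volume (ball x ρ))⁻¹ *
        ∫⁻ z in ball x ρ, ENNReal.ofReal (|U z - c| ^ (2:ℝ))) ^ (2 / 2 : ℝ) =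
        (V k)⁻¹ * ∫⁻ z in ball x ρ, ENNReal.ofReal (|U z - c| ^ 2) := by
      intro c
      rw [div_self two_ne_zero, ENNReal.rpow_one, hvol]
      simp only [Real.rpow_two]
    simp only [e]
    rw [← ENNReal.mul_iInf_of_ne (ENNReal.inv_ne_zero.2 (hVt k)) (ENNReal.inv_ne_top.2 (hV0 k)),
      mul_assoc]
    gcongr
    rw [← ENNReal.div_eq_inv_mul]
    exact (ENNReal.le_div_iff_mul_le (Or.inl (hV0 k)) (Or.inl (hVt k))).2 h
  have hk : ∀ k : ℕ, ENNReal.ofReal ((2:ℝ) ^ (2 * (k:ℝ) * α)) *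
    ((volume (ball x₀ r))⁻¹ * ∫⁻ x in ball x₀ r,
      ⨅ c : ℝ, ((volume (ball x ((2:ℝ) ^ (-(k:ℝ)) * r)))⁻¹ *
        ∫⁻ z in ball x ((2:ℝ) ^ (-(k:ℝ)) * r), ENNReal.ofReal (|U z - c| ^ (2:ℝ))) ^ (2 / 2 : ℝ))
      ≤ ∫⁻ w in D, ∫⁻ z in D, T w z *
        (if dist w z < 2 * ((2:ℝ) ^ (-(k:ℝ)) * r) then
          ENNReal.ofReal ((2:ℝ) ^ (2 * (k:ℝ) * α)) * ((volume (ball (0 : Pt n) r))⁻¹ *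
          (V k)⁻¹) else 0) := by
    intro k
    set ρ := (2:ℝ) ^ (-(k:ℝ)) * r with hρ
    have hmG : Measurable (fun q : Pt n × Pt n => T q.1 q.2 *
        (if dist q.1 q.2 < 2 * ρ then V k else 0)) := by
      refine Measurable.mul hT (Measurable.ite ?_ measurable_const measurable_const)
      exact measurableSet_lt (by fun_prop) measurable_const
    calc _ ≤ ENNReal.ofReal ((2:ℝ) ^ (2 * (k:ℝ) * α)) * ((volume (ball x₀ r))⁻¹ *
          ∫⁻ x in ball x₀ r, (V k)⁻¹ * (V k)⁻¹ * ∫⁻ w in ball x ρ, ∫⁻ z in ball x ρ, T w z) := by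
          refine mul_le_mul_right (mul_le_mul_right ?_ _) _
          exact setLIntegral_mono' measurableSet_ball (hinner k)
      _ = ENNReal.ofReal ((2:ℝ) ^ (2 * (k:ℝ) * α)) * ((volume (ball x₀ r))⁻¹ *
          ((V k)⁻¹ * (V k)⁻¹ * ∫⁻ x in ball x₀ r, ∫⁻ w in ball x ρ, ∫⁻ z in ball x ρ, T w z)) := by
          rw [lintegral_const_mul' _ _
            (ENNReal.mul_ne_top (ENNReal.inv_ne_top.2 (hV0 k)) (ENNReal.inv_ne_top.2 (hV0 k)))]
      _ ≤ ENNReal.ofReal ((2:ℝ) ^ (2 * (k:ℝ) * α)) * ((volume (ball x₀ r))⁻¹ *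
          ((V k)⁻¹ * (V k)⁻¹ * ∫⁻ w in D, ∫⁻ z in D,
            T w z * (if dist w z < 2 * ρ then V k else 0))) := by
          refine mul_le_mul_right (mul_le_mul_right (mul_le_mul_right ?_ _) _) _
          exact lintegral_centres_le x₀ r ρ (hρle k) T hT
      _ = (ENNReal.ofReal ((2:ℝ) ^ (2 * (k:ℝ) * α)) * ((volume (ball x₀ r))⁻¹ *
          ((V k)⁻¹ * (V k)⁻¹))) * ∫⁻ w in D, ∫⁻ z in D,
            T w z * (if dist w z < 2 * ρ then V k else 0) := by ring
      _ = ∫⁻ w in D, ∫⁻ z in D, (ENNReal.ofReal ((2:ℝ) ^ (2 * (k:ℝ) * α)) *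
          ((volume (ball x₀ r))⁻¹ * ((V k)⁻¹ * (V k)⁻¹))) *
            (T w z * (if dist w z < 2 * ρ then V k else 0)) := by
          rw [← lintegral_const_mul _ hmG.lintegral_prod_right']
          refine lintegral_congr fun w => ?_
          exact (lintegral_const_mul _ (hmG.comp measurable_prodMk_left)).symm
      _ = _ := by
          refine lintegral_congr fun w => lintegral_congr fun z => ?_
          split_ifs
          · rw [Measure.addHaar_ball_center]
            have : (V k)⁻¹ * V k = 1 := ENNReal.inv_mul_cancel (hV0 k) (hVt k)
            calc _ = ((V k)⁻¹ * V k) * (T w z * (ENNReal.ofReal ((2:ℝ) ^ (2 * (k:ℝ) * α)) *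
                  ((volume (ball (0 : Pt n) r))⁻¹ * (V k)⁻¹))) := by ring
              _ = _ := by rw [this, one_mul]
          · simp
  have hm : ∀ k : ℕ, Measurable (fun q : Pt n × Pt n => T q.1 q.2 *
      (if dist q.1 q.2 < 2 * ((2:ℝ) ^ (-(k:ℝ)) * r) then
          ENNReal.ofReal ((2:ℝ) ^ (2 * (k:ℝ) * α)) * ((volume (ball (0 : Pt n) r))⁻¹ *
          (V k)⁻¹) else 0)) := by
    intro k
    refine Measurable.mul hT (Measurable.ite ?_ measurable_const measurable_const)
    exact measurableSet_lt (by fun_prop) measurable_const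
  calc Psi α 2 U x₀ r ≤ _ := ENNReal.tsum_le_tsum hk
    _ = ∫⁻ w in D, ∑' k : ℕ, ∫⁻ z in D, _ :=
      (lintegral_tsum fun k => (hm k).lintegral_prod_right'.aemeasurable).symm
    _ = ∫⁻ w in D, ∫⁻ z in D, ∑' k : ℕ, _ := lintegral_congr fun w =>
      (lintegral_tsum fun k => ((hm k).comp measurable_prodMk_left).aemeasurable).symm
    _ = _ := by
      refine lintegral_congr fun w => lintegral_congr fun z => ?_
      rw [scaleKernel, ← ENNReal.tsum_mul_left]
      rfl

/-! ### Size of the kernel -/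

lemma sum_pow_two_lt_le (s : ℝ) (hs : 0 ≤ s) (N : ℕ) :
    (∑ k ∈ Finset.range N, if (2:ℝ) ^ k < s then (2:ℝ) ^ k else 0) ≤ 2 * s := by
  have h : ∀ N : ℕ, (∑ k ∈ Finset.range N, if (2:ℝ) ^ k < s then (2:ℝ) ^ k else 0) ≤ 2 ^ N ∧
      (∑ k ∈ Finset.range N, if (2:ℝ) ^ k < s then (2:ℝ) ^ k else 0) ≤ 2 * s := by
    intro N
    induction N with
    | zero => simp; linarith
    | succ N ih =>
      rw [Finset.sum_range_succ, pow_succ]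
      have : (0:ℝ) < 2 ^ N := by positivity
      split_ifs with h
      · constructor <;> linarith [ih.1, ih.2]
      · constructor <;> linarith [ih.1, ih.2]
  exact (h N).2

lemma scaleKernel_eq_zero {n : ℕ} (α r : ℝ) (hr : 0 < r) (a b : Pt n) (h : 2 * r ≤ dist a b) :
    scaleKernel α r a b = 0 := by
  unfold scaleKernel
  rw [ENNReal.tsum_eq_zero]
  intro k
  rw [if_neg]
  have : (2:ℝ) ^ (-(k:ℝ)) ≤ 1 := Real.rpow_le_one_of_one_le_of_nonpos (by norm_num) (by simp)
  nlinarith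

/-- The `k`-th term of the kernel is present only for `2ᵏ < s = 2r/|a-b|` and grows like
`2^{k(n+2α)}`; bounding this by `s^{n+2α-1} 2ᵏ` reduces the sum to a geometric one. -/
lemma scaleKernel_le {n : ℕ} (hn : 1 ≤ n) (α : ℝ) (hα : 0 < α) (r : ℝ) (hr : 0 < r)
    (a b : Pt n) (hab : a ≠ b) :
    scaleKernel α r a b ≤ ENNReal.ofReal
      (2 * (2 * r / dist a b) ^ ((n:ℝ) + 2 * α) *
        ((volume (ball (0 : Pt n) 1)).toReal ^ 2 * r ^ (2 * n))⁻¹) := by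
  set t := dist a b with ht
  have htpos : 0 < t := dist_pos.2 hab
  set ω := (volume (ball (0 : Pt n) 1)).toReal with hω
  have hωpos : 0 < ω := ENNReal.toReal_pos (measure_ball_pos _ _ one_pos).ne'
    measure_ball_lt_top.ne
  set s := 2 * r / t with hs
  have hspos : 0 < s := by positivity
  set p := (n:ℝ) + 2 * α with hp
  have hp1 : 1 ≤ p := by
    have : (1:ℝ) ≤ n := by exact_mod_cast hn
    linarith
  have hvol : ∀ ρ : ℝ, 0 < ρ → volume (ball (0 : Pt n) ρ) = ENNReal.ofReal (ρ ^ n * ω) := by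
    intro ρ hρ
    rw [Measure.addHaar_ball_of_pos _ _ hρ, finrank_euclideanSpace_fin,
      ENNReal.ofReal_mul (by positivity), hω, ENNReal.ofReal_toReal measure_ball_lt_top.ne]
  have hterm : ∀ k : ℕ, (if t < 2 * ((2:ℝ) ^ (-(k:ℝ)) * r) then
      ENNReal.ofReal ((2:ℝ) ^ (2 * (k:ℝ) * α)) * ((volume (ball (0 : Pt n) r))⁻¹ *
      (volume (ball (0 : Pt n) ((2:ℝ) ^ (-(k:ℝ)) * r)))⁻¹) else 0) ≤
      ENNReal.ofReal (s ^ (p - 1) * (ω ^ 2 * r ^ (2 * n))⁻¹ *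
        (if (2:ℝ) ^ k < s then (2:ℝ) ^ k else 0)) := by
    intro k
    split_ifs with h1 h2 h2
    · rw [hvol _ hr, hvol _ (by positivity), ← ENNReal.ofReal_inv_of_pos (by positivity),
        ← ENNReal.ofReal_inv_of_pos (by positivity), ← ENNReal.ofReal_mul (by positivity),
        ← ENNReal.ofReal_mul (by positivity)]
      refine ENNReal.ofReal_le_ofReal ?_
      have e1 : (2:ℝ) ^ (2 * (k:ℝ) * α) = ((2:ℝ) ^ k) ^ (2 * α) := by
        rw [← Real.rpow_natCast, ← Real.rpow_mul (by norm_num)]; ring_nf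
      have e2 : (2:ℝ) ^ (-(k:ℝ)) = ((2:ℝ) ^ k)⁻¹ := by
        rw [Real.rpow_neg (by norm_num), Real.rpow_natCast]
      set x := (2:ℝ) ^ k with hx
      have hxpos : 0 < x := by positivity
      have e3 : x ^ (2 * α) * x ^ n = x ^ (p - 1) * x := by
        rw [← Real.rpow_natCast, ← Real.rpow_add hxpos]
        nth_rewrite 3 [← Real.rpow_one x]
        rw [← Real.rpow_add hxpos]
        congr 1; rw [hp]; ring
      have e4 : x ^ (p - 1) ≤ s ^ (p - 1) :=
        Real.rpow_le_rpow hxpos.le h2.le (by linarith)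
      rw [e1, e2]
      calc x ^ (2 * α) * ((r ^ n * ω)⁻¹ * ((x⁻¹ * r) ^ n * ω)⁻¹)
          = (x ^ (2 * α) * x ^ n) * (ω ^ 2 * r ^ (2 * n))⁻¹ := by
            rw [mul_pow, inv_pow, two_mul n, pow_add]
            field_simp
        _ = x ^ (p - 1) * (ω ^ 2 * r ^ (2 * n))⁻¹ * x := by rw [e3]; ring
        _ ≤ _ := by gcongr
    · exfalso
      apply h2
      rw [Real.rpow_neg (by norm_num), Real.rpow_natCast] at h1
      rw [hs, lt_div_iff₀ htpos]
      have : (0:ℝ) < 2 ^ k := by positivity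
      calc (2:ℝ) ^ k * t < 2 ^ k * (2 * ((2 ^ k)⁻¹ * r)) := by gcongr
        _ = 2 * r := by field_simp
    · exact zero_le
    · exact zero_le
  unfold scaleKernel
  refine (ENNReal.tsum_le_tsum hterm).trans ?_
  refine ENNReal.tsum_le_of_sum_range_le fun N => ?_
  rw [← ENNReal.ofReal_sum_of_nonneg (fun k _ => by split_ifs <;> positivity)]
  refine ENNReal.ofReal_le_ofReal ?_
  rw [← Finset.mul_sum]
  calc _ ≤ s ^ (p - 1) * (ω ^ 2 * r ^ (2 * n))⁻¹ * (2 * s) := by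
        gcongr
        exact sum_pow_two_lt_le s hspos.le N
    _ = 2 * (s ^ (p - 1) * s ^ (1:ℝ)) * (ω ^ 2 * r ^ (2 * n))⁻¹ := by
        rw [Real.rpow_one]; ring
    _ = _ := by rw [← Real.rpow_add hspos]; ring_nf

/-- The real-variable inequality behind the comparison of the energies of `u ∘ f` and `u`: with
`τ = |f a - f b|`, `t = |a - b|`, `R` the size of the image ball and `Ja`, `Jb` the Jacobians.
The exponent `n - 2α` is nonnegative, so the lower bound for `Jb` at scale `r` may be
interpolated with the one at scale `t`. -/
lemma jacobian_interpolation (n : ℕ) (hn : 2 ≤ n) (α : ℝ) (hα : α ∈ Ioo (0:ℝ) 1)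
    (c τ t R r Ja Jb : ℝ) (hc : 0 < c) (hτ : 0 < τ) (ht : 0 < t) (hR : 0 < R) (hr : 0 < r)
    (hJa : τ ^ n ≤ c * t ^ n * Ja) (hJb : τ ^ n ≤ c * t ^ n * Jb) (hJR : R ^ n ≤ c * r ^ n * Jb) :
    τ ^ ((n:ℝ) + 2 * α) * R ^ ((n:ℝ) - 2 * α) ≤
      c ^ 2 * t ^ ((n:ℝ) + 2 * α) * r ^ ((n:ℝ) - 2 * α) * Ja * Jb := by
  have hn0 : (0:ℝ) < n := by exact_mod_cast (by omega : 0 < n)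
  have hn2 : (2:ℝ) ≤ n := by exact_mod_cast hn
  have hJbpos : 0 < Jb := by
    have : 0 < c * r ^ n * Jb := lt_of_lt_of_le (by positivity) hJR
    exact pos_of_mul_pos_right this (by positivity)
  set θ := 2 * α / n with hθ
  have hθ0 : 0 ≤ θ := by have := hα.1; positivity
  have hθ1 : θ ≤ 1 := by rw [hθ, div_le_one hn0]; linarith [hα.2]
  have hnθ : (n:ℝ) * θ = 2 * α := by rw [hθ]; field_simp
  have hnθ' : (n:ℝ) * (1 - θ) = n - 2 * α := by rw [mul_sub, hnθ, mul_one]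
  have e : ∀ x : ℝ, 0 < x → (x ^ n) ^ θ = x ^ (2 * α) := fun x hx => by
    rw [← Real.rpow_natCast, ← Real.rpow_mul hx.le, hnθ]
  have e' : ∀ x : ℝ, 0 < x → (x ^ n) ^ (1 - θ) = x ^ ((n:ℝ) - 2 * α) := fun x hx => by
    rw [← Real.rpow_natCast, ← Real.rpow_mul hx.le, hnθ']
  have h1 : τ ^ (2 * α) ≤ (c * Jb) ^ θ * t ^ (2 * α) := by
    rw [← e τ hτ, ← e t ht, ← Real.mul_rpow (by positivity) (by positivity)]
    refine Real.rpow_le_rpow (by positivity) ?_ hθ0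
    linarith
  have h2 : R ^ ((n:ℝ) - 2 * α) ≤ (c * Jb) ^ (1 - θ) * r ^ ((n:ℝ) - 2 * α) := by
    rw [← e' R hR, ← e' r hr, ← Real.mul_rpow (by positivity) (by positivity)]
    refine Real.rpow_le_rpow (by positivity) ?_ (by linarith)
    linarith
  have h3 : (c * Jb) ^ θ * (c * Jb) ^ (1 - θ) = c * Jb := by
    rw [← Real.rpow_add (by positivity)]; simp
  rw [Real.rpow_add hτ, Real.rpow_add ht, Real.rpow_natCast, Real.rpow_natCast]
  calc τ ^ n * τ ^ (2 * α) * R ^ ((n:ℝ) - 2 * α)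
      ≤ (c * t ^ n * Ja) * ((c * Jb) ^ θ * t ^ (2 * α)) *
        ((c * Jb) ^ (1 - θ) * r ^ ((n:ℝ) - 2 * α)) := by
        have : 0 ≤ c * t ^ n * Ja := le_trans (by positivity) hJa
        gcongr
    _ = (c * t ^ n * Ja) * t ^ (2 * α) * r ^ ((n:ℝ) - 2 * α) *
        ((c * Jb) ^ θ * (c * Jb) ^ (1 - θ)) := by ring
    _ = _ := by rw [h3]; ring

/-! ### Quasisymmetry and the change of variables -/

section QuasisymmetricMaps

variable {n : ℕ} {f : Pt n ≃ₜ Pt n} {η : ℝ≥0 ≃o ℝ≥0}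

lemma IsQS.dist_le (hqs : IsQS (⇑f) η) (x a b : Pt n) (hxb : x ≠ b) (t : ℝ≥0)
    (h : dist x a ≤ t * dist x b) : dist (f x) (f a) ≤ η t * dist (f x) (f b) := by
  have h1 := hqs x a b hxb
  have h2 : nndist x a / nndist x b ≤ t := by
    refine div_le_of_le_mul₀ zero_le zero_le ?_
    exact_mod_cast h
  have h3 : nndist (f x) (f a) ≤ η t * nndist (f x) (f b) :=
    h1.trans (by gcongr)
  exact_mod_cast h3

lemma order_iso_pos (η : ℝ≥0 ≃o ℝ≥0) (t : ℝ≥0) (ht : 0 < t) : 0 < η t := by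
  have := η.strictMono ht
  exact lt_of_le_of_lt zero_le this

lemma IsQS.ball_subset_image (hqs : IsQS (⇑f) η) (x b : Pt n) (hxb : x ≠ b) :
    ball (f x) (dist (f x) (f b) / η 1) ⊆ f '' ball x (dist x b) := by
  intro y hy
  refine ⟨f.symm y, ?_, by simp⟩
  by_contra hlt
  rw [mem_ball, not_lt, dist_comm (f.symm y)] at hlt
  have hne : x ≠ f.symm y := by
    intro h
    rw [← h, dist_self] at hlt
    exact hxb (dist_le_zero.1 hlt)
  have h1 := hqs.dist_le x b (f.symm y) hne 1 (by simpa using hlt)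
  have hη : (0:ℝ) < η 1 := by exact_mod_cast order_iso_pos η 1 one_pos
  rw [mem_ball, lt_div_iff₀ hη, dist_comm] at hy
  simp only [Homeomorph.apply_symm_apply] at h1
  linarith

variable {J : Pt n → ℝ}

lemma JacobianCOV.aemeasurable (hJ : JacobianCOV (⇑f) J) : AEMeasurable J volume := by
  refine ⟨fun x => |(fderiv ℝ f x).det|, ?_, ?_⟩
  · have h1 : Measurable (fderiv ℝ f) := measurable_fderiv ℝ f
    have h2 : Continuous (fun A : Pt n →L[ℝ] Pt n => |A.det|) :=
      ContinuousLinearMap.continuous_det.abs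
    exact h2.measurable.comp h1
  · filter_upwards [hJ.1] with x ⟨D, hD, hx⟩
    rw [hx, hD.fderiv]

lemma JacobianCOV.ae_nonneg (hJ : JacobianCOV (⇑f) J) : ∀ᵐ x, 0 ≤ J x := by
  filter_upwards [hJ.1] with x ⟨D, hD, hx⟩
  rw [hx]; positivity

/-- The change of variables holds for arbitrary integrands, `∫⁻` being the lower integral. -/
lemma JacobianCOV.lintegral_eq (hJ : JacobianCOV (⇑f) J) (h : Pt n → ℝ≥0∞) :
    ∫⁻ x, h (f x) * ENNReal.ofReal (J x) = ∫⁻ y, h y := by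
  have hm : AEMeasurable (fun x => ENNReal.ofReal (J x)) volume := hJ.aemeasurable.ennreal_ofReal
  have hfin : ∀ᵐ x : Pt n, ENNReal.ofReal (J x) < ∞ := ae_of_all _ fun _ => ENNReal.ofReal_lt_top
  have hmap : Measure.map f.toMeasurableEquiv
      (volume.withDensity fun x => ENNReal.ofReal (J x)) = volume := by
    ext s hs
    rw [MeasurableEquiv.map_apply, ← lintegral_indicator_one hs,
      ← hJ.2 _ (measurable_one.indicator hs),
      ← lintegral_indicator_one (f.toMeasurableEquiv.measurable hs),
      lintegral_withDensity_eq_lintegral_mul_non_measurable₀ _ hm hfin]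
    refine lintegral_congr fun x => ?_
    simp only [Pi.mul_apply]
    rw [mul_comm]
    rfl
  conv_rhs => rw [← hmap]
  rw [lintegral_map_equiv, lintegral_withDensity_eq_lintegral_mul_non_measurable₀ _ hm hfin]
  refine lintegral_congr fun x => ?_
  simp only [Pi.mul_apply]
  rw [mul_comm]
  rfl

lemma JacobianCOV.setLIntegral_image (hJ : JacobianCOV (⇑f) J) (s : Set (Pt n))
    (hs : MeasurableSet s) : ∫⁻ x in s, ENNReal.ofReal (J x) = volume (f '' s) := by
  have hs' : MeasurableSet (f '' s) := f.toMeasurableEquiv.measurableSet_image.2 hs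
  rw [← lintegral_indicator_one hs', ← hJ.lintegral_eq, ← lintegral_indicator hs]
  refine lintegral_congr fun x => ?_
  by_cases hx : x ∈ s
  · rw [indicator_of_mem hx, indicator_of_mem (mem_image_of_mem f hx)]; simp
  · rw [indicator_of_notMem hx, indicator_of_notMem]
    · simp
    · rintro ⟨y, hy, hyx⟩
      exact hx (f.injective hyx ▸ hy)

lemma JacobianCOV.setLIntegral_comp_le (hJ : JacobianCOV (⇑f) J) (D D' : Set (Pt n))
    (hD : MeasurableSet D) (hD' : MeasurableSet D')
    (hsub : ∀ a ∈ D, f a ∈ D') (h : Pt n → ℝ≥0∞) :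
    ∫⁻ a in D, h (f a) * ENNReal.ofReal (J a) ≤ ∫⁻ y in D', h y := by
  rw [← lintegral_indicator hD', ← hJ.lintegral_eq, ← lintegral_indicator hD]
  refine lintegral_mono fun a => ?_
  by_cases ha : a ∈ D
  · rw [indicator_of_mem ha, indicator_of_mem (hsub a ha)]
  · rw [indicator_of_notMem ha]; exact zero_le

lemma JacobianCOV.integrableOn (hJ : JacobianCOV (⇑f) J) (K : Set (Pt n)) (hK : IsCompact K) :
    IntegrableOn J K volume := by
  refine ⟨hJ.aemeasurable.aestronglyMeasurable.restrict, ?_⟩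
  rw [hasFiniteIntegral_iff_ofReal (ae_restrict_of_ae hJ.ae_nonneg),
    hJ.setLIntegral_image K hK.measurableSet]
  exact (hK.image f.continuous).measure_lt_top

/-- At Lebesgue points the local `A₁` condition becomes a pointwise inequality, with one
exceptional null set for all balls simultaneously. -/
lemma JacobianCOV.ae_average_le (hJ : JacobianCOV (⇑f) J) {E : Set (Pt n)} {C : ℝ} (hC : 0 < C)
    (hA : ∀ (x₀ : Pt n) (r : ℝ), 0 < r →
      ENNReal.ofReal (2 * r) < EMetric.infEdist x₀ E →
      ⨍ x in ball x₀ r, J x ∂volume ≤ C * essInf J (volume.restrict (ball x₀ r))) :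
    ∀ᵐ a, ∀ (y : Pt n) (s : ℝ), 0 < s → ENNReal.ofReal (2 * s) < EMetric.infEdist y E →
      a ∈ ball y s → ⨍ x in ball y s, J x ∂volume ≤ C * J a := by
  have hloc : LocallyIntegrable J volume :=
    (locallyIntegrable_iff).2 fun K hK => hJ.integrableOn K hK
  filter_upwards [IsUnifLocDoublingMeasure.ae_tendsto_average (μ := volume) hloc 1]
    with a ha y s hs hE hay
  refine (hA y s hs hE).trans ?_
  gcongr
  have hlim := ha (ι := ℝ) (l := nhdsWithin 0 (Ioi 0)) (fun _ => a) id tendsto_id (by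
    filter_upwards [self_mem_nhdsWithin] with t ht
    simpa using (le_of_lt ht : (0:ℝ) ≤ t))
  refine ge_of_tendsto hlim ?_
  have hbd : IsBoundedUnder (· ≥ ·) (ae (volume.restrict (ball y s))) J :=
    isBoundedUnder_of_eventually_ge (a := 0) (ae_restrict_of_ae hJ.ae_nonneg)
  have hess := ae_essInf_le hbd
  obtain ⟨ε, hε, hsub⟩ := Metric.isOpen_iff.1 isOpen_ball a hay
  filter_upwards [Ioo_mem_nhdsGT hε] with t ht
  have hcb : closedBall a t ⊆ ball y s := (closedBall_subset_ball ht.2).trans hsub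
  have hae : ∀ᵐ x ∂(volume.restrict (closedBall a t)),
      essInf J (volume.restrict (ball y s)) ≤ J x :=
    ae_restrict_of_ae_restrict_of_subset hcb hess
  have hvol : 0 < volume.real (closedBall a t) :=
    ENNReal.toReal_pos (measure_closedBall_pos _ _ ht.1).ne' measure_closedBall_lt_top.ne
  simp only [id]
  rw [setAverage_eq, smul_eq_mul, ← div_eq_inv_mul, le_div_iff₀ hvol]
  calc essInf J (volume.restrict (ball y s)) * volume.real (closedBall a t)
      = ∫ x in closedBall a t, essInf J (volume.restrict (ball y s)) := by
        rw [setIntegral_const, smul_eq_mul, mul_comm]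
    _ ≤ ∫ x in closedBall a t, J x := by
        refine integral_mono_ae ?_ (hJ.integrableOn _ (isCompact_closedBall a t)) hae
        exact integrableOn_const measure_closedBall_lt_top.ne

/-- On an admissible ball `B(y,s)` the Jacobian dominates, at almost every point, the `n`-th power
of the dilation of `f` at scale `s`. -/
lemma exists_jacobian_lower_bound (hn : 2 ≤ n) (hqs : IsQS (⇑f) η) (hJ : JacobianCOV (⇑f) J)
    {E : Set (Pt n)} (hA1 : MemA1 J E) :
    ∃ c > (0:ℝ), ∀ᵐ a, ∀ (y : Pt n) (s : ℝ), 0 < s →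
      ENNReal.ofReal (2 * s) < EMetric.infEdist y E → a ∈ ball y s →
      ∀ p ∈ ball y (3 * s), ∀ q ∈ ball y (3 * s),
        dist (f p) (f q) ^ n ≤ c * s ^ n * J a := by
  obtain ⟨C, hC, hA⟩ := hA1
  have hη : ∀ t : ℝ≥0, 0 < t → (0:ℝ) < η t := fun t ht => by exact_mod_cast order_iso_pos η t ht
  have h1 := hη 1 one_pos
  have h3 := hη 3 (by norm_num)
  refine ⟨(2 * η 3 * η 1) ^ n * C, by positivity, ?_⟩
  filter_upwards [hJ.ae_average_le hC hA] with a ha y s hs hE hay p hp q hq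
  let e : Pt n := EuclideanSpace.single ⟨0, by omega⟩ (1:ℝ)
  set b : Pt n := y + s • e with hb
  have hyb : dist y b = s := by
    rw [hb, dist_self_add_right, norm_smul, PiLp.norm_single]
    simp [abs_of_pos hs]
  have hne : y ≠ b := fun h => by rw [← h, dist_self] at hyb; linarith
  set l := dist (f y) (f b) with hl
  have hlpos : 0 < l := dist_pos.2 (f.injective.ne hne)
  have hcl : ∀ q ∈ ball y (3 * s), dist (f y) (f q) ≤ η 3 * l := by
    intro q hq
    refine hqs.dist_le y q b hne 3 ?_
    rw [hyb, dist_comm]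
    exact (mem_ball.1 hq).le
  have hpq : dist (f p) (f q) ≤ 2 * η 3 * l := by
    have := dist_triangle_left (f p) (f q) (f y)
    have := hcl p hp
    have := hcl q hq
    linarith
  have hav := ha y s hs hE hay
  set ω := volume.real (ball (0 : Pt n) 1) with hω
  have hωpos : 0 < ω := ENNReal.toReal_pos (measure_ball_pos _ _ one_pos).ne'
    measure_ball_lt_top.ne
  have hvol : ∀ (x : Pt n) (ρ : ℝ), 0 < ρ → volume.real (ball x ρ) = ρ ^ n * ω := by
    intro x ρ hρ
    rw [Measure.real, Measure.addHaar_ball_of_pos _ _ hρ, finrank_euclideanSpace_fin,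
      ENNReal.toReal_mul, ENNReal.toReal_ofReal (by positivity), hω, Measure.real]
  have hint : ∫ x in ball y s, J x = volume.real (f '' ball y s) := by
    rw [integral_eq_lintegral_of_nonneg_ae (ae_restrict_of_ae hJ.ae_nonneg)
      hJ.aemeasurable.aestronglyMeasurable.restrict,
      hJ.setLIntegral_image _ measurableSet_ball, Measure.real]
  have hfin : volume (f '' ball y s) ≠ ⊤ := by
    refine ne_top_of_le_ne_top ?_ (measure_mono (image_mono (ball_subset_closedBall)))
    exact ((isCompact_closedBall y s).image f.continuous).measure_lt_top.ne
  have hlow : (l / η 1) ^ n * ω ≤ volume.real (f '' ball y s) := by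
    rw [← hvol (f y) _ (by positivity)]
    have := hqs.ball_subset_image y b hne
    rw [hyb] at this
    exact measureReal_mono this hfin
  rw [setAverage_eq, smul_eq_mul, hint, hvol y s hs, ← div_eq_inv_mul,
    div_le_iff₀ (by positivity)] at hav
  have hl2 : (l / η 1) ^ n ≤ C * J a * s ^ n := by
    have : (l / η 1) ^ n * ω ≤ (C * J a * s ^ n) * ω := by linarith
    exact le_of_mul_le_mul_right this hωpos
  calc dist (f p) (f q) ^ n ≤ (2 * η 3 * l) ^ n := by gcongr
    _ = (2 * η 3 * η 1) ^ n * (l / η 1) ^ n := by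
        rw [← mul_pow]; congr 1; field_simp
    _ ≤ (2 * η 3 * η 1) ^ n * (C * J a * s ^ n) := by gcongr
    _ = _ := by ring

end QuasisymmetricMaps

/-! ### Comparison of the energies of `u ∘ f` and `u` -/

/-- `u` itself need not be measurable; `|u|` is, up to a null set, and this passes to `u ∘ f`. -/
lemma aemeasurable_abs_comp {n : ℕ} {f : Pt n ≃ₜ Pt n} {Jfi : Pt n → ℝ}
    (hJfi : JacobianCOV (⇑f.symm) Jfi) {u : Pt n → ℝ}
    (hu : LocallyIntegrable (fun x => |u x| ^ 2) volume) :
    AEMeasurable (fun x => |(u ∘ f) x|) volume := by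
  have h1 : AEMeasurable (fun x => |u x|) volume := by
    have h := hu.aestronglyMeasurable.aemeasurable.sqrt
    simpa only [Real.sqrt_sq (abs_nonneg _)] using h
  have hq : Measure.QuasiMeasurePreserving f volume volume := by
    refine ⟨f.continuous.measurable, Measure.AbsolutelyContinuous.mk fun s hs h0 => ?_⟩
    rw [Measure.map_apply f.continuous.measurable hs, ← f.image_symm,
      ← hJfi.setLIntegral_image s hs, Measure.restrict_eq_zero.2 h0, lintegral_zero_measure]
  exact h1.comp_quasiMeasurePreserving hq

lemma two_mul_lt_infEdist {n : ℕ} {E : Set (Pt n)} {x₀ : Pt n} {r : ℝ} (hr : 0 < r)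
    (hE : ENNReal.ofReal (4 * r) ≤ EMetric.infEdist x₀ E) (y : Pt n) (hy : y ∈ ball x₀ (2 * r)) :
    ENNReal.ofReal (2 * r) < EMetric.infEdist y E := by
  by_contra hlt
  have h1 : EMetric.infEdist x₀ E ≤ edist x₀ y + EMetric.infEdist y E :=
    Metric.infEDist_le_edist_add_infEDist
  have h2 : edist x₀ y < ENNReal.ofReal (2 * r) := by
    rw [edist_dist, dist_comm]
    exact (ENNReal.ofReal_lt_ofReal_iff (by linarith)).2 (mem_ball.1 hy)
  have h3 : ENNReal.ofReal (4 * r) < ENNReal.ofReal (2 * r) + ENNReal.ofReal (2 * r) :=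
    (hE.trans h1).trans_lt
      (ENNReal.add_lt_add_of_lt_of_le (ne_top_of_le_ne_top ENNReal.ofReal_ne_top (not_lt.1 hlt))
        h2 (not_lt.1 hlt))
  rw [← ENNReal.ofReal_add (by linarith) (by linarith)] at h3
  ring_nf at h3
  exact lt_irrefl _ h3

lemma energy_le_Qnorm_sq {n : ℕ} (α : ℝ) (u : Pt n → ℝ) (y₀ : Pt n) (R : ℝ) (hR : 0 < R) :
    ENNReal.ofReal (R ^ (2 * α - (n : ℝ))) *
      ∫⁻ x in ball y₀ R, ∫⁻ y in ball y₀ R,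
        ENNReal.ofReal (|u x - u y| ^ 2 / ‖x - y‖ ^ ((n : ℝ) + 2 * α)) ≤ Qnorm α u ^ 2 := by
  set X := ENNReal.ofReal (R ^ (2 * α - (n : ℝ))) *
      ∫⁻ x in ball y₀ R, ∫⁻ y in ball y₀ R,
        ENNReal.ofReal (|u x - u y| ^ 2 / ‖x - y‖ ^ ((n : ℝ) + 2 * α)) with hX
  have h : X ^ (1/2 : ℝ) ≤ Qnorm α u := by
    unfold Qnorm
    exact le_iSup₂_of_le y₀ R (le_iSup_of_le hR le_rfl)
  calc X = (X ^ (1/2 : ℝ)) ^ 2 := by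
        rw [← ENNReal.rpow_natCast, ← ENNReal.rpow_mul]; norm_num
    _ ≤ _ := by gcongr

/-- Case 1 of the proof of Theorem 1.3: for balls `B(x₀,r)` far from the
degeneracy set `E` (namely `dist(x₀,E) ≥ 4r`), the quantity `Ψ_{α,2}(u∘f, B(x₀,r))` is
uniformly controlled by `‖u‖²_{Q_α}`. -/
theorem Psi_composition_far_from_E (n : ℕ) (hn : 2 ≤ n) (α : ℝ) (hα : α ∈ Ioo (0:ℝ) 1)
    (f : Pt n ≃ₜ Pt n) (η : ℝ≥0 ≃o ℝ≥0) (hqs : IsQS (⇑f) η)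
    (Jf Jfi : Pt n → ℝ) (hJf : JacobianCOV (⇑f) Jf) (hJfi : JacobianCOV (⇑f.symm) Jfi)
    (E : Set (Pt n)) (hEc : IsClosed E) (hA1 : MemA1 Jf E) :
    ∃ C > (0:ℝ), ∀ (x₀ : Pt n) (r : ℝ), 0 < r →
      ENNReal.ofReal (4 * r) ≤ EMetric.infEdist x₀ E →
      ∀ u : Pt n → ℝ, MemQ α u →
        Psi α 2 (u ∘ ⇑f) x₀ r ≤ ENNReal.ofReal C * (Qnorm α u) ^ 2 := by
  obtain ⟨c₁, hc₁, hgood⟩ := exists_jacobian_lower_bound hn hqs hJf hA1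
  have hη2 : (0:ℝ) < η 2 := by exact_mod_cast order_iso_pos η 2 (by norm_num)
  -- The factor `(1 + 2 η(2))ⁿ` lets one constant serve both for `|f a - f b|` and for `R` below.
  set c : ℝ := c₁ * (1 + 2 * η 2) ^ n with hc
  have hcpos : 0 < c := by positivity
  set ω := (volume (ball (0 : Pt n) 1)).toReal with hω
  have hωpos : 0 < ω := ENNReal.toReal_pos (measure_ball_pos _ _ one_pos).ne'
    measure_ball_lt_top.ne
  set p := (n:ℝ) + 2 * α with hp
  set C : ℝ := 2 * 2 ^ p * (ω ^ 2)⁻¹ * c ^ 2 with hC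
  refine ⟨C, by positivity, fun x₀ r hr hE u hu => ?_⟩
  set D := ball x₀ (2 * r) with hD
  have hadm := two_mul_lt_infEdist hr hE
  let e : Pt n := EuclideanSpace.single ⟨0, by omega⟩ (1:ℝ)
  set b₀ : Pt n := x₀ + r • e with hb₀
  have hxb : dist x₀ b₀ = r := by
    rw [hb₀, dist_self_add_right, norm_smul, PiLp.norm_single]
    simp [abs_of_pos hr]
  have hne : x₀ ≠ b₀ := fun h => by rw [← h, dist_self] at hxb; linarith
  set l := dist (f x₀) (f b₀) with hl
  have hlpos : 0 < l := dist_pos.2 (f.injective.ne hne)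
  -- The ball `B(f x₀, R)` contains `f (B(x₀, 2r))`.
  set R : ℝ := 2 * η 2 * l with hR
  have hRpos : 0 < R := by positivity
  have hfD : ∀ a ∈ D, f a ∈ ball (f x₀) R := by
    intro a ha
    have h1 := hqs.dist_le x₀ a b₀ hne 2 (by
      rw [hxb, dist_comm]; exact (mem_ball.1 ha).le)
    rw [mem_ball, dist_comm]
    have : 0 < η 2 * l := by positivity
    linarith
  have h1η : (1:ℝ) ≤ (1 + 2 * η 2) ^ n := one_le_pow₀ (by linarith)
  let k : Pt n → Pt n → ℝ≥0∞ := fun y y' =>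
    ENNReal.ofReal (|u y - u y'| ^ 2 / ‖y - y'‖ ^ p)
  have hpt : ∀ᵐ a, ∀ᵐ b, a ∈ D → b ∈ D →
      ENNReal.ofReal (|(u ∘ f) a - (u ∘ f) b| ^ 2) * scaleKernel α r a b ≤
      ENNReal.ofReal C * ENNReal.ofReal (R ^ (2 * α - (n:ℝ))) *
        (k (f a) (f b) * ENNReal.ofReal (Jf b) * ENNReal.ofReal (Jf a)) := by
    filter_upwards [hgood] with a hga
    filter_upwards [hgood] with b hgb haD hbD
    rcases eq_or_ne a b with rfl | hab
    · simp
    rcases le_or_gt (2 * r) (dist a b) with hfar | hnear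
    · rw [scaleKernel_eq_zero α r hr a b hfar, mul_zero]; exact zero_le
    set t := dist a b with ht
    have htpos : 0 < t := dist_pos.2 hab
    set τ := dist (f a) (f b) with hτ
    have hτpos : 0 < τ := dist_pos.2 (f.injective.ne hab)
    -- A ball of radius comparable to `|a - b|` around the midpoint contains both points and
    -- stays admissible because `|a - b| < 2r`.
    obtain ⟨s, hs1, hs2⟩ := exists_between (lt_min (half_lt_self htpos)
      (by linarith : t / 2 < r))
    have hst : s ≤ t := (hs2.trans_le (min_le_left _ _)).le
    have hsr : s < r := hs2.trans_le (min_le_right _ _)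
    have hs : 0 < s := by linarith
    set m := midpoint ℝ a b with hm
    have hmD : m ∈ D := (convex_ball x₀ (2 * r)).midpoint_mem haD hbD
    have hmE : ENNReal.ofReal (2 * s) < EMetric.infEdist m E :=
      (ENNReal.ofReal_le_ofReal (by linarith)).trans_lt (hadm m hmD)
    have ham : a ∈ ball m s := by
      rw [mem_ball, hm, dist_left_midpoint, Real.norm_ofNat]; linarith
    have hbm : b ∈ ball m s := by
      rw [mem_ball, hm, dist_right_midpoint, Real.norm_ofNat]; linarith
    have hsub : ball m s ⊆ ball m (3 * s) := ball_subset_ball (by linarith)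
    have hlift : ∀ Jx : ℝ, τ ^ n ≤ c₁ * s ^ n * Jx → τ ^ n ≤ c * t ^ n * Jx := by
      intro Jx h
      have hJx : 0 < Jx := by
        have : 0 < c₁ * s ^ n * Jx := lt_of_lt_of_le (by positivity) h
        exact pos_of_mul_pos_right this (by positivity)
      refine h.trans ?_
      have : c₁ ≤ c := by rw [hc]; exact le_mul_of_one_le_right hc₁.le h1η
      gcongr
    have hJa := hlift _ (hga m s hs hmE ham a (hsub ham) b (hsub hbm))
    have hJb := hlift _ (hgb m s hs hmE hbm a (hsub ham) b (hsub hbm))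
    have hJR : R ^ n ≤ c * r ^ n * Jf b := by
      have hbx : dist x₀ b < 2 * r := by rw [dist_comm]; exact mem_ball.1 hbD
      set y := midpoint ℝ x₀ b with hy
      have hyx : dist x₀ y < r := by
        rw [hy, dist_left_midpoint, Real.norm_ofNat]; linarith
      have hyD : y ∈ D := by rw [hD, mem_ball, dist_comm]; linarith
      have hby : b ∈ ball y r := by
        rw [mem_ball, hy, dist_right_midpoint, Real.norm_ofNat]; linarith
      have h := hgb y r hr (hadm y hyD) hby x₀ (by rw [mem_ball]; linarith) b₀ (by
        rw [mem_ball]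
        have := dist_triangle_left b₀ y x₀
        linarith)
      calc R ^ n = (2 * η 2) ^ n * l ^ n := by rw [hR, mul_pow]
        _ ≤ (1 + 2 * η 2) ^ n * (c₁ * r ^ n * Jf b) := by
          gcongr
          linarith
        _ = _ := by rw [hc]; ring
    have hJapos : 0 < Jf a := by
      have : 0 < c * t ^ n * Jf a := lt_of_lt_of_le (by positivity) hJa
      exact pos_of_mul_pos_right this (by positivity)
    have hJbpos : 0 < Jf b := by
      have : 0 < c * t ^ n * Jf b := lt_of_lt_of_le (by positivity) hJb
      exact pos_of_mul_pos_right this (by positivity)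
    have hmain := jacobian_interpolation n hn α hα c τ t R r (Jf a) (Jf b) hcpos hτpos htpos
      hRpos hr hJa hJb hJR
    refine (mul_le_mul_right (scaleKernel_le (by omega) α hα.1 r hr a b hab) _).trans ?_
    simp only [k, Function.comp]
    rw [← dist_eq_norm, ← ENNReal.ofReal_mul (by positivity), ← ENNReal.ofReal_mul (by positivity),
      ← ENNReal.ofReal_mul (by positivity), ← ENNReal.ofReal_mul (by positivity),
      ← ENNReal.ofReal_mul (by positivity)]
    refine ENNReal.ofReal_le_ofReal ?_
    rw [← hτ, ← ht, ← hω, ← hp]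
    set δ := |u (f a) - u (f b)| ^ 2 with hδ
    have hδ0 : 0 ≤ δ := by positivity
    have e1 : R ^ (2 * α - (n:ℝ)) = (R ^ ((n:ℝ) - 2 * α))⁻¹ := by
      rw [← Real.rpow_neg hRpos.le]; ring_nf
    have e2 : (r ^ (2 * n))⁻¹ * r ^ p = (r ^ ((n:ℝ) - 2 * α))⁻¹ := by
      rw [← Real.rpow_natCast, ← Real.rpow_neg hr.le, ← Real.rpow_neg hr.le,
        ← Real.rpow_add hr]
      congr 1; rw [hp]; push_cast; ring
    rw [e1, Real.div_rpow (by positivity) htpos.le, Real.mul_rpow (by norm_num) hr.le]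
    have hle : (t ^ p)⁻¹ * (r ^ ((n:ℝ) - 2 * α))⁻¹ ≤
        c ^ 2 * (R ^ ((n:ℝ) - 2 * α))⁻¹ * (Jf b * Jf a) / τ ^ p := by
      rw [le_div_iff₀ (by positivity)]
      have hRp : 0 < R ^ ((n:ℝ) - 2 * α) := by positivity
      have hrp : 0 < r ^ ((n:ℝ) - 2 * α) := by positivity
      have htp : 0 < t ^ p := by positivity
      calc _ = (τ ^ p * R ^ ((n:ℝ) - 2 * α)) *
            ((t ^ p)⁻¹ * (r ^ ((n:ℝ) - 2 * α))⁻¹ * (R ^ ((n:ℝ) - 2 * α))⁻¹) := by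
            field_simp
        _ ≤ (c ^ 2 * t ^ p * r ^ ((n:ℝ) - 2 * α) * Jf a * Jf b) *
            ((t ^ p)⁻¹ * (r ^ ((n:ℝ) - 2 * α))⁻¹ * (R ^ ((n:ℝ) - 2 * α))⁻¹) := by
            gcongr
        _ = _ := by field_simp
    calc δ * (2 * (2 ^ p * r ^ p / t ^ p) * (ω ^ 2 * r ^ (2 * n))⁻¹)
        = δ * (2 * 2 ^ p * (ω ^ 2)⁻¹) * ((t ^ p)⁻¹ * ((r ^ (2 * n))⁻¹ * r ^ p)) := by
          rw [mul_inv]; ring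
      _ = δ * (2 * 2 ^ p * (ω ^ 2)⁻¹) * ((t ^ p)⁻¹ * (r ^ ((n:ℝ) - 2 * α))⁻¹) := by rw [e2]
      _ ≤ δ * (2 * 2 ^ p * (ω ^ 2)⁻¹) *
          (c ^ 2 * (R ^ ((n:ℝ) - 2 * α))⁻¹ * (Jf b * Jf a) / τ ^ p) := by gcongr
      _ = _ := by rw [hC]; ring
  calc Psi α 2 (u ∘ f) x₀ r
      ≤ ∫⁻ a in D, ∫⁻ b in D,
        ENNReal.ofReal (|(u ∘ f) a - (u ∘ f) b| ^ 2) * scaleKernel α r a b :=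
        Psi_le_lintegral α x₀ r hr (u ∘ f) (aemeasurable_abs_comp hJfi hu.1)
    _ ≤ ∫⁻ a in D, ∫⁻ b in D, ENNReal.ofReal C * ENNReal.ofReal (R ^ (2 * α - (n:ℝ))) *
        (k (f a) (f b) * ENNReal.ofReal (Jf b) * ENNReal.ofReal (Jf a)) := by
        refine lintegral_mono_ae ((ae_restrict_iff' measurableSet_ball).2 ?_)
        filter_upwards [hpt] with a ha haD
        refine lintegral_mono_ae ((ae_restrict_iff' measurableSet_ball).2 ?_)
        filter_upwards [ha] with b hb hbD using hb haD hbD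
    _ = ENNReal.ofReal C * ENNReal.ofReal (R ^ (2 * α - (n:ℝ))) *
        ∫⁻ a in D, (∫⁻ b in D, k (f a) (f b) * ENNReal.ofReal (Jf b)) * ENNReal.ofReal (Jf a) := by
        rw [← lintegral_const_mul' _ _ (ENNReal.mul_ne_top ENNReal.ofReal_ne_top
          ENNReal.ofReal_ne_top)]
        refine lintegral_congr fun a => ?_
        rw [lintegral_const_mul' _ _ (ENNReal.mul_ne_top ENNReal.ofReal_ne_top
          ENNReal.ofReal_ne_top), lintegral_mul_const' _ _ ENNReal.ofReal_ne_top]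
    _ ≤ ENNReal.ofReal C * ENNReal.ofReal (R ^ (2 * α - (n:ℝ))) *
        ∫⁻ a in D, (∫⁻ y' in ball (f x₀) R, k (f a) y') * ENNReal.ofReal (Jf a) := by
        refine mul_le_mul_right (lintegral_mono fun a => ?_) _
        refine mul_le_mul_left ?_ _
        exact hJf.setLIntegral_comp_le D _ measurableSet_ball measurableSet_ball hfD (k (f a))
    _ ≤ ENNReal.ofReal C * ENNReal.ofReal (R ^ (2 * α - (n:ℝ))) *
        ∫⁻ y in ball (f x₀) R, ∫⁻ y' in ball (f x₀) R, k y y' := by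
        refine mul_le_mul_right ?_ _
        exact hJf.setLIntegral_comp_le D _ measurableSet_ball measurableSet_ball hfD
          (fun y => ∫⁻ y' in ball (f x₀) R, k y y')
    _ ≤ ENNReal.ofReal C * Qnorm α u ^ 2 := by
        rw [mul_assoc]
        exact mul_le_mul_right (energy_le_Qnorm_sq α u (f x₀) R hRpos) _

end
end
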